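/- arXiv:1907.00778 — 2 statements merged into one kernel-verified Lean document; each statement's English description precedes it below -/
import Mathlib

section
/- Assume condition (C3) holds and A ≠ 0. Then for all T, θ > 0 there is a constant c̃ > 0, depending only on d, A, ν, T and θ, such that for all 0 < t < T and all x ∈ ℝ^d with |x| ≤ θ√t: p(t, x + t·b_{√t}) ≥ c̃ · t^{-d/2}. If in addition ∫_{ℝ^d} |z|² ν(dz) < ∞, then the conclusion holds with T = ∞ and some c̃ > 0. -/
/-!
Condition (C3) together with `A ≠ 0` forces `⟪x, A x⟫ ≥ a ‖x‖²` for some `a > 0`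
(`posdef_of_C3`): along a direction where `A` does not vanish the radial majorant of `Re ψ` grows
quadratically, hence so does `Re ψ` in every direction, and jumps contribute only `o(r²)`.

The process at time `t`, centred at `t b_{√t}`, is therefore the independent sum of a Gaussian
vector of covariance `2 t a I` and of a remainder with characteristic function `φ`; centring at
`b_{√t}` means exactly that the jumps of the remainder are compensated at radius `√t` (`pdens_eq`).
The remainder lives on the scale `√t`: its exponent at frequency `z` is at most
`1 / 16 + C t ‖z‖²`, uniformly in `t` (`jump_estimate`). For bounded `t` this uses the
integrability of `min T ‖w‖²`, and for all `t` that of `‖w‖²`. So with fixed positive probability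
the remainder stays in a ball of radius of order `√t`, where the Gaussian density is of order
`t ^ (-d / 2)`.

The argument is carried out on the Fourier side, without constructing the law of the remainder.
The only property of `φ` needed is that multiplication by it preserves lower bounds of Fourier
transforms (`PosType`). This holds for characteristic functions of probability measures and is
stable under products and pointwise limits, hence holds for Gaussian and compound Poisson
exponentials, and for the Lévy–Khintchine exponential (`PosType.jump`). It is applied to an
elementary minorant of the Gaussian density in `PosType.gauss_lower`, and `main_bound` collects the
constants.
-/
open MeasureTheory Filter Set
open scoped RealInnerProductSpace ENNReal Topology

noncomputable section

abbrev Ed (d : ℕ) := EuclideanSpace ℝ (Fin d)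

/-- The concentration function `h`. -/
def concFn (d : ℕ) (A : Ed d →L[ℝ] Ed d) (ν : Measure (Ed d)) (r : ℝ) : ℝ :=
  ‖A‖ / r ^ 2 + ∫ z, min 1 (‖z‖ ^ 2 / r ^ 2) ∂ν

/-- The function `K`. -/
def KFn (d : ℕ) (A : Ed d →L[ℝ] Ed d) (ν : Measure (Ed d)) (r : ℝ) : ℝ :=
  ‖A‖ / r ^ 2 + (∫ z in {z : Ed d | ‖z‖ < r}, ‖z‖ ^ 2 ∂ν) / r ^ 2

/-- Context hypotheses on the pair `(A, ν)`. -/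
structure IsLevyPair (d : ℕ) (A : Ed d →L[ℝ] Ed d) (ν : Measure (Ed d)) : Prop where
  symm : ∀ x y : Ed d, ⟪A x, y⟫ = ⟪x, A y⟫
  nonneg : ∀ x : Ed d, 0 ≤ ⟪x, A x⟫
  nu_zero : ν ({0} : Set (Ed d)) = 0
  nu_int : Integrable (fun z : Ed d => min 1 (‖z‖ ^ 2)) ν
  h_lim : Tendsto (concFn d A ν) (𝓝[>] (0 : ℝ)) atTop

/-- `g` is the (two-sided) inverse of `f` on `(0,∞)`. -/
structure IsInvOn (f g : ℝ → ℝ) : Prop where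
  pos : ∀ u : ℝ, 0 < u → 0 < g u
  right_inv : ∀ u : ℝ, 0 < u → f (g u) = u
  left_inv : ∀ r : ℝ, 0 < r → g (f r) = r

/-- Real part of the characteristic exponent. -/
def rePsi (d : ℕ) (A : Ed d →L[ℝ] Ed d) (ν : Measure (Ed d)) (x : Ed d) : ℝ :=
  ⟪x, A x⟫ + ∫ z, (1 - Real.cos ⟪x, z⟫) ∂ν

/-- The radial non-decreasing majorant ψ*. -/
def psiStar (d : ℕ) (A : Ed d →L[ℝ] Ed d) (ν : Measure (Ed d)) (r : ℝ) : ℝ :=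
  sSup (rePsi d A ν '' Metric.closedBall 0 r)

/-- Condition (C3). -/
def CondC3 (d : ℕ) (A : Ed d →L[ℝ] Ed d) (ν : Measure (Ed d)) (T : ℝ≥0∞) (c α : ℝ) :
    Prop :=
  (∀ x : Ed d, 1 / T < ENNReal.ofReal ‖x‖ → c * psiStar d A ν ‖x‖ ≤ rePsi d A ν x) ∧
    ∀ lam r : ℝ, 1 ≤ lam → 0 < r → 1 / T < ENNReal.ofReal r →
      c * lam ^ α * psiStar d A ν r ≤ psiStar d A ν (lam * r)

/-- Condition (A1): weak lower scaling of `h` at zero. -/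
def ScalA1 (h : ℝ → ℝ) (α C : ℝ) (θ : ℝ≥0∞) : Prop :=
  ∀ lam r : ℝ, 0 < lam → lam ≤ 1 → 0 < r → ENNReal.ofReal r < θ →
    h r ≤ C * lam ^ α * h (lam * r)

/-- The shifted drift `b_r`. -/
def bshift (d : ℕ) (ν : Measure (Ed d)) (b : Ed d) (r : ℝ) : Ed d :=
  b + ∫ z, (Set.indicator {w : Ed d | ‖w‖ < r} (fun w => w) z
      - Set.indicator {w : Ed d | ‖w‖ < 1} (fun w => w) z) ∂ν

/-- The characteristic exponent of the triplet `(A, ν, b)`. -/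
def psiFn (d : ℕ) (A : Ed d →L[ℝ] Ed d) (ν : Measure (Ed d)) (b : Ed d) (x : Ed d) : ℂ :=
  ((⟪x, A x⟫ : ℝ) : ℂ) - Complex.I * ((⟪x, b⟫ : ℝ) : ℂ) -
    ∫ z, (Complex.exp (Complex.I * ((⟪x, z⟫ : ℝ) : ℂ)) - 1 -
      Complex.I * ((⟪x, z⟫ : ℝ) : ℂ)
        * Set.indicator {w : Ed d | ‖w‖ < 1} (fun _ => (1 : ℂ)) z) ∂ν

/-- The transition density, defined by Fourier inversion. -/
def pdens (d : ℕ) (A : Ed d →L[ℝ] Ed d) (ν : Measure (Ed d)) (b : Ed d)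
    (t : ℝ) (x : Ed d) : ℝ :=
  ((2 * Real.pi) ^ d)⁻¹ *
    (∫ z : Ed d, Complex.exp (-(Complex.I * ((⟪x, z⟫ : ℝ) : ℂ))
        - (t : ℂ) * psiFn d A ν b z)).re

/-! ### Functions of positive type -/

/-- Multiplying `f` by a characteristic function averages the Fourier transform of `f` over
translates. -/
theorem PosType.charFun_aux {d : ℕ} (μ : Measure (Ed d)) [IsProbabilityMeasure μ]
    (f : Ed d → ℂ) (hf : Integrable f) (y : Ed d) :
    Integrable (fun w => ∫ z, f z * Complex.exp (⟪y + w, z⟫ * Complex.I)) μ ∧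
    ∫ z, f z * charFun μ z * Complex.exp (⟪y, z⟫ * Complex.I) =
      ∫ w, (∫ z, f z * Complex.exp (⟪y + w, z⟫ * Complex.I)) ∂μ := by
  have hint : Integrable (fun p : Ed d × Ed d =>
      f p.1 * Complex.exp (⟪y + p.2, p.1⟫ * Complex.I)) ((volume : Measure (Ed d)).prod μ) := by
    refine (hf.comp_fst μ).mul_bdd (c := 1) ?_ ?_
    · exact (Continuous.aestronglyMeasurable (by fun_prop))
    · exact Eventually.of_forall fun p => (Complex.norm_exp_ofReal_mul_I _).le
  refine ⟨hint.integral_prod_right, ?_⟩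
  rw [← integral_integral_swap hint]
  refine integral_congr_ae (Eventually.of_forall fun z => ?_)
  simp only [charFun_apply]
  rw [mul_assoc, ← integral_mul_const, ← integral_const_mul]
  refine integral_congr_ae (Eventually.of_forall fun w => ?_)
  simp only
  rw [← Complex.exp_add, inner_add_left]
  push_cast
  ring_nf

/-- `φ` behaves like the characteristic function of a probability measure `μ`: replacing `f` by
`f * φ` averages the Fourier transform of `f` over `μ`-translates, so that a lower bound `-k` on
its real part is preserved. Encoding this property of `φ`, rather than the existence of `μ`, makes
stability under pointwise limits a matter of dominated convergence, with no compactness of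
measures. The transform is taken with kernel `exp (i⟪y, z⟫)`, without normalization. -/
structure PosType {d : ℕ} (φ : Ed d → ℂ) : Prop where
  meas : Measurable φ
  norm_le : ∀ z, ‖φ z‖ ≤ 1
  pos : ∀ f : Ed d → ℂ, Integrable f → ∀ k : ℝ,
    (∀ y : Ed d, 0 ≤ (∫ z, f z * Complex.exp (⟪y, z⟫ * Complex.I)).re + k) →
    ∀ y : Ed d, 0 ≤ (∫ z, f z * φ z * Complex.exp (⟪y, z⟫ * Complex.I)).re + k

theorem PosType.one {d : ℕ} : PosType (fun _ : Ed d => (1 : ℂ)) :=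
  ⟨measurable_const, by simp, fun f _ k h y => by simpa using h y⟩

theorem PosType.mul {d : ℕ} {φ ψ : Ed d → ℂ} (hφ : PosType φ) (hψ : PosType ψ) :
    PosType (fun z => φ z * ψ z) where
  meas := hφ.meas.mul hψ.meas
  norm_le z := by
    rw [norm_mul]
    exact mul_le_one₀ (hφ.norm_le z) (norm_nonneg _) (hψ.norm_le z)
  pos f hf k h y := by
    have h1 := hψ.pos (fun z => f z * φ z)
      (hf.mul_bdd hφ.meas.aestronglyMeasurable (Eventually.of_forall hφ.norm_le)) k
      (hφ.pos f hf k h) y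
    simpa only [mul_assoc] using h1

theorem PosType.pow {d : ℕ} {φ : Ed d → ℂ} (hφ : PosType φ) (n : ℕ) :
    PosType (fun z => φ z ^ n) := by
  induction n with
  | zero => simpa using PosType.one
  | succ n ih => simpa only [pow_succ] using ih.mul hφ

theorem PosType.charFun {d : ℕ} (μ : Measure (Ed d)) [IsProbabilityMeasure μ] :
    PosType (charFun μ) where
  meas := measurable_charFun
  norm_le z := norm_charFun_le_one z
  pos f hf k h y := by
    obtain ⟨h1, h2⟩ := PosType.charFun_aux μ f hf y
    rw [h2]
    have h3 := integral_re h1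
    simp only [RCLike.re_to_complex] at h3
    rw [← h3]
    have h4 : ∫ w, (∫ z, f z * Complex.exp (⟪y + w, z⟫ * Complex.I)).re + k ∂μ =
        ∫ w, (∫ z, f z * Complex.exp (⟪y + w, z⟫ * Complex.I)).re ∂μ + k := by
      refine (integral_add h1.re (integrable_const k)).trans ?_
      simp
    rw [← h4]
    exact integral_nonneg fun w => h _

theorem PosType.lim {d : ℕ} {φ : ℕ → Ed d → ℂ} {ψ : Ed d → ℂ} (hφ : ∀ n, PosType (φ n))
    (hlim : ∀ z, Tendsto (fun n => φ n z) atTop (𝓝 (ψ z))) : PosType ψ where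
  meas := measurable_of_tendsto_metrizable (fun n => (hφ n).meas) (tendsto_pi_nhds.2 hlim)
  norm_le z := le_of_tendsto (hlim z).norm (Eventually.of_forall fun n => (hφ n).norm_le z)
  pos f hf k h y := by
    have h1 : Tendsto (fun n => ∫ z, f z * φ n z * Complex.exp (⟪y, z⟫ * Complex.I)) atTop
        (𝓝 (∫ z, f z * ψ z * Complex.exp (⟪y, z⟫ * Complex.I))) := by
      refine tendsto_integral_of_dominated_convergence (fun z => ‖f z‖) ?_ hf.norm ?_ ?_
      · intro n
        refine (hf.1.mul (hφ n).meas.aestronglyMeasurable).mul ?_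
        exact Continuous.aestronglyMeasurable (by fun_prop)
      · intro n
        refine Eventually.of_forall fun z => ?_
        rw [norm_mul, norm_mul, Complex.norm_exp_ofReal_mul_I, mul_one]
        exact mul_le_of_le_one_right (norm_nonneg _) ((hφ n).norm_le z)
      · exact Eventually.of_forall fun z => ((hlim z).const_mul _).mul_const _
    have h2 := ((Complex.continuous_re.tendsto _).comp h1).add_const k
    exact ge_of_tendsto h2 (Eventually.of_forall fun n => (hφ n).pos f hf k h y)

/-- The compound Poisson case, as the limit of `(1 + s / n) ^ n` with
`s = t * (charFun μ - μ univ)`: for large `n` the function `1 + s / n` is the characteristic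
function of the probability measure `(1 - t * μ univ / n) δ₀ + (t / n) μ`. -/
theorem PosType.compoundPoisson {d : ℕ} (μ : Measure (Ed d)) [IsFiniteMeasure μ] {t : ℝ}
    (ht : 0 ≤ t) :
    PosType (fun z => Complex.exp (t * (MeasureTheory.charFun μ z - μ.real univ))) := by
  set m := μ.real univ with hm
  have hm0 : 0 ≤ m := measureReal_nonneg
  -- from `N` on, the weight `1 - t * m / k` below is nonnegative
  obtain ⟨N, hN⟩ := exists_nat_ge (t * m)
  refine PosType.lim (φ := fun n z =>
    (1 + (t * (MeasureTheory.charFun μ z - m)) / ((n + (N + 1) : ℕ) : ℂ)) ^ (n + (N + 1)))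
    (fun n => ?_) (fun z => ?_)
  · refine PosType.pow ?_ _
    set k : ℕ := n + (N + 1) with hk
    have hk0 : (0 : ℝ) < k := by rw [hk]; positivity
    have hkm : t * m / k ≤ 1 := by
      rw [div_le_one hk0]
      refine hN.trans ?_
      rw [hk]; push_cast; linarith [(Nat.cast_nonneg n : (0 : ℝ) ≤ n)]
    let Q : Measure (Ed d) := ENNReal.ofReal (1 - t * m / k) • Measure.dirac 0 +
      ENNReal.ofReal (t / k) • μ
    have hQ : IsProbabilityMeasure Q := by
      refine ⟨?_⟩
      have : μ univ = ENNReal.ofReal m := by simp [hm]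
      simp only [Q, Measure.add_apply, Measure.smul_apply, measure_univ, smul_eq_mul, mul_one, this]
      rw [← ENNReal.ofReal_mul (by positivity), ← ENNReal.ofReal_add (by linarith) (by positivity)]
      rw [← ENNReal.ofReal_one]
      congr 1
      ring
    have := PosType.charFun Q
    convert! this using 1
    ext z
    have hb : ∀ (P : Measure (Ed d)) [IsFiniteMeasure P],
        Integrable (fun w => Complex.exp (⟪w, z⟫ * Complex.I)) P := by
      intro P _
      refine Integrable.of_bound (C := 1) (Continuous.aestronglyMeasurable (by fun_prop)) ?_
      exact Eventually.of_forall fun p => (Complex.norm_exp_ofReal_mul_I _).le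
    have e : MeasureTheory.charFun Q z = ((1 - t * m / k : ℝ) : ℂ) +
        ((t / k : ℝ) : ℂ) * MeasureTheory.charFun μ z := by
      simp only [charFun_apply, Q]
      rw [integral_add_measure ((hb _).smul_measure (by simp)) ((hb _).smul_measure (by simp)),
        integral_smul_measure, integral_smul_measure, integral_dirac,
        ENNReal.toReal_ofReal (by linarith), ENNReal.toReal_ofReal (by positivity)]
      simp
    rw [e]
    push_cast
    ring
  · exact (Complex.tendsto_one_add_div_pow_exp (t * (MeasureTheory.charFun μ z - m))).comp
      (tendsto_add_atTop_nat (N + 1))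

/-! ### Infinitely divisible functions are of positive type -/

/-- The Lévy–Khintchine integrand `exp (i⟪w, z⟫) - 1 - i⟪w, z⟫ 1_{‖w‖ < r}`, with the jumps smaller
than `r` compensated; `z` is the frequency and `w` the jump. -/
def jumpFn {d : ℕ} (r : ℝ) (z w : Ed d) : ℂ :=
  Complex.exp (⟪w, z⟫ * Complex.I) - 1 -
    ⟪w, z⟫ * Complex.I * Set.indicator {w : Ed d | ‖w‖ < r} (fun _ => (1 : ℂ)) w

theorem norm_exp_sub_one_sub_le (s : ℝ) :
    ‖Complex.exp (s * Complex.I) - 1 - s * Complex.I‖ ≤ 2 * s ^ 2 := by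
  have hs : ‖(s * Complex.I : ℂ)‖ = |s| := by simp
  rcases le_or_gt |s| 1 with h | h
  · have := Complex.norm_exp_sub_one_sub_id_le (x := s * Complex.I) (by rwa [hs])
    rw [hs, sq_abs] at this
    nlinarith [sq_nonneg s]
  · have h1 : ‖Complex.exp (s * Complex.I) - 1‖ ≤ |s| := by
      have := Real.norm_exp_I_mul_ofReal_sub_one_le (x := s)
      rwa [mul_comm] at this
    calc _ ≤ ‖Complex.exp (s * Complex.I) - 1‖ + ‖(s * Complex.I : ℂ)‖ := norm_sub_le _ _
      _ ≤ |s| + |s| := by rw [hs]; gcongr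
      _ ≤ 2 * s ^ 2 := by rw [← sq_abs]; nlinarith

theorem jumpFn_measurable {d : ℕ} (r : ℝ) (z : Ed d) : Measurable (jumpFn r z) := by
  unfold jumpFn
  refine Measurable.sub (by fun_prop) (Measurable.mul (by fun_prop) ?_)
  exact measurable_const.indicator (measurableSet_lt measurable_norm measurable_const)

theorem jumpFn_small {d : ℕ} {r : ℝ} (z : Ed d) {w : Ed d} (h : ‖w‖ < r) :
    ‖jumpFn r z w‖ ≤ 2 * (‖z‖ ^ 2 * ‖w‖ ^ 2) := by
  unfold jumpFn
  rw [indicator_of_mem (by exact h), mul_one]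
  refine (norm_exp_sub_one_sub_le _).trans ?_
  have : ⟪w, z⟫ ^ 2 ≤ ‖z‖ ^ 2 * ‖w‖ ^ 2 := by
    rw [← sq_abs, mul_comm, ← mul_pow]
    gcongr
    exact abs_real_inner_le_norm w z
  linarith

theorem jumpFn_large {d : ℕ} {r : ℝ} (z : Ed d) {w : Ed d} (h : r ≤ ‖w‖) :
    ‖jumpFn r z w‖ ≤ 2 ∧ ‖jumpFn r z w‖ ≤ ‖z‖ * ‖w‖ := by
  unfold jumpFn
  rw [indicator_of_notMem (by simpa using h), mul_zero, sub_zero]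
  constructor
  · refine (norm_sub_le _ _).trans ?_
    rw [Complex.norm_exp_ofReal_mul_I, norm_one]
    norm_num
  · have := Real.norm_exp_I_mul_ofReal_sub_one_le (x := ⟪w, z⟫)
    rw [mul_comm Complex.I] at this
    refine this.trans ?_
    rw [mul_comm]
    exact norm_inner_le_norm w z

theorem jumpFn_bound {d : ℕ} {r : ℝ} (hr : 0 < r) (z w : Ed d) :
    ‖jumpFn r z w‖ ≤ (2 * ‖z‖ ^ 2 + 2 / r ^ 2) * min (r ^ 2) (‖w‖ ^ 2) := by
  rcases lt_or_ge ‖w‖ r with h | h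
  · rw [min_eq_right (by gcongr)]
    have := jumpFn_small z h
    have : 0 ≤ 2 / r ^ 2 * ‖w‖ ^ 2 := by positivity
    linarith
  · rw [min_eq_left (by gcongr)]
    have := (jumpFn_large z h).1
    have h2 : 2 / r ^ 2 * r ^ 2 = 2 := by field_simp
    have : 0 ≤ 2 * ‖z‖ ^ 2 * r ^ 2 := by positivity
    linarith

theorem integrable_min_sq {d : ℕ} {ν : Measure (Ed d)}
    (hν : Integrable (fun z : Ed d => min 1 (‖z‖ ^ 2)) ν) {s : ℝ} (hs : 0 ≤ s) :
    Integrable (fun z : Ed d => min s (‖z‖ ^ 2)) ν := by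
  refine (hν.const_mul (max 1 s)).mono' (Continuous.aestronglyMeasurable (by fun_prop)) ?_
  refine Eventually.of_forall fun w => ?_
  have h0 : 0 ≤ ‖w‖ ^ 2 := by positivity
  rw [Real.norm_of_nonneg (le_min hs h0)]
  rcases le_total 1 (‖w‖ ^ 2) with h | h
  · rw [min_eq_left h, mul_one]
    exact (min_le_left _ _).trans (le_max_right _ _)
  · rw [min_eq_right h]
    exact (min_le_right _ _).trans (le_mul_of_one_le_left h0 (le_max_left _ _))

theorem jumpFn_integrable {d : ℕ} {ν : Measure (Ed d)}
    (hν : Integrable (fun z : Ed d => min 1 (‖z‖ ^ 2)) ν) {r : ℝ} (hr : 0 < r) (z : Ed d) :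
    Integrable (jumpFn r z) ν :=
  ((integrable_min_sq hν (sq_nonneg r)).const_mul _).mono'
    (jumpFn_measurable r z).aestronglyMeasurable
    (Eventually.of_forall fun w => jumpFn_bound hr z w)

/-- The pure jump case. Restricting the Lévy measure to `‖w‖ > 1 / (n + 1)` gives a compound Poisson
exponential times the character of a translation, and `n → ∞` recovers the whole measure. -/
theorem PosType.jump {d : ℕ} {ν : Measure (Ed d)}
    (hν : Integrable (fun z : Ed d => min 1 (‖z‖ ^ 2)) ν) {r t : ℝ} (hr : 0 < r) (ht : 0 ≤ t) :
    PosType (fun z : Ed d => Complex.exp (t * ∫ w, jumpFn r z w ∂ν)) := by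
  let B : ℕ → Set (Ed d) := fun n => {w | 1 / ((n : ℝ) + 1) < ‖w‖}
  have hB : ∀ n, MeasurableSet (B n) := fun n => measurableSet_lt measurable_const measurable_norm
  have hfin : ∀ n, IsFiniteMeasure (ν.restrict (B n)) := by
    intro n
    refine ⟨?_⟩
    rw [Measure.restrict_apply_univ]
    have hp : (0 : ℝ) < 1 / ((n : ℝ) + 1) := by positivity
    have hle : 1 / ((n : ℝ) + 1) ≤ 1 := by
      rw [div_le_one (by positivity)]; linarith [(Nat.cast_nonneg n : (0 : ℝ) ≤ n)]
    refine (measure_mono ?_).trans_lt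
      (hν.measure_ge_lt_top (ε := (1 / ((n : ℝ) + 1)) ^ 2) (by positivity))
    intro w hw
    have hw' : 1 / ((n : ℝ) + 1) < ‖w‖ := hw
    exact le_min (pow_le_one₀ hp.le hle) (by gcongr)
  refine PosType.lim (φ := fun n z =>
    Complex.exp (t * ∫ w in B n, jumpFn r z w ∂ν)) (fun n => ?_) (fun z => ?_)
  · have := hfin n
    set μ := ν.restrict (B n) with hμ
    -- the drift produced by compensating the finitely many jumps per unit time smaller than `r`
    let v : Ed d := ∫ w, Set.indicator {w : Ed d | ‖w‖ < r} (fun w => w) w ∂μ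
    have hv : Integrable (fun w => Set.indicator {w : Ed d | ‖w‖ < r} (fun w => w) w) μ := by
      refine Integrable.of_bound (C := r) (measurable_id.indicator
        (measurableSet_lt measurable_norm measurable_const)).aestronglyMeasurable ?_
      refine Eventually.of_forall fun w => ?_
      by_cases h : ‖w‖ < r
      · rw [indicator_of_mem (by exact h)]; exact h.le
      · rw [indicator_of_notMem (by exact h)]; simpa using hr.le
    have := (PosType.compoundPoisson μ ht).mul (PosType.charFun (Measure.dirac (-(t • v))))
    convert! this using 1
    ext z
    rw [charFun_dirac, ← Complex.exp_add]
    congr 1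
    have hb : Integrable (fun w => Complex.exp (⟪w, z⟫ * Complex.I)) μ := by
      refine Integrable.of_bound (C := 1) (Continuous.aestronglyMeasurable (by fun_prop)) ?_
      exact Eventually.of_forall fun p => (Complex.norm_exp_ofReal_mul_I _).le
    have e2 : (fun w => (⟪w, z⟫ : ℂ) * Complex.I *
        Set.indicator {w : Ed d | ‖w‖ < r} (fun _ => (1 : ℂ)) w) = fun w =>
        ((⟪z, Set.indicator {w : Ed d | ‖w‖ < r} (fun w => w) w⟫ : ℝ) : ℂ) * Complex.I := by
      ext w
      by_cases h : ‖w‖ < r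
      · rw [indicator_of_mem (by exact h), indicator_of_mem (by exact h), real_inner_comm]; simp
      · rw [indicator_of_notMem (by exact h), indicator_of_notMem (by exact h)]; simp
    have hi : Integrable (fun w =>
        ((⟪z, Set.indicator {w : Ed d | ‖w‖ < r} (fun w => w) w⟫ : ℝ) : ℂ) * Complex.I) μ :=
      (hv.const_inner z).ofReal.mul_const _
    have e3 : ∫ w, jumpFn r z w ∂μ =
        MeasureTheory.charFun μ z - μ.real univ - (⟪z, v⟫ : ℝ) * Complex.I := by
      have e4 : ∫ w, jumpFn r z w ∂μ = ∫ w, ((Complex.exp (⟪w, z⟫ * Complex.I) - 1) -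
          ((⟪z, Set.indicator {w : Ed d | ‖w‖ < r} (fun w => w) w⟫ : ℝ) : ℂ) * Complex.I) ∂μ :=
        integral_congr_ae (Eventually.of_forall fun w => by
          have := congrFun e2 w
          simp only [jumpFn, this])
      rw [e4]
      refine (integral_sub (hb.sub (integrable_const 1)) hi).trans ?_
      simp only [Pi.sub_apply]
      rw [integral_sub hb (integrable_const _), integral_mul_const, integral_complex_ofReal,
        integral_inner hv, charFun_apply]
      simp
      rfl
    rw [e3, inner_neg_left, inner_smul_left, real_inner_comm]
    push_cast
    simp
    ring
  · refine (Complex.continuous_exp.tendsto _).comp (Tendsto.const_mul _ ?_)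
    have : (fun n => ∫ w in B n, jumpFn r z w ∂ν) =
        fun n => ∫ w, (B n).indicator (jumpFn r z) w ∂ν := by
      ext n
      rw [integral_indicator (hB n)]
    rw [this]
    refine tendsto_integral_of_dominated_convergence (fun w => ‖jumpFn r z w‖) ?_
      (jumpFn_integrable hν hr z).norm ?_ ?_
    · exact fun n => ((jumpFn_measurable r z).indicator (hB n)).aestronglyMeasurable
    · exact fun n => Eventually.of_forall fun w => norm_indicator_le_norm_self _ _
    · refine Eventually.of_forall fun w => ?_
      rcases eq_or_ne w 0 with rfl | hw
      · have h0 : jumpFn r z 0 = 0 := by simp [jumpFn]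
        refine tendsto_const_nhds.congr fun n => ?_
        simp [indicator, h0]
      · refine tendsto_const_nhds.congr' ?_
        have hw' : 0 < ‖w‖ := norm_pos_iff.2 hw
        filter_upwards [tendsto_one_div_add_atTop_nhds_zero_nat.eventually_lt_const hw'] with n hn
        rw [indicator_of_mem]
        exact hn

/-- The Gaussian case: `exp (-t⟪z, A z⟫)` is the characteristic function of the centred normal law
with covariance `2tA`. -/
theorem PosType.gauss {d : ℕ} (A : Ed d →L[ℝ] Ed d) (hsymm : ∀ x y : Ed d, ⟪A x, y⟫ = ⟪x, A y⟫)
    (hnn : ∀ x : Ed d, 0 ≤ ⟪x, A x⟫) {t : ℝ} (ht : 0 ≤ t) :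
    PosType (fun z : Ed d => Complex.exp (-(t * ⟪z, A z⟫ : ℝ))) := by
  let b := EuclideanSpace.basisFun (Fin d) ℝ
  let S : Matrix (Fin d) (Fin d) ℝ :=
    (((2 * t) • (A : Ed d →ₗ[ℝ] Ed d)).toMatrix b.toBasis b.toBasis)
  have hS : S.PosSemidef := by
    refine (LinearMap.posSemidef_toMatrix_iff b).2 ⟨?_, ?_⟩
    · intro x y
      simp [inner_smul_left, inner_smul_right, hsymm]
    · intro x
      have := hnn x
      simp [inner_smul_left, hsymm]
      positivity
  have := PosType.charFun (ProbabilityTheory.multivariateGaussian 0 S)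
  convert! this using 1
  ext z
  rw [ProbabilityTheory.charFun_multivariateGaussian hS]
  have h1 : S.mulVec z = ((2 * t) • A z : Ed d).ofLp := by
    have := LinearMap.toMatrix_mulVec_repr b.toBasis b.toBasis ((2 * t) • (A : Ed d →ₗ[ℝ] Ed d)) z
    have hz : ∀ x : Ed d, ⇑(b.toBasis.repr x) = x.ofLp := fun x => by ext i; simp [b]
    rw [hz, hz] at this
    exact this
  have h3 : dotProduct z.ofLp (S.mulVec z) = 2 * t * ⟪z, A z⟫ := by
    rw [h1, EuclideanSpace.inner_eq_star_dotProduct]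
    simp [dotProduct_comm, mul_assoc]
  rw [h3]
  simp
  ring_nf

/-! ### Lower bound for a Gaussian perturbed by a function of positive type -/

theorem integral_gauss {d : ℕ} {s : ℝ} (hs : 0 < s) (y : Ed d) :
    Integrable (fun z : Ed d => ((Real.exp (-s * ‖z‖ ^ 2) : ℝ) : ℂ) *
      Complex.exp (⟪y, z⟫ * Complex.I)) ∧
    ∫ z : Ed d, ((Real.exp (-s * ‖z‖ ^ 2) : ℝ) : ℂ) * Complex.exp (⟪y, z⟫ * Complex.I) =
      (((Real.pi / s) ^ ((d : ℝ) / 2) * Real.exp (-‖y‖ ^ 2 / (4 * s)) : ℝ) : ℂ) := by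
  have e : (fun z : Ed d => ((Real.exp (-s * ‖z‖ ^ 2) : ℝ) : ℂ) *
      Complex.exp (⟪y, z⟫ * Complex.I)) =
      fun z => Complex.exp (-(s : ℂ) * ‖z‖ ^ 2 + Complex.I * ⟪y, z⟫) := by
    ext z
    push_cast
    rw [← Complex.exp_add, mul_comm Complex.I]
  have hs' : 0 < (s : ℂ).re := by simpa using hs
  rw [e]
  refine ⟨GaussianFourier.integrable_cexp_neg_mul_sq_norm_add hs' _ _, ?_⟩
  rw [GaussianFourier.integral_cexp_neg_mul_sq_norm_add hs']
  simp only [finrank_euclideanSpace, Fintype.card_fin, Complex.I_sq]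
  rw [Complex.ofReal_mul, Complex.ofReal_cpow (by positivity)]
  push_cast
  ring_nf

theorem integral_gauss_real {d : ℕ} {s : ℝ} (hs : 0 < s) :
    Integrable (fun z : Ed d => Real.exp (-s * ‖z‖ ^ 2)) ∧
    ∫ z : Ed d, Real.exp (-s * ‖z‖ ^ 2) = (Real.pi / s) ^ ((d : ℝ) / 2) := by
  have h := integral_gauss hs (0 : Ed d)
  simp only [inner_zero_left, Complex.ofReal_zero, zero_mul, Complex.exp_zero, mul_one,
    norm_zero] at h
  refine ⟨by
    have h1 := h.1.re
    simpa only [RCLike.re_to_complex, Complex.ofReal_re] using h1, ?_⟩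
  have h2 := h.2
  rw [integral_complex_ofReal] at h2
  have h3 := Complex.ofReal_injective h2
  simpa using h3

/-- If `φ` is close to `1` at frequencies up to `1 / (R √t)`, in the averaged sense `hsmall`, then
the inverse Fourier integral of `exp (-t a ‖z‖²) φ z` at `x` is bounded below on the scale `√t`.
In terms of a measure `μ` with characteristic function `φ`, most of the mass of `μ` lies in
`‖y‖ ≤ 2 R √t`, where a Gaussian density of variance of order `t` is of order `t ^ (-d / 2)`. The
minorant `c (exp (-‖y‖² / (4 R² t)) - 1 / 2)` of that density expresses this on the Fourier
side. -/
theorem PosType.gauss_lower {d : ℕ} {φ : Ed d → ℂ} (hφ : PosType φ) {t a θ R : ℝ} (ht : 0 < t)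
    (ha : 0 < a) (hR : 0 < R) {x : Ed d} (hx : ‖x‖ ≤ θ * Real.sqrt t)
    (hsmall : ∫ z, Real.exp (-(R ^ 2 * t) * ‖z‖ ^ 2) * ‖φ z - 1‖ ≤
      (Real.pi / (R ^ 2 * t)) ^ ((d : ℝ) / 2) / 4) :
    (Real.pi / (t * a)) ^ ((d : ℝ) / 2) * Real.exp (-(2 * R + θ) ^ 2 / (4 * a)) / 4 ≤
      (∫ z, ((Real.exp (-(t * a) * ‖z‖ ^ 2) : ℝ) : ℂ) * Complex.exp (⟪-x, z⟫ * Complex.I)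
        * φ z).re := by
  set s := R ^ 2 * t with hs
  have hs0 : 0 < s := by positivity
  set K1 := (Real.pi / (t * a)) ^ ((d : ℝ) / 2) with hK1
  set K2 := (Real.pi / s) ^ ((d : ℝ) / 2) with hK2
  have hK1p : 0 < K1 := Real.rpow_pos_of_pos (by positivity) _
  have hK2p : 0 < K2 := Real.rpow_pos_of_pos (by positivity) _
  set c := Real.exp (-(2 * R + θ) ^ 2 / (4 * a)) with hc
  have hcp : 0 < c := Real.exp_pos _
  -- `β` makes the transform of `β * g` equal to `K1 * c * exp (-‖y‖² / (4 s))`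
  set β := K1 * c / K2 with hβ
  have hβp : 0 < β := by positivity
  have hta : 0 < t * a := by positivity
  let f1 : Ed d → ℂ := fun z => ((Real.exp (-(t * a) * ‖z‖ ^ 2) : ℝ) : ℂ) *
    Complex.exp (⟪-x, z⟫ * Complex.I)
  let g : Ed d → ℂ := fun z => ((Real.exp (-s * ‖z‖ ^ 2) : ℝ) : ℂ)
  have hf1 : Integrable f1 := (integral_gauss hta (-x)).1
  obtain ⟨hgr, hgi⟩ := integral_gauss_real (d := d) hs0
  have hg : Integrable g := hgr.ofReal
  have hφm := hφ.meas.aestronglyMeasurable (μ := (volume : Measure (Ed d)))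
  have hφb : ∀ᵐ z ∂(volume : Measure (Ed d)), ‖φ z‖ ≤ 1 := Eventually.of_forall hφ.norm_le
  have hf1φ : Integrable (fun z => f1 z * φ z) := hf1.mul_bdd hφm hφb
  have hgφ : Integrable (fun z => g z * φ z) := hg.mul_bdd hφm hφb
  -- the transform of `f1 - β * g` is at least `-K1 * c / 2`, and `φ` preserves this bound
  have key := hφ.pos (fun z => f1 z - β * g z) (hf1.sub (hg.const_mul _)) (K1 * c / 2) ?_ 0
  · simp only [inner_zero_left, Complex.ofReal_zero, zero_mul, Complex.exp_zero, mul_one] at key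
    have e1 : ∫ z, (f1 z - β * g z) * φ z = (∫ z, f1 z * φ z) - β * ∫ z, g z * φ z := by
      rw [← integral_const_mul, ← integral_sub hf1φ (hgφ.const_mul _)]
      refine integral_congr_ae (Eventually.of_forall fun z => ?_)
      simp only
      ring
    rw [e1, Complex.sub_re, Complex.re_ofReal_mul] at key
    have e2 : ∫ z, g z * φ z = (K2 : ℂ) + ∫ z, g z * (φ z - 1) := by
      have : (K2 : ℂ) = ∫ z, g z := by rw [integral_complex_ofReal, hgi]
      rw [this]
      simp only [mul_sub, mul_one]
      rw [integral_sub hgφ hg]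
      ring
    have e3 : -(K2 / 4) ≤ (∫ z, g z * (φ z - 1)).re := by
      refine (abs_le.1 ?_).1
      refine (Complex.abs_re_le_norm _).trans ((norm_integral_le_integral_norm _).trans ?_)
      refine le_trans (le_of_eq ?_) hsmall
      refine integral_congr_ae (Eventually.of_forall fun z => ?_)
      simp only [g]
      rw [norm_mul, Complex.norm_real, Real.norm_of_nonneg (Real.exp_pos _).le]
    have e4 : (∫ z, g z * φ z).re = K2 + (∫ z, g z * (φ z - 1)).re := by
      rw [e2, Complex.add_re, Complex.ofReal_re]
    have e5 : β * (3 / 4 * K2) ≤ β * (∫ z, g z * φ z).re := by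
      gcongr
      linarith
    have e6 : β * K2 = K1 * c := by rw [hβ]; field_simp
    change K1 * c / 4 ≤ (∫ z, f1 z * φ z).re
    nlinarith
  · intro y
    have e1 : ∫ z, (f1 z - β * g z) * Complex.exp (⟪y, z⟫ * Complex.I) =
        ((K1 * Real.exp (-‖y - x‖ ^ 2 / (4 * (t * a))) -
          β * (K2 * Real.exp (-‖y‖ ^ 2 / (4 * s))) : ℝ) : ℂ) := by
      have h1 := integral_gauss hta (y - x)
      have h2 := integral_gauss hs0 y
      rw [Complex.ofReal_sub, Complex.ofReal_mul β, ← h1.2, ← h2.2, ← integral_const_mul,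
        ← integral_sub h1.1 (h2.1.const_mul _)]
      refine integral_congr_ae (Eventually.of_forall fun z => ?_)
      simp only [f1, g]
      rw [sub_mul, mul_assoc, ← Complex.exp_add, inner_sub_left, inner_neg_left]
      push_cast
      ring_nf
    rw [e1, Complex.ofReal_re]
    have e6 : β * (K2 * Real.exp (-‖y‖ ^ 2 / (4 * s))) =
        K1 * (c * Real.exp (-‖y‖ ^ 2 / (4 * s))) := by rw [hβ]; field_simp
    rw [e6]
    suffices h : c * Real.exp (-‖y‖ ^ 2 / (4 * s)) - c / 2 ≤
        Real.exp (-‖y - x‖ ^ 2 / (4 * (t * a))) by nlinarith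
    have hst : 0 < Real.sqrt t := Real.sqrt_pos.2 ht
    have hst2 : Real.sqrt t ^ 2 = t := Real.sq_sqrt ht.le
    -- for `‖y‖ ≤ 2 R √t` the right side is at least `c`; beyond, the left side is nonpositive since
    -- `exp (-1) ≤ 1 / 2`
    rcases le_or_gt ‖y‖ (2 * R * Real.sqrt t) with h | h
    · have h1 : ‖y - x‖ ≤ (2 * R + θ) * Real.sqrt t := by
        refine (norm_sub_le _ _).trans ?_
        linarith
      have h2 : ‖y - x‖ ^ 2 ≤ (2 * R + θ) ^ 2 * t := by
        rw [← hst2, ← mul_pow]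
        gcongr
      have h3 : c ≤ Real.exp (-‖y - x‖ ^ 2 / (4 * (t * a))) := by
        rw [hc, Real.exp_le_exp, neg_div, neg_div, neg_le_neg_iff,
          div_le_div_iff₀ (by positivity) (by positivity)]
        nlinarith
      have h4 : Real.exp (-‖y‖ ^ 2 / (4 * s)) ≤ 1 := by
        rw [Real.exp_le_one_iff]
        exact div_nonpos_of_nonpos_of_nonneg (by simp) (by positivity)
      nlinarith
    · have h1 : 4 * s ≤ ‖y‖ ^ 2 := by
        have : (2 * R * Real.sqrt t) ^ 2 ≤ ‖y‖ ^ 2 := by gcongr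
        rw [mul_pow, hst2] at this
        linarith
      have h2 : Real.exp (-‖y‖ ^ 2 / (4 * s)) ≤ 1 / 2 := by
        have h3 : -‖y‖ ^ 2 / (4 * s) ≤ -1 := by
          rw [div_le_iff₀ (by positivity)]
          linarith
        refine (Real.exp_le_exp.2 h3).trans ?_
        have := Real.exp_one_gt_d9
        rw [Real.exp_neg, one_div]
        exact inv_anti₀ (by norm_num) (by linarith)
      have := Real.exp_pos (-‖y - x‖ ^ 2 / (4 * (t * a)))
      nlinarith

/-- A function within `1 / 8 + C t ‖z‖²` of `1` satisfies the closeness hypothesis of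
`PosType.gauss_lower` once `R` is large, because the Gaussian weight concentrates on
`t ‖z‖² ≲ 1 / R²`. -/
theorem gauss_small {d : ℕ} {φ : Ed d → ℂ} {t C R : ℝ} (ht : 0 < t)
    (hC : 0 ≤ C) (hR : 0 < R) (hCR : 16 * C * 2 ^ ((d : ℝ) / 2) ≤ R ^ 2)
    (hφ : ∀ z, ‖φ z - 1‖ ≤ 1 / 8 + C * (t * ‖z‖ ^ 2)) :
    ∫ z, Real.exp (-(R ^ 2 * t) * ‖z‖ ^ 2) * ‖φ z - 1‖ ≤
      (Real.pi / (R ^ 2 * t)) ^ ((d : ℝ) / 2) / 4 := by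
  have hs : 0 < R ^ 2 * t := by positivity
  have hs2 : 0 < R ^ 2 * t / 2 := by positivity
  obtain ⟨i1, v1⟩ := integral_gauss_real (d := d) hs
  obtain ⟨i2, v2⟩ := integral_gauss_real (d := d) hs2
  have hle : ∫ z, Real.exp (-(R ^ 2 * t) * ‖z‖ ^ 2) * ‖φ z - 1‖ ≤
      ∫ z : Ed d, (1 / 8 * Real.exp (-(R ^ 2 * t) * ‖z‖ ^ 2) +
        2 * C / R ^ 2 * Real.exp (-(R ^ 2 * t / 2) * ‖z‖ ^ 2)) := by
    refine integral_mono_of_nonneg (Eventually.of_forall fun z => by positivity)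
      ((i1.const_mul _).add (i2.const_mul _)) (Eventually.of_forall fun z => ?_)
    simp only
    -- half of the Gaussian weight absorbs the factor `‖z‖²`, through `u * exp (-u) ≤ 1`
    set u := R ^ 2 * t / 2 * ‖z‖ ^ 2 with hu
    have hu0 : 0 ≤ u := by positivity
    have e1 : -(R ^ 2 * t) * ‖z‖ ^ 2 = -u + -u := by rw [hu]; ring
    have e2 : -(R ^ 2 * t / 2) * ‖z‖ ^ 2 = -u := by rw [hu]; ring
    have e3 : t * ‖z‖ ^ 2 = 2 * u / R ^ 2 := by rw [hu]; field_simp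
    have h1 := hφ z
    rw [e3] at h1
    rw [e1, e2]
    have h2 : u * Real.exp (-u) ≤ 1 := by
      have := Real.add_one_le_exp u
      rw [Real.exp_neg, ← div_eq_mul_inv, div_le_one (Real.exp_pos _)]
      linarith
    have h3 : u * Real.exp (-u + -u) ≤ Real.exp (-u) := by
      rw [Real.exp_add, ← mul_assoc]
      exact mul_le_of_le_one_left (Real.exp_pos _).le h2
    calc Real.exp (-u + -u) * ‖φ z - 1‖
        ≤ Real.exp (-u + -u) * (1 / 8 + C * (2 * u / R ^ 2)) := by gcongr
      _ = 1 / 8 * Real.exp (-u + -u) + 2 * C / R ^ 2 * (u * Real.exp (-u + -u)) := by ring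
      _ ≤ _ := by gcongr
  refine hle.trans ?_
  rw [integral_add (i1.const_mul _) (i2.const_mul _), integral_const_mul, integral_const_mul,
    v1, v2]
  have e : Real.pi / (R ^ 2 * t / 2) = 2 * (Real.pi / (R ^ 2 * t)) := by field_simp
  rw [e, Real.mul_rpow (by norm_num) (by positivity)]
  set K := (Real.pi / (R ^ 2 * t)) ^ ((d : ℝ) / 2)
  have hK : 0 < K := Real.rpow_pos_of_pos (by positivity) _
  have h1 : 2 * C / R ^ 2 * 2 ^ ((d : ℝ) / 2) ≤ 1 / 8 := by
    rw [div_mul_eq_mul_div, div_le_iff₀ (by positivity)]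
    linarith
  nlinarith

/-! ### The jump part at frequencies of order `1 / √t` -/

/-- With compensation at radius `√t`, the jump exponent at time `t` is small at frequencies
`‖z‖ ≪ 1 / √t`, uniformly in `t ∈ S`. Besides a quadratic term it carries an arbitrarily small
constant (here `1 / 16`), due to jumps much larger than `√t`, which are only controlled through
`t ν(‖w‖ > M √t)`. The function `G` dominates `min t ‖w‖²` for all `t ∈ S`, and its integrability
makes this tail small uniformly in `t`. -/
theorem jump_estimate {d : ℕ} {ν : Measure (Ed d)}
    (hν : Integrable (fun z : Ed d => min 1 (‖z‖ ^ 2)) ν) (S : Set ℝ) (hS : ∀ t ∈ S, 0 < t)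
    (G : Ed d → ℝ) (hGi : Integrable G ν) (hG0 : ∀ w, 0 ≤ G w)
    (hG : ∀ t ∈ S, ∀ w, min t (‖w‖ ^ 2) ≤ G w) :
    ∃ C : ℝ, 0 ≤ C ∧ ∀ t ∈ S, ∀ z : Ed d,
      t * ‖∫ w, jumpFn (Real.sqrt t) z w ∂ν‖ ≤ 1 / 16 + C * (t * ‖z‖ ^ 2) := by
  let gM : ℕ → Ed d → ℝ := fun n w => min (G w) (‖w‖ ^ 2 / ((n : ℝ) + 1) ^ 2)
  have hgm : ∀ n, AEStronglyMeasurable (gM n) ν := fun n =>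
    hGi.1.inf (Continuous.aestronglyMeasurable (by fun_prop))
  have hg0 : ∀ n w, 0 ≤ gM n w := fun n w => le_min (hG0 w) (by positivity)
  have hgG : ∀ n w, ‖gM n w‖ ≤ G w := fun n w => by
    rw [Real.norm_of_nonneg (hg0 n w)]; exact min_le_left _ _
  have hgi : ∀ n, Integrable (gM n) ν := fun n =>
    hGi.mono' (hgm n) (Eventually.of_forall (hgG n))
  have hlim : Tendsto (fun n => ∫ w, gM n w ∂ν) atTop (𝓝 0) := by
    have : Tendsto (fun n => ∫ w, gM n w ∂ν) atTop (𝓝 (∫ _, (0 : ℝ) ∂ν)) := by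
      refine tendsto_integral_of_dominated_convergence G hgm hGi
        (fun n => Eventually.of_forall (hgG n)) (Eventually.of_forall fun w => ?_)
      have h1 : Tendsto (fun n : ℕ => ‖w‖ ^ 2 / ((n : ℝ) + 1) ^ 2) atTop (𝓝 0) := by
        have h2 := (tendsto_one_div_add_atTop_nhds_zero_nat (𝕜 := ℝ)).pow 2
        have h3 := h2.const_mul (‖w‖ ^ 2)
        simp only [ne_eq, OfNat.ofNat_ne_zero, not_false_eq_true, zero_pow, mul_zero] at h3
        refine h3.congr fun n => ?_
        rw [div_pow, one_pow, mul_one_div]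
      exact squeeze_zero (fun n => hg0 n w) (fun n => min_le_right _ _) h1
    simpa using this
  -- the truncation `M = n + 1` separates intermediate jumps from jumps much larger than `√t`
  obtain ⟨n, hn⟩ := (hlim.eventually_lt_const (show (0 : ℝ) < 1 / 64 by norm_num)).exists
  set M : ℝ := (n : ℝ) + 1 with hM
  have hM1 : 1 ≤ M := by rw [hM]; linarith [(Nat.cast_nonneg n : (0 : ℝ) ≤ n)]
  set Γ := ∫ w, G w ∂ν with hΓ
  have hΓ0 : 0 ≤ Γ := integral_nonneg hG0
  refine ⟨2 * Γ + 8 * (M * Γ) ^ 2, by positivity, fun t htS z => ?_⟩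
  have ht := hS t htS
  have hst : 0 < Real.sqrt t := Real.sqrt_pos.2 ht
  have hst2 : Real.sqrt t ^ 2 = t := Real.sq_sqrt ht.le
  have hpt : ∀ w, t * ‖jumpFn (Real.sqrt t) z w‖ ≤
      (2 * (t * ‖z‖ ^ 2) + M * (Real.sqrt t * ‖z‖)) * G w + 2 * gM n w := by
    intro w
    have hg := hg0 n w
    have hGw := hG0 w
    have hA : 0 ≤ M * (Real.sqrt t * ‖z‖) * G w := by positivity
    have hB : 0 ≤ 2 * (t * ‖z‖ ^ 2) * G w := by positivity
    rcases lt_or_ge ‖w‖ (Real.sqrt t) with h | h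
    · have h1 := jumpFn_small z h
      have h2 : ‖w‖ ^ 2 ≤ t := by rw [← hst2]; gcongr
      have h3 : ‖w‖ ^ 2 ≤ G w := by simpa [min_eq_right h2] using hG t htS w
      have h4 : t * ‖jumpFn (Real.sqrt t) z w‖ ≤ t * (2 * (‖z‖ ^ 2 * G w)) := by
        gcongr
        refine h1.trans ?_
        gcongr
      nlinarith
    · have h2 : t ≤ ‖w‖ ^ 2 := by rw [← hst2]; gcongr
      have h3 : t ≤ G w := by simpa [min_eq_left h2] using hG t htS w
      obtain ⟨j1, j2⟩ := jumpFn_large z h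
      rcases le_or_gt (M * Real.sqrt t) ‖w‖ with h5 | h5
      · have h6 : t ≤ ‖w‖ ^ 2 / M ^ 2 := by
          rw [le_div_iff₀ (by positivity)]
          have : (M * Real.sqrt t) ^ 2 ≤ ‖w‖ ^ 2 := by gcongr
          rw [mul_pow, hst2] at this
          linarith
        have h7 : t ≤ gM n w := le_min h3 h6
        have : t * ‖jumpFn (Real.sqrt t) z w‖ ≤ t * 2 := by gcongr
        nlinarith
      · have : t * ‖jumpFn (Real.sqrt t) z w‖ ≤ G w * (‖z‖ * (M * Real.sqrt t)) := by
          gcongr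
          exact j2.trans (by gcongr)
        nlinarith
  have hi : Integrable (fun w => (2 * (t * ‖z‖ ^ 2) + M * (Real.sqrt t * ‖z‖)) * G w +
      2 * gM n w) ν := (hGi.const_mul _).add ((hgi n).const_mul _)
  have h1 : t * ‖∫ w, jumpFn (Real.sqrt t) z w ∂ν‖ ≤
      ∫ w, ((2 * (t * ‖z‖ ^ 2) + M * (Real.sqrt t * ‖z‖)) * G w + 2 * gM n w) ∂ν := by
    calc _ ≤ t * ∫ w, ‖jumpFn (Real.sqrt t) z w‖ ∂ν := by
          gcongr; exact norm_integral_le_integral_norm _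
      _ = ∫ w, t * ‖jumpFn (Real.sqrt t) z w‖ ∂ν := by rw [integral_const_mul]
      _ ≤ _ := integral_mono ((jumpFn_integrable hν hst z).norm.const_mul t) hi hpt
  rw [integral_add (hGi.const_mul _) ((hgi n).const_mul _), integral_const_mul,
    integral_const_mul] at h1
  refine h1.trans ?_
  set u := Real.sqrt t * ‖z‖ with hu
  have hu2 : t * ‖z‖ ^ 2 = u ^ 2 := by rw [hu, mul_pow, hst2]
  rw [hu2]
  -- the linear term is absorbed by `M Γ u ≤ 1 / 32 + 8 (M Γ u)²`
  nlinarith [sq_nonneg (M * Γ * u * 16 - 1)]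

/-! ### The density in terms of a function of positive type -/

/-- Moving the compensation radius from `r` to `1` changes the exponent by the drift
`b_r - b`. -/
theorem jumpFn_sub {d : ℕ} {ν : Measure (Ed d)}
    (hν : Integrable (fun z : Ed d => min 1 (‖z‖ ^ 2)) ν) {r : ℝ} (hr : 0 < r) (z : Ed d) :
    (∫ w, jumpFn 1 z w ∂ν) - ∫ w, jumpFn r z w ∂ν =
      Complex.I * ((⟪z, ∫ w, (Set.indicator {w : Ed d | ‖w‖ < r} (fun w => w) w
      - Set.indicator {w : Ed d | ‖w‖ < 1} (fun w => w) w) ∂ν⟫ : ℝ) : ℂ) := by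
  have hmeas : ∀ r : ℝ, Measurable (fun w => Set.indicator {w : Ed d | ‖w‖ < r} (fun w => w) w) :=
    fun r => measurable_id.indicator (measurableSet_lt measurable_norm measurable_const)
  have hint : Integrable (fun w => Set.indicator {w : Ed d | ‖w‖ < r} (fun w => w) w
      - Set.indicator {w : Ed d | ‖w‖ < 1} (fun w => w) w) ν := by
    refine (hν.const_mul (max r (1 / r))).mono' ((hmeas r).sub (hmeas 1)).aestronglyMeasurable ?_
    refine Eventually.of_forall fun w => ?_
    have hm : 0 < max r (1 / r) := hr.trans_le (le_max_left _ _)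
    have hmin : 0 ≤ min 1 (‖w‖ ^ 2) := le_min zero_le_one (by positivity)
    simp only [indicator, mem_ofPred_eq]
    split_ifs with h1 h2 h2
    · simpa using mul_nonneg hm.le hmin
    · rw [sub_zero, min_eq_left (by rw [not_lt] at h2; nlinarith), mul_one]
      exact h1.le.trans (le_max_left _ _)
    · rw [zero_sub, norm_neg, min_eq_right (by nlinarith [norm_nonneg w])]
      rw [not_lt] at h1
      have h3 : ‖w‖ ≤ 1 / r * ‖w‖ ^ 2 := by
        rw [one_div, ← div_eq_inv_mul, le_div_iff₀ hr]
        nlinarith [norm_nonneg w]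
      refine h3.trans ?_
      gcongr
      exact le_max_right _ _
    · simpa using mul_nonneg hm.le hmin
  rw [← integral_sub (jumpFn_integrable hν one_pos z) (jumpFn_integrable hν hr z),
    ← integral_inner hint, ← integral_complex_ofReal, ← integral_const_mul]
  refine integral_congr_ae (Eventually.of_forall fun w => ?_)
  simp only [jumpFn, inner_sub_right, real_inner_comm z w]
  by_cases h1 : ‖w‖ < r <;> by_cases h2 : ‖w‖ < 1 <;> simp [indicator, h1, h2, mul_comm]

/-- After the shift by `t b_{√t}` the drift disappears, and the integrand of the density splits into
the Gaussian factor of covariance `2 t a`, the character of `-x`, and the characteristic function of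
the remaining Gaussian part `A - a` and of the jumps compensated at `√t`. -/
theorem pdens_eq {d : ℕ} (A : Ed d →L[ℝ] Ed d) {ν : Measure (Ed d)} (b : Ed d)
    (hν : Integrable (fun z : Ed d => min 1 (‖z‖ ^ 2)) ν) (a : ℝ) {t : ℝ} (ht : 0 < t)
    (x : Ed d) :
    pdens d A ν b t (x + t • bshift d ν b (Real.sqrt t)) = ((2 * Real.pi) ^ d)⁻¹ *
      (∫ z : Ed d, ((Real.exp (-(t * a) * ‖z‖ ^ 2) : ℝ) : ℂ) *
        Complex.exp (⟪-x, z⟫ * Complex.I) *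
        (Complex.exp (-(t * ⟪z, (A - a • ContinuousLinearMap.id ℝ (Ed d)) z⟫ : ℝ)) *
          Complex.exp (t * ∫ w, jumpFn (Real.sqrt t) z w ∂ν))).re := by
  unfold pdens
  congr 2
  refine integral_congr_ae (Eventually.of_forall fun z => ?_)
  simp only
  have h1 := jumpFn_sub hν (Real.sqrt_pos.2 ht) z
  set J := ∫ w, (Set.indicator {w : Ed d | ‖w‖ < Real.sqrt t} (fun w => w) w
      - Set.indicator {w : Ed d | ‖w‖ < 1} (fun w => w) w) ∂ν
  have hJ : bshift d ν b (Real.sqrt t) = b + J := rfl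
  have h2 : psiFn d A ν b z = ((⟪z, A z⟫ : ℝ) : ℂ) - Complex.I * ((⟪z, b⟫ : ℝ) : ℂ) -
      ∫ w, jumpFn 1 z w ∂ν := by
    unfold psiFn
    congr 1
    refine integral_congr_ae (Eventually.of_forall fun w => ?_)
    simp only [jumpFn, real_inner_comm z w, mul_comm Complex.I]
  rw [h2, sub_eq_iff_eq_add.1 h1, Complex.ofReal_exp, ← Complex.exp_add, ← Complex.exp_add,
    ← Complex.exp_add]
  congr 1
  simp only [hJ, inner_add_left, inner_smul_left, inner_sub_right,
    inner_neg_left, sub_apply, smul_apply,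
    ContinuousLinearMap.id_apply, inner_smul_right, real_inner_self_eq_norm_sq]
  rw [real_inner_comm b z, real_inner_comm J z]
  push_cast
  simp
  ring

/-- The lower bound for a positive definite Gaussian part, uniformly over a set `S` of times for
which `min t ‖w‖²` has a common integrable majorant `G`. -/
theorem main_bound {d : ℕ} (A : Ed d →L[ℝ] Ed d) {ν : Measure (Ed d)} (b : Ed d)
    (hν : Integrable (fun z : Ed d => min 1 (‖z‖ ^ 2)) ν)
    (hsymm : ∀ x y : Ed d, ⟪A x, y⟫ = ⟪x, A y⟫)
    {a : ℝ} (ha : 0 < a) (hpos : ∀ x : Ed d, a * ‖x‖ ^ 2 ≤ ⟪x, A x⟫)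
    (S : Set ℝ) (hS : ∀ t ∈ S, 0 < t)
    (G : Ed d → ℝ) (hGi : Integrable G ν) (hG0 : ∀ w, 0 ≤ G w)
    (hG : ∀ t ∈ S, ∀ w, min t (‖w‖ ^ 2) ≤ G w) (θ : ℝ) :
    ∃ ctil : ℝ, 0 < ctil ∧ ∀ t ∈ S, ∀ x : Ed d, ‖x‖ ≤ θ * Real.sqrt t →
      ctil * t ^ (-(d : ℝ) / 2) ≤ pdens d A ν b t (x + t • bshift d ν b (Real.sqrt t)) := by
  obtain ⟨C, hC, hest⟩ := jump_estimate hν S hS G hGi hG0 hG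
  set A' := A - a • ContinuousLinearMap.id ℝ (Ed d) with hA'
  set C' := 2 * (‖A'‖ + C) with hC'
  have hC'0 : 0 ≤ C' := by positivity
  -- the smallest choice, up to the `+ 1` that keeps `R` positive, allowed by `gauss_small`
  set R := Real.sqrt (16 * C' * 2 ^ ((d : ℝ) / 2) + 1) with hRdef
  have hR0 : 0 < R := Real.sqrt_pos.2 (by positivity)
  have hR2 : R ^ 2 = 16 * C' * 2 ^ ((d : ℝ) / 2) + 1 := Real.sq_sqrt (by positivity)
  set E := Real.exp (-(2 * R + θ) ^ 2 / (4 * a)) with hE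
  have hE0 : 0 < E := Real.exp_pos _
  have hKa : 0 < (Real.pi / a) ^ ((d : ℝ) / 2) := Real.rpow_pos_of_pos (by positivity) _
  refine ⟨((2 * Real.pi) ^ d)⁻¹ * ((Real.pi / a) ^ ((d : ℝ) / 2) * E / 4), by positivity,
    fun t htS x hx => ?_⟩
  have ht := hS t htS
  rw [pdens_eq A b hν a ht x, ← hA']
  have hA'symm : ∀ x y : Ed d, ⟪A' x, y⟫ = ⟪x, A' y⟫ := by
    intro x y
    simp [hA', inner_sub_left, inner_sub_right, inner_smul_left, inner_smul_right, hsymm]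
  have hA'nn : ∀ x : Ed d, 0 ≤ ⟪x, A' x⟫ := by
    intro x
    have := hpos x
    simp only [hA', sub_apply, smul_apply,
      ContinuousLinearMap.id_apply, inner_sub_right, inner_smul_right, real_inner_self_eq_norm_sq]
    linarith
  have hφ := (PosType.gauss A' hA'symm hA'nn ht.le).mul
    (PosType.jump hν (Real.sqrt_pos.2 ht) ht.le)
  have hnear : ∀ z : Ed d, ‖Complex.exp (-(t * ⟪z, A' z⟫ : ℝ)) *
      Complex.exp (t * ∫ w, jumpFn (Real.sqrt t) z w ∂ν) - 1‖ ≤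
      1 / 8 + C' * (t * ‖z‖ ^ 2) := by
    intro z
    have hn := hφ.norm_le z
    rw [← Complex.exp_add] at hn ⊢
    set W : ℂ := (-(t * ⟪z, A' z⟫ : ℝ) : ℂ) + t * ∫ w, jumpFn (Real.sqrt t) z w ∂ν with hW
    have hWn : ‖W‖ ≤ 1 / 16 + (‖A'‖ + C) * (t * ‖z‖ ^ 2) := by
      have h1 : ⟪z, A' z⟫ ≤ ‖A'‖ * ‖z‖ ^ 2 := by
        calc _ ≤ ‖z‖ * ‖A' z‖ := real_inner_le_norm _ _
          _ ≤ ‖z‖ * (‖A'‖ * ‖z‖) := by gcongr; exact A'.le_opNorm z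
          _ = _ := by ring
      have h2 := hest t htS z
      have h3 : ‖W‖ ≤ t * ⟪z, A' z⟫ + t * ‖∫ w, jumpFn (Real.sqrt t) z w ∂ν‖ := by
        refine (norm_add_le _ _).trans (le_of_eq ?_)
        rw [norm_neg, Complex.norm_real, norm_mul, norm_mul, Complex.norm_real,
          Real.norm_of_nonneg ht.le, Real.norm_of_nonneg (hA'nn z)]
      have h4 : t * ⟪z, A' z⟫ ≤ t * (‖A'‖ * ‖z‖ ^ 2) := by gcongr
      nlinarith
    have h2W : ‖Complex.exp W - 1‖ ≤ 2 * ‖W‖ := by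
      rcases le_total ‖W‖ 1 with h | h
      · exact Complex.norm_exp_sub_one_le h
      · refine (norm_sub_le _ _).trans ?_
        rw [norm_one]
        linarith
    rw [hC']
    linarith
  have hlow := hφ.gauss_lower ht ha hR0 hx
    (gauss_small ht hC'0 hR0 (by rw [hR2]; linarith) hnear)
  have hK : (Real.pi / (t * a)) ^ ((d : ℝ) / 2) =
      (Real.pi / a) ^ ((d : ℝ) / 2) * t ^ (-(d : ℝ) / 2) := by
    rw [neg_div, Real.rpow_neg ht.le, ← div_eq_mul_inv, ← Real.div_rpow (by positivity) ht.le]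
    congr 1
    field_simp
  rw [hK] at hlow
  rw [mul_assoc]
  gcongr
  refine le_trans (le_of_eq ?_) hlow
  ring

/-! ### Nondegeneracy of the Gaussian part -/

theorem one_sub_cos_bound {d : ℕ} (x z : Ed d) :
    0 ≤ 1 - Real.cos ⟪x, z⟫ ∧
      1 - Real.cos ⟪x, z⟫ ≤ (2 + ‖x‖ ^ 2) * min 1 (‖z‖ ^ 2) := by
  refine ⟨by linarith [Real.cos_le_one ⟪x, z⟫], ?_⟩
  have h1 := Real.neg_one_le_cos ⟪x, z⟫
  have h2 := Real.one_sub_sq_div_two_le_cos (x := ⟪x, z⟫)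
  have h3 : ⟪x, z⟫ ^ 2 ≤ ‖x‖ ^ 2 * ‖z‖ ^ 2 := by
    rw [← sq_abs, ← mul_pow]
    gcongr
    exact abs_real_inner_le_norm x z
  have h4 : 0 ≤ ‖x‖ ^ 2 := by positivity
  have h5 : 0 ≤ ‖z‖ ^ 2 := by positivity
  rcases le_total 1 (‖z‖ ^ 2) with h | h
  · rw [min_eq_left h]; linarith
  · rw [min_eq_right h]; nlinarith

/-- Comparability of `Re ψ` with its radial majorant forces a nonzero `A` to be positive definite.
In a direction `v` with `⟪v, A v⟫ > 0` the majorant grows like `r²`, hence `Re ψ` grows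
quadratically in every direction `w`, while `Re ψ (r w) / r² → ⟪w, A w⟫` as `r → ∞` since the jumps
contribute `o(r²)`. -/
theorem posdef_of_C3 {d : ℕ} {A : Ed d →L[ℝ] Ed d} {ν : Measure (Ed d)}
    (hpair : IsLevyPair d A ν) {T3 : ℝ≥0∞} {c3 α3 : ℝ} (hT3 : 0 < T3) (hc3 : 0 < c3)
    (hC3 : CondC3 d A ν T3 c3 α3) (hA : A ≠ 0) :
    ∃ a : ℝ, 0 < a ∧ ∀ x : Ed d, a * ‖x‖ ^ 2 ≤ ⟪x, A x⟫ := by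
  have hν := hpair.nu_int
  have hcm : ∀ x : Ed d, AEStronglyMeasurable (fun z => 1 - Real.cos ⟪x, z⟫) ν := fun x =>
    Continuous.aestronglyMeasurable (by fun_prop)
  have hci : ∀ x : Ed d, Integrable (fun z => 1 - Real.cos ⟪x, z⟫) ν := fun x =>
    (hν.const_mul (2 + ‖x‖ ^ 2)).mono' (hcm x) (Eventually.of_forall fun z => by
      rw [Real.norm_of_nonneg (one_sub_cos_bound x z).1]; exact (one_sub_cos_bound x z).2)
  have hbdd : ∀ r : ℝ, BddAbove (rePsi d A ν '' Metric.closedBall 0 r) := by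
    intro r
    refine ⟨‖A‖ * r ^ 2 + (2 + r ^ 2) * ∫ z, min 1 (‖z‖ ^ 2) ∂ν, ?_⟩
    rintro _ ⟨x, hx, rfl⟩
    have hx' : ‖x‖ ≤ r := by simpa using hx
    have h1 : ⟪x, A x⟫ ≤ ‖A‖ * r ^ 2 := by
      calc _ ≤ ‖x‖ * ‖A x‖ := real_inner_le_norm _ _
        _ ≤ ‖x‖ * (‖A‖ * ‖x‖) := by gcongr; exact A.le_opNorm x
        _ = ‖A‖ * ‖x‖ ^ 2 := by ring
        _ ≤ _ := by gcongr
    have h2 : ∫ z, (1 - Real.cos ⟪x, z⟫) ∂ν ≤ (2 + r ^ 2) * ∫ z, min 1 (‖z‖ ^ 2) ∂ν := by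
      rw [← integral_const_mul]
      refine integral_mono (hci x) (hν.const_mul _) fun z => ?_
      refine (one_sub_cos_bound x z).2.trans ?_
      have : 0 ≤ min 1 (‖z‖ ^ 2) := le_min zero_le_one (by positivity)
      gcongr
    exact add_le_add h1 h2
  obtain ⟨v, hv1, hv⟩ : ∃ v : Ed d, ‖v‖ = 1 ∧ 0 < ⟪v, A v⟫ := by
    by_contra! hcon
    apply hA
    have hz : ∀ x : Ed d, ⟪x, A x⟫ = 0 := by
      intro x
      rcases eq_or_ne x 0 with rfl | hx
      · simp
      · have h1 := hcon (‖x‖⁻¹ • x) (by simp [norm_smul, hx])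
        simp only [map_smul, inner_smul_left, inner_smul_right] at h1
        have hxp : 0 < ‖x‖ := norm_pos_iff.2 hx
        refine le_antisymm ?_ (hpair.nonneg x)
        by_contra! h2
        have : 0 < ‖x‖⁻¹ * (‖x‖⁻¹ * ⟪x, A x⟫) := by positivity
        simp at h1
        linarith
    have hsym : (A : Ed d →ₗ[ℝ] Ed d).IsSymmetric := fun x y => hpair.symm x y
    have h0 := (hsym.inner_map_self_eq_zero).1 (fun x => by
      rw [real_inner_comm]; exact hz x)
    ext1 x
    exact LinearMap.congr_fun h0 x
  set κ := ⟪v, A v⟫ with hκ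
  refine ⟨c3 * κ, by positivity, ?_⟩
  have hunit : ∀ w : Ed d, ‖w‖ = 1 → c3 * κ ≤ ⟪w, A w⟫ := by
    intro w hw
    -- the jump contribution to `Re ψ (r w) / r²` at `r = n + 1`, which vanishes in the limit
    let F : ℕ → Ed d → ℝ := fun n z => (1 - Real.cos ⟪((n : ℝ) + 1) • w, z⟫) / ((n : ℝ) + 1) ^ 2
    have hF0 : Tendsto (fun n => ∫ z, F n z ∂ν) atTop (𝓝 (∫ _, (0 : ℝ) ∂ν)) := by
      refine tendsto_integral_of_dominated_convergence (fun z => 3 * min 1 (‖z‖ ^ 2)) ?_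
        (hν.const_mul 3) ?_ ?_
      · exact fun n => Continuous.aestronglyMeasurable (by fun_prop)
      · intro n
        refine Eventually.of_forall fun z => ?_
        have hb := one_sub_cos_bound (((n : ℝ) + 1) • w) z
        have hn1 : (1 : ℝ) ≤ (n : ℝ) + 1 := by linarith [(Nat.cast_nonneg n : (0 : ℝ) ≤ n)]
        rw [norm_smul, hw, mul_one, Real.norm_of_nonneg (by positivity)] at hb
        simp only [F]
        rw [Real.norm_of_nonneg (div_nonneg hb.1 (by positivity)), div_le_iff₀ (by positivity)]
        have hm : 0 ≤ min 1 (‖z‖ ^ 2) := le_min zero_le_one (by positivity)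
        refine hb.2.trans ?_
        have : 2 + ((n : ℝ) + 1) ^ 2 ≤ 3 * ((n : ℝ) + 1) ^ 2 := by nlinarith
        nlinarith
      · refine Eventually.of_forall fun z => ?_
        have h2 := ((tendsto_one_div_add_atTop_nhds_zero_nat (𝕜 := ℝ)).pow 2).const_mul 2
        simp only [ne_eq, OfNat.ofNat_ne_zero, not_false_eq_true, zero_pow, mul_zero] at h2
        refine squeeze_zero (fun n => div_nonneg (one_sub_cos_bound _ z).1 (by positivity))
          (fun n => ?_) h2
        simp only [F]
        rw [div_pow, one_pow, mul_one_div]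
        gcongr
        linarith [Real.neg_one_le_cos ⟪((n : ℝ) + 1) • w, z⟫]
    simp only [integral_zero] at hF0
    have hF1 := hF0.const_add ⟪w, A w⟫
    rw [add_zero] at hF1
    refine ge_of_tendsto hF1 ?_
    have hTfin : 1 / T3 ≠ ⊤ := by
      rw [one_div]; exact ENNReal.inv_ne_top.2 hT3.ne'
    filter_upwards [(tendsto_natCast_atTop_atTop (R := ℝ)).eventually_ge_atTop (1 / T3).toReal]
      with n hn
    set r : ℝ := (n : ℝ) + 1 with hr
    have hr0 : 0 < r := by positivity
    have hnr : ‖r • w‖ = r := by rw [norm_smul, hw, mul_one, Real.norm_of_nonneg hr0.le]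
    have h1 := hC3.1 (r • w) (by
      rw [hnr, ENNReal.lt_ofReal_iff_toReal_lt hTfin]
      linarith)
    rw [hnr] at h1
    have h2 : r ^ 2 * κ ≤ psiStar d A ν r := by
      have h3 : rePsi d A ν (r • v) ≤ psiStar d A ν r :=
        le_csSup (hbdd r) ⟨r • v, by simp [norm_smul, hv1, abs_of_pos hr0], rfl⟩
      refine le_trans ?_ h3
      unfold rePsi
      have h4 : 0 ≤ ∫ z, (1 - Real.cos ⟪r • v, z⟫) ∂ν :=
        integral_nonneg fun z => (one_sub_cos_bound _ z).1
      have h5 : ⟪r • v, A (r • v)⟫ = r ^ 2 * κ := by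
        simp only [map_smul, inner_smul_left, inner_smul_right, hκ]
        simp
        ring
      linarith
    have h6 : rePsi d A ν (r • w) = r ^ 2 * (⟪w, A w⟫ + ∫ z, F n z ∂ν) := by
      have h7 : ∫ z, F n z ∂ν = (∫ z, (1 - Real.cos ⟪r • w, z⟫) ∂ν) / r ^ 2 := by
        rw [← integral_div]
      have h5 : ⟪r • w, A (r • w)⟫ = r ^ 2 * ⟪w, A w⟫ := by
        simp only [map_smul, inner_smul_left, inner_smul_right]
        simp
        ring
      unfold rePsi
      rw [h7, h5]
      field_simp
    rw [h6] at h1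
    have h8 : r ^ 2 * (c3 * κ) ≤ r ^ 2 * (⟪w, A w⟫ + ∫ z, F n z ∂ν) := by
      refine le_trans ?_ h1
      nlinarith
    exact le_of_mul_le_mul_left h8 (by positivity)
  intro x
  rcases eq_or_ne x 0 with rfl | hx
  · simp
  · have hxp : 0 < ‖x‖ := norm_pos_iff.2 hx
    have h1 := hunit (‖x‖⁻¹ • x) (by simp [norm_smul, hx])
    simp only [map_smul, inner_smul_left, inner_smul_right] at h1
    simp at h1
    have h2 : ‖x‖⁻¹ * (‖x‖⁻¹ * ⟪x, A x⟫) * ‖x‖ ^ 2 = ⟪x, A x⟫ := by field_simp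
    rw [← h2]
    gcongr

/-! ### Conclusion -/

theorem stmt_16 (d : ℕ) (hd : 1 ≤ d) (A : Ed d →L[ℝ] Ed d) (ν : Measure (Ed d))
    (b : Ed d) (hpair : IsLevyPair d A ν)
    (T3 : ℝ≥0∞) (c3 α3 : ℝ) (hT3 : 0 < T3) (hc3 : 0 < c3 ∧ c3 ≤ 1)
    (hα3 : 0 < α3 ∧ α3 ≤ 2) (hC3 : CondC3 d A ν T3 c3 α3) (hA : A ≠ 0) :
    (∀ T θ : ℝ, 0 < T → 0 < θ → ∃ ctil : ℝ, 0 < ctil ∧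
      ∀ t : ℝ, 0 < t → t < T → ∀ x : Ed d, ‖x‖ ≤ θ * Real.sqrt t →
        ctil * t ^ (-(d : ℝ) / 2) ≤
          pdens d A ν b t (x + t • bshift d ν b (Real.sqrt t))) ∧
    ((∫⁻ z, ENNReal.ofReal (‖z‖ ^ 2) ∂ν) ≠ ⊤ →
      ∀ θ : ℝ, 0 < θ → ∃ ctil : ℝ, 0 < ctil ∧
        ∀ t : ℝ, 0 < t → ∀ x : Ed d, ‖x‖ ≤ θ * Real.sqrt t →
          ctil * t ^ (-(d : ℝ) / 2) ≤
            pdens d A ν b t (x + t • bshift d ν b (Real.sqrt t))) := by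
  have hν := hpair.nu_int
  obtain ⟨a, ha, hpos⟩ := posdef_of_C3 hpair hT3 hc3.1 hC3 hA
  refine ⟨fun T θ hT _ => ?_, fun hfin θ _ => ?_⟩
  · obtain ⟨c, hc, h⟩ := main_bound A b hν hpair.symm ha hpos (Ioo 0 T) (fun t ht => ht.1)
      (fun w => min T (‖w‖ ^ 2)) (integrable_min_sq hν hT.le)
      (fun w => le_min hT.le (by positivity)) (fun t ht w => min_le_min_right _ ht.2.le) θ
    exact ⟨c, hc, fun t ht htT => h t ⟨ht, htT⟩⟩
  · have hi : Integrable (fun w : Ed d => ‖w‖ ^ 2) ν := by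
      refine ⟨Continuous.aestronglyMeasurable (by fun_prop), ?_⟩
      rw [hasFiniteIntegral_iff_ofReal (Eventually.of_forall fun w => by positivity)]
      exact hfin.lt_top
    obtain ⟨c, hc, h⟩ := main_bound A b hν hpair.symm ha hpos (Ioi 0) (fun t ht => ht)
      (fun w => ‖w‖ ^ 2) hi (fun w => by positivity) (fun t _ w => min_le_right _ _) θ
    exact ⟨c, hc, fun t ht => h t ht⟩

end
end

section
/- Assume condition (C3) holds with α₃ ≥ 1 and A = 0. Then for all T, θ > 0 there is a constant c̃ > 0, depending only on d, α₃, c₃, T₃, ν, T and θ, such that for all 0 < t < T and all x ∈ ℝ^d with |x| ≤ θ·h^{-1}(1/t): p(t, x + t·b_{h^{-1}(1/t)}) ≥ c̃ · [h^{-1}(1/t)]^{-d}. If T₃ = ∞, then the conclusion holds with T = ∞ and some c̃ > 0. -/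
/-!
Fix `t`, put `r = hinv (1 / t)`, and measure space in units of `r`. The jump measure becomes the image
`μ` of `t • ν` under `w ↦ w / r`, and `t * concFn d 0 ν r = 1` says `∫ min 1 ‖w‖² dμ = 1`. The shift by
`t • bshift d ν b r` is exactly the drift that makes the cutoff `‖w‖ < r` become `‖w‖ < 1`, so
(`pdens_scaled`) the density is `r ^ (-d)` times a Fourier integral depending on `μ` alone, at a point
of norm at most `θ`. Since `concFn` is controlled by `psiStar` (`conc_le`), condition (C3) with
`1 ≤ α₃` gives `c ‖u‖ ≤ ∫ (1 - cos ⟪u, w⟫) dμ` for `‖u‖ ≥ K`, with `c` and `K` independent of `t`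
(`scaled_growth`). It remains to bound the Fourier integral from below, uniformly over all such `μ`
(`norm_low`).

Jumps with `‖w‖ ≥ 1` are absent with probability at least `exp (-1)`, so `μ` may be assumed to be
carried by the unit ball, with compensated exponent `η` (`small_low`). Write `η = (1 - s) η + s η`
with a small `s`. The density of the first part is Lipschitz by the linear growth of `Re η`, and by
tightness it is bounded below on some ball `B(y₀, 2ρ)`, with `y₀` in a fixed ball and `ρ` independent
of `s`. The second part must then reach the ball of radius `ρ` around an essentially arbitrary point
`v = x - y₀` with probability bounded below. Its standard deviation is small against `ρ`, so a change
of Lévy measure from `s μ` to `(1 + g) s μ` is used, with `|g(w)| ≤ min 1 (M ‖w‖)`; it moves the mean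
to `∫ g(w) w d(s μ)`, and by Cauchy–Schwarz it costs only a factor depending on `M`
(`cpLaw_tilt`, `approx_ball`).

The growth of order one is what makes every `v` reachable, with one `M` for all measures
(`exists_tilt`). By Hahn–Banach separation this amounts to
`∫ |⟪e, w⟫| min 1 (M ‖w‖) dμ` being large for every unit vector `e`. Summing
`2^{-k} (1 - cos (2^k ⟪e, w⟫))` over `k < n` gives at most a constant times
`|⟪e, w⟫| min 1 (2^n ‖w‖)`, while each `k` with `2^k ≥ K` contributes at least `c` to the integral of
the sum (`tilt_mass`). The total is therefore of order `n`, the borderline case being a logarithmic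
divergence.

The laws involved are handled by removing the jumps of norm below `1 / (n + 1)`, which leaves
explicit compound Poisson measures (`cpLaw`, `approxLaw`), and letting `n` tend to infinity.
-/

open MeasureTheory Filter Set
open scoped RealInnerProductSpace ENNReal Topology

noncomputable section

/-! ### Compound Poisson laws -/

/-- The `k`-fold convolution power of a measure. -/
def cpow {d : ℕ} (μ : Measure (Ed d)) : ℕ → Measure (Ed d)
  | 0 => Measure.dirac 0
  | k + 1 => μ ∗ cpow μ k

instance cpow_finite {d : ℕ} (μ : Measure (Ed d)) [IsFiniteMeasure μ] (k : ℕ) :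
    IsFiniteMeasure (cpow μ k) := by
  induction k with
  | zero => simp only [cpow]; infer_instance
  | succ k ih => simp only [cpow]; infer_instance

lemma charFun_cpow {d : ℕ} (μ : Measure (Ed d)) [IsFiniteMeasure μ] (k : ℕ) (u : Ed d) :
    charFun (cpow μ k) u = charFun μ u ^ k := by
  induction k with
  | zero => simp [cpow, charFun_dirac]
  | succ k ih => simp only [cpow]; rw [charFun_conv, ih, pow_succ, mul_comm]

lemma cpow_univ {d : ℕ} (μ : Measure (Ed d)) [IsFiniteMeasure μ] (k : ℕ) :
    (cpow μ k) univ = (μ univ) ^ k := by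
  have h := charFun_cpow μ k 0
  rw [charFun_zero, charFun_zero] at h
  have h2 : (cpow μ k).real univ = μ.real univ ^ k := by exact_mod_cast h
  rw [Measure.real, Measure.real, ← ENNReal.toReal_pow] at h2
  exact (ENNReal.toReal_eq_toReal_iff' (measure_ne_top _ _)
    (ENNReal.pow_ne_top (measure_ne_top _ _))).1 h2

/-- The convolution exponential `∑ μ^{*k} / k!`. -/
def expM {d : ℕ} (μ : Measure (Ed d)) : Measure (Ed d) :=
  Measure.sum (fun k : ℕ => ENNReal.ofReal ((k.factorial : ℝ)⁻¹) • cpow μ k)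

lemma expM_univ {d : ℕ} (μ : Measure (Ed d)) [IsFiniteMeasure μ] :
    expM μ univ = ENNReal.ofReal (Real.exp (μ.real univ)) := by
  have hs : HasSum (fun k : ℕ => (k.factorial : ℝ)⁻¹ * (μ.real univ) ^ k)
      (Real.exp (μ.real univ)) := by
    have := NormedSpace.expSeries_div_hasSum_exp (𝔸 := ℝ) (μ.real univ)
    rw [← Real.exp_eq_exp_ℝ] at this
    simpa [div_eq_inv_mul] using this
  rw [expM, Measure.sum_apply _ MeasurableSet.univ, ← hs.tsum_eq,
    ENNReal.ofReal_tsum_of_nonneg (fun k => by positivity) hs.summable]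
  congr 1 with k
  rw [Measure.smul_apply, cpow_univ, smul_eq_mul, ENNReal.ofReal_mul (by positivity),
    ENNReal.ofReal_pow (by positivity), ofReal_measureReal]

instance expM_finite {d : ℕ} (μ : Measure (Ed d)) [IsFiniteMeasure μ] :
    IsFiniteMeasure (expM μ) := ⟨by rw [expM_univ]; exact ENNReal.ofReal_lt_top⟩

lemma charFun_expM {d : ℕ} (μ : Measure (Ed d)) [IsFiniteMeasure μ] (u : Ed d) :
    charFun (expM μ) u = Complex.exp (charFun μ u) := by
  have hint : Integrable (fun x : Ed d => Complex.exp (⟪x, u⟫ * Complex.I)) (expM μ) := by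
    refine Integrable.of_bound (C := 1) ?_ ?_
    · exact (by fun_prop : Continuous fun x : Ed d =>
        Complex.exp (⟪x, u⟫ * Complex.I)).aestronglyMeasurable
    · exact ae_of_all _ fun x => by rw [Complex.norm_exp_ofReal_mul_I]
  have h1 := hasSum_integral_measure hint
  have h2 : HasSum (fun k : ℕ => (charFun μ u) ^ k / (k.factorial : ℂ))
      (Complex.exp (charFun μ u)) := by
    have := NormedSpace.expSeries_div_hasSum_exp (𝔸 := ℂ) (charFun μ u)
    rwa [← Complex.exp_eq_exp_ℂ] at this
  rw [charFun_apply]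
  refine h1.unique ?_
  have h3 : (fun k : ℕ => (charFun μ u) ^ k / (k.factorial : ℂ)) = fun k : ℕ =>
      ∫ x, Complex.exp (⟪x, u⟫ * Complex.I)
        ∂(ENNReal.ofReal ((k.factorial : ℝ)⁻¹) • cpow μ k) := by
    ext k
    rw [integral_smul_measure, ← charFun_apply, charFun_cpow,
      ENNReal.toReal_ofReal (by positivity), div_eq_inv_mul]
    simp
  rwa [h3] at h2

lemma dirac_le_expM {d : ℕ} (μ : Measure (Ed d)) : Measure.dirac 0 ≤ expM μ := by
  have := Measure.le_sum (fun k : ℕ => ENNReal.ofReal ((k.factorial : ℝ)⁻¹) • cpow μ k) 0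
  simpa [cpow, expM] using this

/-- `CSDom μ μ₁ μ₂` is a Cauchy–Schwarz type domination of `μ` by the pair `(μ₁, μ₂)`. It is stated
for products `F * G` so that it is stable under convolutions. -/
def CSDom {d : ℕ} (μ μ₁ μ₂ : Measure (Ed d)) : Prop :=
  ∀ F G : Ed d → ℝ≥0∞, Measurable F → Measurable G →
    ∫⁻ x, F x * G x ∂μ ≤
      (∫⁻ x, F x ^ (2 : ℝ) ∂μ₁) ^ (1 / 2 : ℝ) * (∫⁻ x, G x ^ (2 : ℝ) ∂μ₂) ^ (1 / 2 : ℝ)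

lemma sqrt_rpow_two (x : ℝ≥0∞) : (x ^ (1 / 2 : ℝ)) ^ (2 : ℝ) = x := by
  rw [← ENNReal.rpow_mul]; norm_num

lemma CSDom.dirac {d : ℕ} : CSDom (Measure.dirac (0 : Ed d)) (Measure.dirac 0)
    (Measure.dirac 0) := by
  intro F G hF hG
  have hFG : Measurable fun x => F x * G x := hF.mul hG
  rw [lintegral_dirac' _ hFG, lintegral_dirac' _ (hF.pow_const _),
    lintegral_dirac' _ (hG.pow_const _), ← ENNReal.rpow_mul, ← ENNReal.rpow_mul]
  norm_num

lemma CSDom.withDensity {d : ℕ} (μ : Measure (Ed d)) (f : Ed d → ℝ≥0∞) (hf : Measurable f) :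
    CSDom (μ.withDensity f) μ (μ.withDensity (fun x => f x ^ (2 : ℝ))) := by
  intro F G hF hG
  have hFG : Measurable fun x => F x * G x := hF.mul hG
  rw [lintegral_withDensity_eq_lintegral_mul _ hf hFG,
    lintegral_withDensity_eq_lintegral_mul _ (hf.pow_const _) (hG.pow_const _)]
  have := ENNReal.lintegral_mul_le_Lp_mul_Lq μ (Real.HolderConjugate.two_two)
    hF.aemeasurable (hG.mul hf).aemeasurable
  refine le_trans (le_of_eq ?_) (this.trans (le_of_eq ?_))
  · refine lintegral_congr fun x => ?_
    simp only [Pi.mul_apply]; ring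
  · congr 2
    refine lintegral_congr fun x => ?_
    simp only [Pi.mul_apply]
    rw [ENNReal.mul_rpow_of_nonneg _ _ (by norm_num), mul_comm]

lemma CSDom.conv {d : ℕ} {μ μ₁ μ₂ ν ν₁ ν₂ : Measure (Ed d)} [IsFiniteMeasure μ₁]
    [IsFiniteMeasure ν] [IsFiniteMeasure ν₁] [IsFiniteMeasure ν₂] [IsFiniteMeasure μ₂]
    (h : CSDom μ μ₁ μ₂) (h' : CSDom ν ν₁ ν₂) : CSDom (μ ∗ ν) (μ₁ ∗ ν₁) (μ₂ ∗ ν₂) := by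
  intro F G hF hG
  have hFG : Measurable fun x => F x * G x := hF.mul hG
  rw [Measure.lintegral_conv hFG, Measure.lintegral_conv (hF.pow_const _),
    Measure.lintegral_conv (hG.pow_const _)]
  have m1 : Measurable fun x : Ed d => ∫⁻ y, F (x + y) ^ (2 : ℝ) ∂ν₁ :=
    Measurable.lintegral_prod_right' (f := fun p : Ed d × Ed d => F (p.1 + p.2) ^ (2 : ℝ))
      (by fun_prop)
  have m2 : Measurable fun x : Ed d => ∫⁻ y, G (x + y) ^ (2 : ℝ) ∂ν₂ :=
    Measurable.lintegral_prod_right' (f := fun p : Ed d × Ed d => G (p.1 + p.2) ^ (2 : ℝ))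
      (by fun_prop)
  calc _ ≤ ∫⁻ x, (∫⁻ y, F (x + y) ^ (2 : ℝ) ∂ν₁) ^ (1 / 2 : ℝ)
            * (∫⁻ y, G (x + y) ^ (2 : ℝ) ∂ν₂) ^ (1 / 2 : ℝ) ∂μ :=
        lintegral_mono fun x => h' (fun y => F (x + y)) (fun y => G (x + y))
          (by fun_prop) (by fun_prop)
    _ ≤ _ := h _ _ (m1.pow_const _) (m2.pow_const _)
    _ = _ := by simp only [sqrt_rpow_two]

lemma CSDom.cpow {d : ℕ} {μ μ₁ μ₂ : Measure (Ed d)} [IsFiniteMeasure μ₁]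
    [IsFiniteMeasure μ] [IsFiniteMeasure μ₂] (h : CSDom μ μ₁ μ₂) (k : ℕ) :
    CSDom (cpow μ k) (cpow μ₁ k) (cpow μ₂ k) := by
  induction k with
  | zero => exact CSDom.dirac
  | succ k ih => exact h.conv ih

lemma CSDom.expM {d : ℕ} {μ μ₁ μ₂ : Measure (Ed d)} [IsFiniteMeasure μ₁]
    [IsFiniteMeasure μ] [IsFiniteMeasure μ₂] (h : CSDom μ μ₁ μ₂) :
    CSDom (expM μ) (expM μ₁) (expM μ₂) := by
  intro F G hF hG
  simp only [_root_.expM, lintegral_sum_measure, lintegral_smul_measure, smul_eq_mul]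
  set c : ℕ → ℝ≥0∞ := fun k => ENNReal.ofReal ((k.factorial : ℝ)⁻¹)
  set a : ℕ → ℝ≥0∞ := fun k => ∫⁻ x, F x ^ (2 : ℝ) ∂(_root_.cpow μ₁ k)
  set b : ℕ → ℝ≥0∞ := fun k => ∫⁻ x, G x ^ (2 : ℝ) ∂(_root_.cpow μ₂ k)
  have key := ENNReal.lintegral_mul_le_Lp_mul_Lq (Measure.count : Measure ℕ)
    (Real.HolderConjugate.two_two) (f := fun k => (c k * a k) ^ (1 / 2 : ℝ))
    (g := fun k => (c k * b k) ^ (1 / 2 : ℝ)) (by fun_prop) (by fun_prop)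
  simp only [lintegral_count, sqrt_rpow_two, Pi.mul_apply] at key
  refine le_trans (ENNReal.tsum_le_tsum fun k => ?_) key
  rw [← ENNReal.mul_rpow_of_nonneg _ _ (by norm_num)]
  have hk := h.cpow k F G hF hG
  calc c k * _ ≤ c k * (a k ^ (1 / 2 : ℝ) * b k ^ (1 / 2 : ℝ)) := by gcongr
    _ = _ := by
      rw [show c k * a k * (c k * b k) = (c k) ^ (2 : ℝ) * (a k * b k) by
        rw [ENNReal.rpow_two]; ring, ENNReal.mul_rpow_of_nonneg _ _ (by norm_num),
        ENNReal.mul_rpow_of_nonneg _ _ (by norm_num), ← ENNReal.rpow_mul]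
      norm_num

/-- The compound Poisson law with Lévy measure `μ`, translated by `m`. -/
def cpLaw {d : ℕ} (μ : Measure (Ed d)) (m : Ed d) : Measure (Ed d) :=
  ENNReal.ofReal (Real.exp (-μ.real univ)) • (expM μ).map (fun x => x + m)

instance cpLaw_prob {d : ℕ} (μ : Measure (Ed d)) [IsFiniteMeasure μ] (m : Ed d) :
    IsProbabilityMeasure (cpLaw μ m) := by
  constructor
  rw [cpLaw, Measure.smul_apply, Measure.map_apply (by fun_prop) MeasurableSet.univ, preimage_univ,
    expM_univ, smul_eq_mul, ← ENNReal.ofReal_mul (by positivity), ← Real.exp_add]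
  simp

lemma charFun_cpLaw {d : ℕ} (μ : Measure (Ed d)) [IsFiniteMeasure μ] (m u : Ed d) :
    charFun (cpLaw μ m) u =
      Complex.exp (∫ w, (Complex.exp (Complex.I * ((⟪u, w⟫ : ℝ) : ℂ)) - 1) ∂μ
        + Complex.I * ((⟪u, m⟫ : ℝ) : ℂ)) := by
  have hint : Integrable (fun w : Ed d => Complex.exp (Complex.I * ((⟪u, w⟫ : ℝ) : ℂ))) μ := by
    refine Integrable.of_bound (C := 1) ?_ ?_
    · exact (by fun_prop : Continuous fun w : Ed d =>
        Complex.exp (Complex.I * ((⟪u, w⟫ : ℝ) : ℂ))).aestronglyMeasurable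
    · exact ae_of_all _ fun x => by rw [mul_comm, Complex.norm_exp_ofReal_mul_I]
  have hc : charFun μ u = ∫ w, Complex.exp (Complex.I * ((⟪u, w⟫ : ℝ) : ℂ)) ∂μ := by
    rw [charFun_apply]
    refine integral_congr_ae (ae_of_all _ fun w => ?_)
    simp only [real_inner_comm, mul_comm]
  have h1 : charFun (cpLaw μ m) u = Real.exp (-μ.real univ) *
      charFun ((expM μ).map (fun x => x + m)) u := by
    rw [charFun_apply, cpLaw, integral_smul_measure, ← charFun_apply,
      ENNReal.toReal_ofReal (by positivity)]
    simp
  rw [h1, charFun_map_add_const, charFun_expM, integral_sub hint (integrable_const _), ← hc]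
  rw [Complex.ofReal_exp, ← Complex.exp_add, ← Complex.exp_add]
  congr 1
  simp [real_inner_comm]
  ring

/-- Lower bound for `cpLaw μ m B` in terms of the law with tilted Lévy measure `f • μ`: the cost
depends only on `∫ (f - 1)² dμ`, so it stays bounded when `μ` has large mass but `f` is close to
`1` in `L²(μ)`. -/
lemma cpLaw_tilt {d : ℕ} (μ : Measure (Ed d)) [IsFiniteMeasure μ] (f : Ed d → ℝ)
    (hf : Measurable f) (hf0 : ∀ x, 0 ≤ f x) (hf2 : ∀ x, f x ≤ 2) (m : Ed d) (B : Set (Ed d))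
    (hB : MeasurableSet B) :
    (cpLaw (μ.withDensity (fun x => ENNReal.ofReal (f x))) m).real B ^ 2 ≤
      Real.exp (∫ w, (f w - 1) ^ 2 ∂μ) * (cpLaw μ m).real B := by
  set μ1 := μ.withDensity (fun x => ENNReal.ofReal (f x)) with hμ1
  set μ2 := μ.withDensity (fun x => ENNReal.ofReal (f x) ^ (2 : ℝ)) with hμ2
  have if1 : Integrable f μ := Integrable.of_bound (C := 2) hf.aestronglyMeasurable
    (ae_of_all _ fun x => by rw [Real.norm_of_nonneg (hf0 x)]; exact hf2 x)
  have if2 : Integrable (fun x => f x ^ 2) μ := Integrable.of_bound (C := 4)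
    (hf.pow_const _).aestronglyMeasurable
    (ae_of_all _ fun x => by
      rw [Real.norm_of_nonneg (by positivity)]; nlinarith [hf0 x, hf2 x])
  have e2 : μ2 = μ.withDensity (fun x => ENNReal.ofReal (f x ^ 2)) := by
    rw [hμ2]; congr 1; ext x
    rw [ENNReal.rpow_two, ENNReal.ofReal_pow (hf0 x)]
  have : IsFiniteMeasure μ1 := isFiniteMeasure_withDensity_ofReal if1.2
  have : IsFiniteMeasure μ2 := by rw [e2]; exact isFiniteMeasure_withDensity_ofReal if2.2
  have r1 : μ1.real univ = ∫ x, f x ∂μ := by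
    rw [Measure.real, hμ1, withDensity_apply _ MeasurableSet.univ, Measure.restrict_univ,
      ← ofReal_integral_eq_lintegral_ofReal if1 (ae_of_all _ hf0),
      ENNReal.toReal_ofReal (integral_nonneg hf0)]
  have r2 : μ2.real univ = ∫ x, f x ^ 2 ∂μ := by
    rw [Measure.real, e2, withDensity_apply _ MeasurableSet.univ, Measure.restrict_univ,
      ← ofReal_integral_eq_lintegral_ofReal if2 (ae_of_all _ fun x => by positivity),
      ENNReal.toReal_ofReal (integral_nonneg fun x => by positivity)]
  set B' := (fun x : Ed d => x + m) ⁻¹' B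
  have hB' : MeasurableSet B' := (by fun_prop : Measurable fun x : Ed d => x + m) hB
  have hreal : ∀ ρ : Measure (Ed d), IsFiniteMeasure ρ → (cpLaw ρ m).real B
      = Real.exp (-ρ.real univ) * (expM ρ).real B' := by
    intro ρ hρ
    rw [Measure.real, cpLaw, Measure.smul_apply, Measure.map_apply (by fun_prop) hB, smul_eq_mul,
      ENNReal.toReal_mul, ENNReal.toReal_ofReal (by positivity)]
    rfl
  -- Cauchy–Schwarz bounds the tilted measure of `B'` by the measures with densities `1` and `f ^ 2`.
  have cs := (CSDom.withDensity μ (fun x => ENNReal.ofReal (f x)) (by fun_prop)).expM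
    (B'.indicator 1) (B'.indicator 1) (measurable_one.indicator hB') (measurable_one.indicator hB')
  have hi : ∀ x, B'.indicator (1 : Ed d → ℝ≥0∞) x * B'.indicator 1 x = B'.indicator 1 x := by
    intro x; by_cases h : x ∈ B' <;> simp [h]
  have hi2 : ∀ x, B'.indicator (1 : Ed d → ℝ≥0∞) x ^ (2 : ℝ) = B'.indicator 1 x := by
    intro x; by_cases h : x ∈ B' <;> simp [h]
  simp only [hi, hi2, lintegral_indicator_one hB'] at cs
  rw [← hμ1, ← hμ2] at cs
  have cs2 : (expM μ1).real B' ^ 2 ≤ (expM μ).real B' * Real.exp (∫ x, f x ^ 2 ∂μ) := by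
    have h3 : (expM μ1 B') ^ 2 ≤ expM μ B' * expM μ2 univ := by
      calc (expM μ1 B') ^ 2 ≤ ((expM μ B') ^ (1 / 2 : ℝ) * (expM μ2 B') ^ (1 / 2 : ℝ)) ^ 2 := by
            gcongr
        _ = expM μ B' * expM μ2 B' := by
            rw [mul_pow, ← ENNReal.rpow_two, ← ENNReal.rpow_two, sqrt_rpow_two, sqrt_rpow_two]
        _ ≤ _ := by gcongr; exact subset_univ _
    have h4 := ENNReal.toReal_mono (ENNReal.mul_ne_top (measure_ne_top _ _) (measure_ne_top _ _)) h3
    rwa [ENNReal.toReal_pow, ENNReal.toReal_mul, expM_univ, r2,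
      ENNReal.toReal_ofReal (by positivity)] at h4
  rw [hreal _ inferInstance, hreal _ inferInstance, mul_pow, r1]
  have e3 : ∫ w, (f w - 1) ^ 2 ∂μ = ∫ x, f x ^ 2 ∂μ - 2 * ∫ x, f x ∂μ + μ.real univ := by
    have : ∀ w, (f w - 1) ^ 2 = (f w ^ 2 - 2 * f w) + 1 := fun w => by ring
    simp only [this]
    have if3 : Integrable (fun w => f w ^ 2 - 2 * f w) μ := if2.sub (if1.const_mul 2)
    rw [integral_add if3 (integrable_const _), integral_sub if2 (if1.const_mul 2), integral_const_mul]
    simp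
  calc _ ≤ Real.exp (-∫ x, f x ∂μ) ^ 2 * ((expM μ).real B' * Real.exp (∫ x, f x ^ 2 ∂μ)) := by
        gcongr
    _ = _ := by
        rw [e3, ← Real.exp_nat_mul]
        have : Real.exp (∫ x, f x ^ 2 ∂μ - 2 * ∫ x, f x ∂μ + μ.real univ)
            = Real.exp (((2 : ℕ) : ℝ) * -∫ x, f x ∂μ) * Real.exp (∫ x, f x ^ 2 ∂μ)
              * Real.exp (μ.real univ) := by
          rw [← Real.exp_add, ← Real.exp_add]; congr 1; push_cast; ring
        have h5 : Real.exp (μ.real univ) * Real.exp (-μ.real univ) = 1 := by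
          rw [← Real.exp_add]; simp
        rw [this]
        linear_combination -(Real.exp (((2 : ℕ) : ℝ) * -∫ x, f x ∂μ) * Real.exp (∫ x, f x ^ 2 ∂μ)
          * (expM μ).real B') * h5

/-! ### Fourier integrals -/

/-- Real part of the (unnormalized) inverse Fourier transform of `Φ` at `x`. -/
def FI {d : ℕ} (Φ : Ed d → ℂ) (x : Ed d) : ℝ :=
  (∫ u : Ed d, Complex.exp (-(Complex.I * ((⟪x, u⟫ : ℝ) : ℂ))) * Φ u).re

lemma norm_exp_neg_I (a : ℝ) : ‖Complex.exp (-(Complex.I * (a : ℂ)))‖ = 1 := by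
  rw [show -(Complex.I * (a : ℂ)) = ((-a : ℝ) : ℂ) * Complex.I by push_cast; ring,
    Complex.norm_exp_ofReal_mul_I]

lemma norm_exp_I (a : ℝ) : ‖Complex.exp (Complex.I * (a : ℂ))‖ = 1 := by
  rw [mul_comm, Complex.norm_exp_ofReal_mul_I]

lemma integrable_exp_mul {d : ℕ} {Φ : Ed d → ℂ} (hΦ : Integrable Φ) (x : Ed d) :
    Integrable (fun u : Ed d => Complex.exp (-(Complex.I * ((⟪x, u⟫ : ℝ) : ℂ))) * Φ u) := by
  refine hΦ.bdd_mul (c := 1) (Continuous.aestronglyMeasurable (by fun_prop)) ?_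
  exact ae_of_all _ fun u => (norm_exp_neg_I _).le

lemma FI_charFun {d : ℕ} {Φ : Ed d → ℂ} (hΦ : Integrable Φ) (μ : Measure (Ed d))
    [IsFiniteMeasure μ] (x : Ed d) :
    FI (fun u => Φ u * charFun μ u) x = ∫ y, FI Φ (x - y) ∂μ := by
  have hint : Integrable (fun p : Ed d × Ed d =>
      Complex.exp (-(Complex.I * ((⟪x - p.2, p.1⟫ : ℝ) : ℂ))) * Φ p.1)
      ((volume : Measure (Ed d)).prod μ) := by
    refine (hΦ.comp_fst μ).bdd_mul (c := 1) (Continuous.aestronglyMeasurable (by fun_prop)) ?_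
    exact ae_of_all _ fun u => (norm_exp_neg_I _).le
  have h1 : ∀ u : Ed d, Complex.exp (-(Complex.I * ((⟪x, u⟫ : ℝ) : ℂ))) * (Φ u * charFun μ u) =
      ∫ y, Complex.exp (-(Complex.I * ((⟪x - y, u⟫ : ℝ) : ℂ))) * Φ u ∂μ := by
    intro u
    rw [charFun_apply, ← mul_assoc, ← integral_const_mul]
    congr 1; ext y
    rw [mul_right_comm, ← Complex.exp_add]
    congr 2
    rw [inner_sub_left]; push_cast; ring
  simp only [FI, h1]
  rw [integral_integral_swap hint]
  exact (integral_re (𝕜 := ℂ) hint.integral_prod_right).symm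

lemma FI_bound {d : ℕ} {Φ : Ed d → ℂ} (x : Ed d) :
    |FI Φ x| ≤ ∫ u, ‖Φ u‖ := by
  refine (Complex.abs_re_le_norm _).trans ((norm_integral_le_integral_norm _).trans (le_of_eq ?_))
  simp only [norm_mul, norm_exp_neg_I, one_mul]

lemma norm_exp_neg_I_sub (a b : ℝ) :
    ‖Complex.exp (-(Complex.I * (a : ℂ))) - Complex.exp (-(Complex.I * (b : ℂ)))‖ ≤ |a - b| := by
  have h : Complex.exp (-(Complex.I * (a : ℂ))) - Complex.exp (-(Complex.I * (b : ℂ)))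
      = Complex.exp (-(Complex.I * (b : ℂ))) * (Complex.exp (Complex.I * ((b - a : ℝ) : ℂ)) - 1) := by
    rw [mul_sub, ← Complex.exp_add, mul_one]; congr 2; push_cast; ring
  rw [h, norm_mul, norm_exp_neg_I, one_mul, abs_sub_comm]
  exact Real.norm_exp_I_mul_ofReal_sub_one_le

lemma FI_lip {d : ℕ} {Φ : Ed d → ℂ} (hΦ : Integrable Φ)
    (hΦ1 : Integrable (fun u => ‖u‖ * ‖Φ u‖)) (x y : Ed d) :
    |FI Φ x - FI Φ y| ≤ (∫ u, ‖u‖ * ‖Φ u‖) * ‖x - y‖ := by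
  rw [FI, FI, ← Complex.sub_re, ← integral_sub (integrable_exp_mul hΦ x) (integrable_exp_mul hΦ y)]
  refine (Complex.abs_re_le_norm _).trans ((norm_integral_le_integral_norm _).trans ?_)
  rw [← integral_mul_const]
  refine integral_mono_of_nonneg (ae_of_all _ fun u => norm_nonneg _) (hΦ1.mul_const _)
    (ae_of_all _ fun u => ?_)
  simp only
  rw [← sub_mul, norm_mul]
  calc _ ≤ |⟪x, u⟫ - ⟪y, u⟫| * ‖Φ u‖ := by gcongr; exact norm_exp_neg_I_sub _ _
    _ ≤ (‖x - y‖ * ‖u‖) * ‖Φ u‖ := by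
      gcongr; rw [← inner_sub_left]; exact abs_real_inner_le_norm _ _
    _ = _ := by ring

lemma FI_tendsto {d : ℕ} {ι : Type*} {l : Filter ι} [l.IsCountablyGenerated]
    {Φs : ι → Ed d → ℂ} {Φ : Ed d → ℂ} {G : Ed d → ℝ} (hG : Integrable G)
    (hm : ∀ i, AEStronglyMeasurable (Φs i)) (hb : ∀ i u, ‖Φs i u‖ ≤ G u)
    (hl : ∀ u, Tendsto (fun i => Φs i u) l (𝓝 (Φ u))) (x : Ed d) :
    Tendsto (fun i => FI (Φs i) x) l (𝓝 (FI Φ x)) := by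
  refine (Complex.continuous_re.tendsto _).comp ?_
  refine tendsto_integral_filter_of_dominated_convergence G ?_ ?_ hG ?_
  · exact Eventually.of_forall fun i =>
      (Continuous.aestronglyMeasurable (by fun_prop)).mul (hm i)
  · exact Eventually.of_forall fun i => ae_of_all _ fun u => by
      rw [norm_mul, norm_exp_neg_I, one_mul]; exact hb i u
  · exact ae_of_all _ fun u => (hl u).const_mul _

lemma FI_congr {d : ℕ} {Φ Ψ : Ed d → ℂ} (h : ∀ u, Φ u = Ψ u) : FI Φ = FI Ψ := by
  rw [show Φ = Ψ from funext h]

lemma gauss_integrable {d : ℕ} {b : ℝ} (hb : 0 < b) :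
    Integrable (fun u : Ed d => Real.exp (-b * ‖u‖ ^ 2)) := by
  have h := (GaussianFourier.integrable_cexp_neg_mul_sq_norm_add (V := Ed d) (b := (b : ℂ))
    (by simpa using hb) 0 0).re
  refine h.congr (ae_of_all _ fun u => ?_)
  have : -(b : ℂ) * (‖u‖ : ℂ) ^ 2 + 0 * ((⟪(0 : Ed d), u⟫ : ℝ) : ℂ)
    = ((-b * ‖u‖ ^ 2 : ℝ) : ℂ) := by push_cast; ring
  simp only [this, RCLike.re_to_complex]
  rw [← Complex.ofReal_exp, Complex.ofReal_re]

lemma gauss_integral {d : ℕ} {b : ℝ} (hb : 0 < b) :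
    ∫ u : Ed d, Real.exp (-b * ‖u‖ ^ 2) = (Real.pi / b) ^ ((d : ℝ) / 2) := by
  have := GaussianFourier.integral_rexp_neg_mul_sq_norm (V := Ed d) hb
  simpa using this

lemma gauss_fourier {d : ℕ} {b : ℝ} (hb : 0 < b) (x : Ed d) :
    ∫ u : Ed d, Complex.exp (-(Complex.I * ((⟪x, u⟫ : ℝ) : ℂ)))
      * ((Real.exp (-b * ‖u‖ ^ 2) : ℝ) : ℂ) =
      (((Real.pi / b) ^ ((d : ℝ) / 2) * Real.exp (-‖x‖ ^ 2 / (4 * b)) : ℝ) : ℂ) := by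
  have := GaussianFourier.integral_cexp_neg_mul_sq_norm_add (V := Ed d) (b := (b : ℂ))
    (by simpa using hb) (-Complex.I) x
  rw [Complex.ofReal_mul, Complex.ofReal_cpow (by positivity), Complex.ofReal_exp]
  refine Eq.trans ?_ (this.trans ?_)
  · refine integral_congr_ae (ae_of_all _ fun u => ?_)
    simp only
    rw [Complex.ofReal_exp, ← Complex.exp_add]; congr 1; push_cast; ring
  · simp

lemma FI_gauss {d : ℕ} {b : ℝ} (hb : 0 < b) (x : Ed d) :
    FI (fun u : Ed d => ((Real.exp (-b * ‖u‖ ^ 2) : ℝ) : ℂ)) x =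
      (Real.pi / b) ^ ((d : ℝ) / 2) * Real.exp (-‖x‖ ^ 2 / (4 * b)) := by
  rw [FI, gauss_fourier hb, Complex.ofReal_re]

/-- A function that is quadratically close to `1` at the origin has a Gaussian integral bounded
from below. -/
lemma gauss_low {d : ℕ} {b a : ℝ} (hb : 0 < b) (ha : 0 ≤ a)
    (hab : 2 * a / b * 2 ^ ((d : ℝ) / 2) ≤ 1 / 2)
    {χ : Ed d → ℂ} (hm : AEStronglyMeasurable χ) (h1 : ∀ u, ‖χ u‖ ≤ 1)
    (h : ∀ u, ‖χ u - 1‖ ≤ a * ‖u‖ ^ 2) :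
    1 / 2 * (Real.pi / b) ^ ((d : ℝ) / 2) ≤
      (∫ u, χ u * ((Real.exp (-b * ‖u‖ ^ 2) : ℝ) : ℂ)).re := by
  have hb2 : 0 < b / 2 := by positivity
  have hint : Integrable (fun u : Ed d => χ u * ((Real.exp (-b * ‖u‖ ^ 2) : ℝ) : ℂ)) :=
    (gauss_integrable hb).ofReal.bdd_mul (c := 1) hm (ae_of_all _ h1)
  have e := integral_re (𝕜 := ℂ) hint
  simp only [RCLike.re_to_complex] at e
  rw [← e]
  have hlow : ∀ u : Ed d, Real.exp (-b * ‖u‖ ^ 2) - a * (2 / b) * Real.exp (-(b / 2) * ‖u‖ ^ 2)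
      ≤ (χ u * ((Real.exp (-b * ‖u‖ ^ 2) : ℝ) : ℂ)).re := by
    intro u
    rw [Complex.re_mul_ofReal]
    have h2 : 1 - a * ‖u‖ ^ 2 ≤ (χ u).re := by
      have := (Complex.abs_re_le_norm (χ u - 1)).trans (h u)
      rw [Complex.sub_re, Complex.one_re] at this
      linarith [(abs_le.1 this).1]
    have h3 : ‖u‖ ^ 2 * Real.exp (-b * ‖u‖ ^ 2) ≤ (2 / b) * Real.exp (-(b / 2) * ‖u‖ ^ 2) := by
      have h4 : (b / 2) * ‖u‖ ^ 2 ≤ Real.exp ((b / 2) * ‖u‖ ^ 2) :=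
        (by linarith : (b / 2) * ‖u‖ ^ 2 ≤ (b / 2) * ‖u‖ ^ 2 + 1).trans (Real.add_one_le_exp _)
      calc ‖u‖ ^ 2 * Real.exp (-b * ‖u‖ ^ 2)
          = (2 / b) * (((b / 2) * ‖u‖ ^ 2) * Real.exp (-b * ‖u‖ ^ 2)) := by field_simp
        _ ≤ (2 / b) * (Real.exp ((b / 2) * ‖u‖ ^ 2) * Real.exp (-b * ‖u‖ ^ 2)) := by gcongr
        _ = _ := by rw [← Real.exp_add]; congr 2; ring
    have h5 := mul_le_mul_of_nonneg_right h2 (Real.exp_pos (-b * ‖u‖ ^ 2)).le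
    have h6 := mul_le_mul_of_nonneg_left h3 ha
    nlinarith
  have hi2 := (gauss_integrable (d := d) hb).sub ((gauss_integrable (d := d) hb2).const_mul (a * (2 / b)))
  refine le_trans ?_ (integral_mono hi2 hint.re hlow)
  simp only [Pi.sub_apply]
  rw [integral_sub (gauss_integrable hb) ((gauss_integrable hb2).const_mul _), integral_const_mul,
    gauss_integral hb, gauss_integral hb2]
  have : Real.pi / (b / 2) = (Real.pi / b) * 2 := by field_simp
  rw [this, Real.mul_rpow (by positivity) (by norm_num)]
  have hP : 0 ≤ (Real.pi / b) ^ ((d : ℝ) / 2) := by positivity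
  have := mul_le_mul_of_nonneg_right hab hP
  have e3 : a * (2 / b) * ((Real.pi / b) ^ ((d : ℝ) / 2) * 2 ^ ((d : ℝ) / 2)) =
    2 * a / b * 2 ^ ((d : ℝ) / 2) * (Real.pi / b) ^ ((d : ℝ) / 2) := by ring
  linarith

/-- Parseval's identity against a centred Gaussian. -/
lemma FI_gauss_parseval {d : ℕ} {Φ : Ed d → ℂ} (hΦ : Integrable Φ) {κ : ℝ} (hκ : 0 < κ) :
    ∫ y, Real.exp (-κ * ‖y‖ ^ 2) * FI Φ (-y) = (Real.pi / κ) ^ ((d : ℝ) / 2) *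
      (∫ u, Φ u * ((Real.exp (-(1 / (4 * κ)) * ‖u‖ ^ 2) : ℝ) : ℂ)).re := by
  set μ : Measure (Ed d) := volume.withDensity (fun y => ENNReal.ofReal (Real.exp (-κ * ‖y‖ ^ 2)))
  have : IsFiniteMeasure μ := isFiniteMeasure_withDensity_ofReal (gauss_integrable hκ).2
  have hc : ∀ u, charFun μ u = (((Real.pi / κ) ^ ((d : ℝ) / 2) *
      Real.exp (-(1 / (4 * κ)) * ‖u‖ ^ 2) : ℝ) : ℂ) := by
    intro u
    have h := gauss_fourier hκ (-u)
    rw [charFun_apply, integral_withDensity_eq_integral_toReal_smul₀ (by fun_prop)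
      (ae_of_all _ fun _ => ENNReal.ofReal_lt_top)]
    rw [norm_neg, show -‖u‖ ^ 2 / (4 * κ) = -(1 / (4 * κ)) * ‖u‖ ^ 2 by ring] at h
    rw [← h]
    refine integral_congr_ae (ae_of_all _ fun y => ?_)
    simp only
    rw [ENNReal.toReal_ofReal (by positivity), Complex.real_smul, mul_comm, inner_neg_left,
      real_inner_comm]
    congr 2; push_cast; ring
  have h := FI_charFun hΦ μ 0
  rw [integral_withDensity_eq_integral_toReal_smul₀ (by fun_prop)
      (ae_of_all _ fun _ => ENNReal.ofReal_lt_top)] at h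
  simp only [zero_sub, smul_eq_mul] at h
  have e : ∀ y : Ed d, (ENNReal.ofReal (Real.exp (-κ * ‖y‖ ^ 2))).toReal
      = Real.exp (-κ * ‖y‖ ^ 2) := fun y => ENNReal.toReal_ofReal (by positivity)
  simp only [e] at h
  rw [← h, FI]
  simp only [hc, inner_zero_left, Complex.ofReal_zero, mul_zero, neg_zero, Complex.exp_zero,
    one_mul]
  rw [← Complex.re_ofReal_mul, ← integral_const_mul]
  congr 2; ext u; push_cast; ring

/-! ### Lévy measures carried by the unit ball -/

/-- Lévy measures carried by the open unit ball, with second moment at most `1`. -/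
structure SmallLevy {d : ℕ} (ν : Measure (Ed d)) : Prop where
  supp : ∀ᵐ w ∂ν, ‖w‖ < 1
  int : Integrable (fun w : Ed d => ‖w‖ ^ 2) ν
  le_one : ∫ w, ‖w‖ ^ 2 ∂ν ≤ 1

/-- The fully compensated exponent of a Lévy measure, so that `exp (eta ν)` is the characteristic
function at time `1`. -/
def eta {d : ℕ} (ν : Measure (Ed d)) (u : Ed d) : ℂ :=
  ∫ w, (Complex.exp (Complex.I * ((⟪u, w⟫ : ℝ) : ℂ)) - 1 - Complex.I * ((⟪u, w⟫ : ℝ) : ℂ)) ∂ν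

lemma norm_exp_I_sub (a : ℝ) :
    ‖Complex.exp (Complex.I * (a : ℂ)) - 1 - Complex.I * (a : ℂ)‖ ≤ 2 * a ^ 2 := by
  have hn : ‖Complex.I * (a : ℂ)‖ = |a| := by simp
  by_cases h : |a| ≤ 1
  · have := Complex.norm_exp_sub_one_sub_id_le (x := Complex.I * (a : ℂ)) (by rw [hn]; exact h)
    rw [hn, sq_abs] at this
    nlinarith [sq_nonneg a]
  · push Not at h
    have h1 : ‖Complex.exp (Complex.I * (a : ℂ)) - 1‖ ≤ |a| := Real.norm_exp_I_mul_ofReal_sub_one_le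
    calc _ ≤ ‖Complex.exp (Complex.I * (a : ℂ)) - 1‖ + ‖Complex.I * (a : ℂ)‖ := norm_sub_le _ _
      _ ≤ |a| + |a| := by rw [hn]; gcongr
      _ ≤ 2 * a ^ 2 := by rw [← sq_abs]; nlinarith

lemma norm_exp_inner_sub {d : ℕ} (u w : Ed d) :
    ‖Complex.exp (Complex.I * ((⟪u, w⟫ : ℝ) : ℂ)) - 1 - Complex.I * ((⟪u, w⟫ : ℝ) : ℂ)‖
      ≤ 2 * ‖u‖ ^ 2 * ‖w‖ ^ 2 := by
  refine (norm_exp_I_sub _).trans ?_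
  have : |⟪u, w⟫| ≤ ‖u‖ * ‖w‖ := abs_real_inner_le_norm u w
  rw [← sq_abs, mul_assoc, ← mul_pow]
  gcongr

lemma eta_int {d : ℕ} {ν : Measure (Ed d)} (h : Integrable (fun w : Ed d => ‖w‖ ^ 2) ν) (u : Ed d) :
    Integrable (fun w : Ed d => Complex.exp (Complex.I * ((⟪u, w⟫ : ℝ) : ℂ)) - 1
      - Complex.I * ((⟪u, w⟫ : ℝ) : ℂ)) ν :=
  (h.const_mul (2 * ‖u‖ ^ 2)).mono' (Continuous.aestronglyMeasurable (by fun_prop))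
    (ae_of_all _ fun w => norm_exp_inner_sub u w)

lemma eta_norm {d : ℕ} {ν : Measure (Ed d)} (h : Integrable (fun w : Ed d => ‖w‖ ^ 2) ν) (u : Ed d) :
    ‖eta ν u‖ ≤ 2 * ‖u‖ ^ 2 * ∫ w, ‖w‖ ^ 2 ∂ν := by
  rw [← integral_const_mul]
  exact norm_integral_le_of_norm_le (h.const_mul _) (ae_of_all _ fun w => norm_exp_inner_sub u w)

lemma eta_re {d : ℕ} {ν : Measure (Ed d)} (h : Integrable (fun w : Ed d => ‖w‖ ^ 2) ν) (u : Ed d) :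
    (eta ν u).re = -∫ w, (1 - Real.cos ⟪u, w⟫) ∂ν := by
  have e := integral_re (𝕜 := ℂ) (eta_int h u)
  simp only [RCLike.re_to_complex] at e
  rw [eta, ← e, ← integral_neg]
  refine integral_congr_ae (ae_of_all _ fun w => ?_)
  simp only
  rw [mul_comm Complex.I, Complex.sub_re, Complex.sub_re, Complex.exp_ofReal_mul_I_re]
  simp

lemma eta_re_nonpos {d : ℕ} {ν : Measure (Ed d)} (h : Integrable (fun w : Ed d => ‖w‖ ^ 2) ν)
    (u : Ed d) : (eta ν u).re ≤ 0 := by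
  rw [eta_re h]
  have : 0 ≤ ∫ w, (1 - Real.cos ⟪u, w⟫) ∂ν :=
    integral_nonneg fun w => by simpa using Real.cos_le_one _
  linarith

lemma norm_exp_eta {d : ℕ} {ν : Measure (Ed d)} (h : Integrable (fun w : Ed d => ‖w‖ ^ 2) ν)
    (u : Ed d) : ‖Complex.exp (eta ν u)‖ ≤ 1 := by
  rw [Complex.norm_exp]
  exact Real.exp_le_one_iff.2 (eta_re_nonpos h u)

lemma norm_exp_sub_one_le_of_re {z : ℂ} (hz : z.re ≤ 0) : ‖Complex.exp z - 1‖ ≤ ‖z‖ := by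
  have h := Convex.norm_image_sub_le_of_norm_deriv_le (𝕜 := ℂ) (f := Complex.exp) (C := 1)
    (s := {w : ℂ | w.re ≤ 0}) (x := 0) (y := z) (fun w _ => Complex.differentiable_exp w)
    (fun w hw => by
      rw [Complex.deriv_exp, Complex.norm_exp]; exact Real.exp_le_one_iff.2 hw)
    (convex_halfSpace_re_le 0) (by simp) hz
  simpa using h

lemma eta_continuous {d : ℕ} {ν : Measure (Ed d)} (h : Integrable (fun w : Ed d => ‖w‖ ^ 2) ν) :
    Continuous (eta ν) := by
  rw [continuous_iff_continuousAt]
  intro u0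
  refine continuousAt_of_dominated (bound := fun w => 2 * (‖u0‖ + 1) ^ 2 * ‖w‖ ^ 2)
    (Eventually.of_forall fun u => (eta_int h u).1) ?_ (h.const_mul _)
    (ae_of_all _ fun w => by fun_prop)
  filter_upwards [Metric.ball_mem_nhds u0 one_pos] with u hu
  refine ae_of_all _ fun w => (norm_exp_inner_sub u w).trans ?_
  have : ‖u‖ ≤ ‖u0‖ + 1 := by
    have h1 : ‖u - u0‖ < 1 := by simpa [dist_eq_norm] using hu
    have := norm_le_norm_add_norm_sub' u u0
    linarith
  gcongr

/-- Removal of the jumps smaller than `1 / (n + 1)`. -/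
def trunc {d : ℕ} (ν : Measure (Ed d)) (n : ℕ) : Measure (Ed d) :=
  ν.restrict {w | 1 / ((n : ℝ) + 1) ≤ ‖w‖}

lemma trunc_meas {d : ℕ} (n : ℕ) : MeasurableSet {w : Ed d | 1 / ((n : ℝ) + 1) ≤ ‖w‖} :=
  measurableSet_le measurable_const measurable_norm

lemma trunc_finite {d : ℕ} {ν : Measure (Ed d)} (h : Integrable (fun w : Ed d => ‖w‖ ^ 2) ν)
    (n : ℕ) : IsFiniteMeasure (trunc ν n) := by
  constructor
  rw [trunc, Measure.restrict_apply_univ]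
  have hp : (0 : ℝ) < (1 / ((n : ℝ) + 1)) ^ 2 := by positivity
  refine lt_of_le_of_lt (measure_mono ?_) (h.measure_ge_lt_top hp)
  intro w hw
  simp only [mem_ofPred_eq] at hw ⊢
  gcongr

/-- Integrals against the truncated measures converge when the integrand vanishes at `0`. -/
lemma trunc_tendsto {d : ℕ} {E : Type*} [NormedAddCommGroup E] [NormedSpace ℝ E]
    {ν : Measure (Ed d)} {f : Ed d → E} (hf : Integrable f ν) (h0 : f 0 = 0) :
    Tendsto (fun n => ∫ w, f w ∂(trunc ν n)) atTop (𝓝 (∫ w, f w ∂ν)) := by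
  simp only [trunc]
  have : ∀ n : ℕ, ∫ w in {w : Ed d | 1 / ((n : ℝ) + 1) ≤ ‖w‖}, f w ∂ν
      = ∫ w, indicator {w : Ed d | 1 / ((n : ℝ) + 1) ≤ ‖w‖} f w ∂ν :=
    fun n => (integral_indicator (trunc_meas n)).symm
  simp only [this]
  refine tendsto_integral_of_dominated_convergence (fun w => ‖f w‖)
    (fun n => (hf.indicator (trunc_meas n)).1) hf.norm
    (fun n => ae_of_all _ fun w => norm_indicator_le_norm_self _ _) (ae_of_all _ fun w => ?_)
  refine tendsto_const_nhds.congr' ?_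
  by_cases hw : w = 0
  · subst hw
    exact Eventually.of_forall fun n => by simp [indicator, h0]
  · have hw' : 0 < ‖w‖ := norm_pos_iff.2 hw
    filter_upwards [tendsto_one_div_add_atTop_nhds_zero_nat.eventually (gt_mem_nhds hw')] with n hn
    rw [indicator_of_mem]
    exact le_of_lt hn

/-- The law of the compensated sum of the jumps larger than `1 / (n + 1)`. -/
def approxLaw {d : ℕ} (ν : Measure (Ed d)) (n : ℕ) : Measure (Ed d) :=
  cpLaw (trunc ν n) (-∫ w, w ∂(trunc ν n))

lemma trunc_int {d : ℕ} {E : Type*} [NormedAddCommGroup E] {ν : Measure (Ed d)} {f : Ed d → E}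
    (h : Integrable f ν) (n : ℕ) : Integrable f (trunc ν n) := h.restrict

lemma trunc_int_id {d : ℕ} {ν : Measure (Ed d)} (h : SmallLevy ν) (n : ℕ) :
    Integrable (fun w : Ed d => w) (trunc ν n) := by
  have := trunc_finite h.int n
  refine Integrable.of_bound (C := 1) (Continuous.aestronglyMeasurable (by fun_prop)) ?_
  filter_upwards [ae_restrict_of_ae h.supp] with w hw using hw.le

lemma integral_I_inner {d : ℕ} {μ : Measure (Ed d)} {f : Ed d → Ed d} (h : Integrable f μ)
    (u : Ed d) : ∫ w, Complex.I * ((⟪u, f w⟫ : ℝ) : ℂ) ∂μ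
      = Complex.I * ((⟪u, ∫ w, f w ∂μ⟫ : ℝ) : ℂ) := by
  rw [integral_const_mul, integral_complex_ofReal, integral_inner h]

lemma charFun_approx {d : ℕ} {ν : Measure (Ed d)} (h : SmallLevy ν) (n : ℕ) (u : Ed d) :
    charFun (approxLaw ν n) u = Complex.exp (eta (trunc ν n) u) := by
  have := trunc_finite h.int n
  rw [approxLaw, charFun_cpLaw, eta]
  congr 1
  have hid := trunc_int_id h n
  have h2 : Integrable (fun w : Ed d => Complex.I * ((⟪u, w⟫ : ℝ) : ℂ)) (trunc ν n) :=
    ((hid.const_inner u).ofReal).const_mul _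
  have h1 : Integrable (fun w : Ed d => Complex.exp (Complex.I * ((⟪u, w⟫ : ℝ) : ℂ)) - 1)
      (trunc ν n) := by
    refine Integrable.of_bound (C := 2) (Continuous.aestronglyMeasurable (by fun_prop))
      (ae_of_all _ fun w => ?_)
    refine (norm_sub_le _ _).trans ?_
    rw [norm_exp_I]; norm_num
  rw [integral_sub h1 h2, integral_I_inner hid, inner_neg_right]
  push_cast; ring

instance approx_prob {d : ℕ} {ν : Measure (Ed d)} [h : Fact (SmallLevy ν)] (n : ℕ) :
    IsProbabilityMeasure (approxLaw ν n) := by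
  have := trunc_finite h.out.int n
  exact cpLaw_prob _ _

lemma charFun_approx_tendsto {d : ℕ} {ν : Measure (Ed d)} (h : SmallLevy ν) (u : Ed d) :
    Tendsto (fun n => charFun (approxLaw ν n) u) atTop (𝓝 (Complex.exp (eta ν u))) := by
  simp only [charFun_approx h]
  exact (Complex.continuous_exp.tendsto _).comp (trunc_tendsto (eta_int h.int u) (by simp))

/-- Convolution of `FI Φ` with the approximating laws converges to the Fourier integral of the
product. -/
lemma FI_approx {d : ℕ} {ν : Measure (Ed d)} (h : SmallLevy ν) {Φ : Ed d → ℂ}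
    (hΦ : Integrable Φ) (x : Ed d) :
    Tendsto (fun n => ∫ y, FI Φ (x - y) ∂(approxLaw ν n)) atTop
      (𝓝 (FI (fun u => Φ u * Complex.exp (eta ν u)) x)) := by
  have : Fact (SmallLevy ν) := ⟨h⟩
  have e : ∀ n, ∫ y, FI Φ (x - y) ∂(approxLaw ν n)
      = FI (fun u => Φ u * charFun (approxLaw ν n) u) x := fun n => (FI_charFun hΦ _ x).symm
  simp only [e]
  refine FI_tendsto hΦ.norm (fun n => ?_) (fun n u => ?_) (fun u => ?_) x
  · refine hΦ.1.mul (Continuous.aestronglyMeasurable ?_)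
    simp only [funext (charFun_approx h n)]
    exact Complex.continuous_exp.comp (eta_continuous (trunc_int h.int n))
  · rw [norm_mul]
    exact mul_le_of_le_one_right (norm_nonneg _) (norm_charFun_le_one u)
  · exact (charFun_approx_tendsto h u).const_mul _

/-- The Fourier integral is a density, hence nonnegative: with a Gaussian factor it is a limit of
Gaussian averages of probability laws, and the Gaussian factor is then removed. -/
lemma FI_nonneg {d : ℕ} {ν : Measure (Ed d)} (h : SmallLevy ν)
    (hi : Integrable (fun u => Complex.exp (eta ν u))) (x : Ed d) :
    0 ≤ FI (fun u => Complex.exp (eta ν u)) x := by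
  have hpos : ∀ n : ℕ, 0 ≤ FI (fun u => ((Real.exp (-(1 / ((n : ℝ) + 1)) * ‖u‖ ^ 2) : ℝ) : ℂ)
      * Complex.exp (eta ν u)) x := by
    intro n
    have hb : (0 : ℝ) < 1 / ((n : ℝ) + 1) := by positivity
    have hI : Integrable (fun u : Ed d =>
        ((Real.exp (-(1 / ((n : ℝ) + 1)) * ‖u‖ ^ 2) : ℝ) : ℂ)) := (gauss_integrable hb).ofReal
    refine ge_of_tendsto (FI_approx h hI x)
      (Eventually.of_forall fun k => integral_nonneg fun y => ?_)
    have e := FI_gauss hb (x - y)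
    simp only [Pi.zero_apply]
    rw [e]; positivity
  refine ge_of_tendsto (FI_tendsto (l := atTop) (Φs := fun (n : ℕ) u =>
      ((Real.exp (-(1 / ((n : ℝ) + 1)) * ‖u‖ ^ 2) : ℝ) : ℂ) * Complex.exp (eta ν u))
      hi.norm (fun n => ?_) (fun n u => ?_) (fun u => ?_) x)
    (Eventually.of_forall hpos)
  · exact (Continuous.aestronglyMeasurable (by fun_prop)).mul hi.1
  · rw [norm_mul, Complex.norm_real, Real.norm_of_nonneg (by positivity)]
    refine mul_le_of_le_one_left (norm_nonneg _) (Real.exp_le_one_iff.2 ?_)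
    have : 0 ≤ 1 / ((n : ℝ) + 1) * ‖u‖ ^ 2 := by positivity
    linarith
  · have h1 : Tendsto (fun n : ℕ => Real.exp (-(1 / ((n : ℝ) + 1)) * ‖u‖ ^ 2)) atTop (𝓝 1) := by
      have := (tendsto_one_div_add_atTop_nhds_zero_nat (𝕜 := ℝ)).neg.mul_const (‖u‖ ^ 2)
      rw [neg_zero, zero_mul] at this
      have h2 := (Real.continuous_exp.tendsto 0).comp this
      rwa [Real.exp_zero] at h2
    simpa using ((Complex.continuous_ofReal.tendsto _).comp h1).mul_const (Complex.exp (eta ν u))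

/-- The law of the compensated jumps charges a ball around any point of the form `∫ g(w) w ν(dw)`:
under the tilted Lévy measure `(1 + g) ν` this point is the mean, and the variance is small. -/
lemma approx_ball {d : ℕ} {ν : Measure (Ed d)} (h : SmallLevy ν) {ρ M : ℝ} (hρ : 0 < ρ)
    (hs : ∫ w, ‖w‖ ^ 2 ∂ν ≤ ρ ^ 2 / (512 * 2 ^ ((d : ℝ) / 2)))
    {g : Ed d → ℝ} (hg : Measurable g) (hg1 : ∀ w, |g w| ≤ 1) (hgM : ∀ w, |g w| ≤ M * ‖w‖) :
    ∀ᶠ n in atTop, 1 / 16 * Real.exp (-M ^ 2) ≤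
      (approxLaw ν n).real (Metric.ball (∫ w, g w • w ∂ν) ρ) := by
  have hgw : Integrable (fun w : Ed d => g w • w) ν := by
    refine (h.int.const_mul M).mono' (hg.smul measurable_id).aestronglyMeasurable
      (ae_of_all _ fun w => ?_)
    rw [norm_smul, Real.norm_eq_abs]
    nlinarith [hgM w, norm_nonneg w]
  have hv := trunc_tendsto hgw (by simp)
  filter_upwards [hv.eventually (Metric.ball_mem_nhds _ (half_pos hρ))] with n hn
  have := trunc_finite h.int n
  set σ := trunc ν n with hσ
  set v := ∫ w, g w • w ∂σ
  have hg2 : Measurable fun w => 1 + g w := by fun_prop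
  have f0 : ∀ w, 0 ≤ 1 + g w := fun w => by linarith [(abs_le.1 (hg1 w)).1]
  have f2 : ∀ w, 1 + g w ≤ 2 := fun w => by linarith [(abs_le.1 (hg1 w)).2]
  have fint : Integrable (fun w => 1 + g w) σ := Integrable.of_bound (C := 2)
    hg2.aestronglyMeasurable (ae_of_all _ fun w => by rw [Real.norm_of_nonneg (f0 w)]; exact f2 w)
  set σ' := σ.withDensity (fun w => ENNReal.ofReal (1 + g w)) with hσ'
  have : IsFiniteMeasure σ' := isFiniteMeasure_withDensity_ofReal fint.2
  set Q := cpLaw σ' (-∫ w, w ∂σ) with hQ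
  have iσ : ∫ w, ‖w‖ ^ 2 ∂σ ≤ ∫ w, ‖w‖ ^ 2 ∂ν :=
    setIntegral_le_integral h.int (ae_of_all _ fun w => by positivity)
  set s := ∫ w, ‖w‖ ^ 2 ∂ν with hsdef
  have s0 : 0 ≤ s := integral_nonneg fun w => by positivity
  set b := ρ ^ 2 / 32 with hb
  have bpos : 0 < b := by positivity
  -- the exponent of `Q` centred at its mean `v`
  set ξ : Ed d → ℂ := fun u => ∫ w, (((1 + g w : ℝ)) : ℂ) * (Complex.exp (Complex.I * ((⟪u, w⟫ : ℝ) : ℂ))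
    - 1 - Complex.I * ((⟪u, w⟫ : ℝ) : ℂ)) ∂σ with hξ
  have hid := trunc_int_id h n
  have hch : ∀ u, charFun Q u = Complex.exp (ξ u + Complex.I * ((⟪u, v⟫ : ℝ) : ℂ)) := by
    intro u
    rw [hQ, charFun_cpLaw]
    congr 1
    rw [integral_withDensity_eq_integral_toReal_smul₀ (by fun_prop)
      (ae_of_all _ fun _ => ENNReal.ofReal_lt_top)]
    have hA : Integrable (fun w : Ed d => (((1 + g w : ℝ)) : ℂ) *
        (Complex.exp (Complex.I * ((⟪u, w⟫ : ℝ) : ℂ)) - 1 - Complex.I * ((⟪u, w⟫ : ℝ) : ℂ))) σ := by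
      refine (eta_int (trunc_int h.int n) u).bdd_mul (c := 2)
        (Complex.measurable_ofReal.comp hg2).aestronglyMeasurable (ae_of_all _ fun w => ?_)
      rw [Complex.norm_real, Real.norm_of_nonneg (f0 w)]; exact f2 w
    have hgw' : Integrable (fun w : Ed d => g w • w) σ := trunc_int hgw n
    have hB : Integrable (fun w : Ed d => Complex.I * ((⟪u, w⟫ : ℝ) : ℂ)) σ :=
      ((hid.const_inner u).ofReal).const_mul _
    have hC : Integrable (fun w : Ed d => Complex.I * ((⟪u, g w • w⟫ : ℝ) : ℂ)) σ :=
      ((hgw'.const_inner u).ofReal).const_mul _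
    have e : ∀ w : Ed d, (ENNReal.ofReal (1 + g w)).toReal •
        (Complex.exp (Complex.I * ((⟪u, w⟫ : ℝ) : ℂ)) - 1) =
        ((((1 + g w : ℝ)) : ℂ) *
        (Complex.exp (Complex.I * ((⟪u, w⟫ : ℝ) : ℂ)) - 1 - Complex.I * ((⟪u, w⟫ : ℝ) : ℂ))
        + Complex.I * ((⟪u, w⟫ : ℝ) : ℂ)) + Complex.I * ((⟪u, g w • w⟫ : ℝ) : ℂ) := by
      intro w
      rw [ENNReal.toReal_ofReal (f0 w), Complex.real_smul, inner_smul_right]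
      push_cast; ring
    simp only [e]
    have hAB := hA.add hB
    simp only [Pi.add_def] at hAB
    rw [integral_add hAB hC, integral_add hA hB, integral_I_inner hid, integral_I_inner hgw',
      inner_neg_right, Complex.ofReal_neg]
    simp only [hξ]
    ring
  have hξ1 : ∀ u, ‖ξ u‖ ≤ 4 * s * ‖u‖ ^ 2 := by
    intro u
    calc ‖ξ u‖ ≤ ∫ w, 4 * ‖u‖ ^ 2 * ‖w‖ ^ 2 ∂σ := by
          refine norm_integral_le_of_norm_le ((trunc_int h.int n).const_mul _)
            (ae_of_all _ fun w => ?_)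
          rw [norm_mul, Complex.norm_real, Real.norm_of_nonneg (f0 w)]
          calc _ ≤ 2 * (2 * ‖u‖ ^ 2 * ‖w‖ ^ 2) := by
                gcongr
                · exact f2 w
                · exact norm_exp_inner_sub u w
            _ = _ := by ring
      _ = 4 * ‖u‖ ^ 2 * ∫ w, ‖w‖ ^ 2 ∂σ := integral_const_mul _ _
      _ ≤ 4 * ‖u‖ ^ 2 * s := by gcongr
      _ = _ := by ring
  have hχ : ∀ u, Complex.exp (ξ u) = Complex.exp (-(Complex.I * ((⟪v, u⟫ : ℝ) : ℂ))) * charFun Q u := by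
    intro u
    rw [hch, ← Complex.exp_add, real_inner_comm]; congr 1; ring
  have hχ1 : ∀ u, ‖Complex.exp (ξ u)‖ ≤ 1 := by
    intro u
    rw [hχ, norm_mul, norm_exp_neg_I, one_mul]
    exact norm_charFun_le_one u
  have hre : ∀ u, (ξ u).re ≤ 0 := by
    intro u
    have := hχ1 u
    rwa [Complex.norm_exp, Real.exp_le_one_iff] at this
  have hlow := gauss_low (d := d) (a := 4 * s) (χ := fun u => Complex.exp (ξ u)) bpos (by positivity)
    (by
      have h2 : (0 : ℝ) < 2 ^ ((d : ℝ) / 2) := by positivity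
      rw [le_div_iff₀ (by positivity)] at hs
      rw [hb, div_mul_eq_mul_div, div_le_iff₀ (by positivity)]
      nlinarith)
    (by
      simp only [hχ]
      exact (Continuous.aestronglyMeasurable (by fun_prop)).mul
        (Continuous.aestronglyMeasurable continuous_charFun))
    hχ1 (fun u => (norm_exp_sub_one_le_of_re (hre u)).trans (hξ1 u))
  have hI : Integrable (fun u : Ed d => ((Real.exp (-b * ‖u‖ ^ 2) : ℝ) : ℂ)) :=
    (gauss_integrable bpos).ofReal
  -- Parseval turns the Gaussian integral of the characteristic function into a Gaussian average
  -- of `Q` around `v`.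
  have hpar := FI_charFun hI Q v
  have hG : (0 : ℝ) < (Real.pi / b) ^ ((d : ℝ) / 2) := by positivity
  have hlhs : FI (fun u => ((Real.exp (-b * ‖u‖ ^ 2) : ℝ) : ℂ) * charFun Q u) v =
      (∫ u, Complex.exp (ξ u) * ((Real.exp (-b * ‖u‖ ^ 2) : ℝ) : ℂ)).re := by
    unfold FI
    congr 2
    ext u
    rw [hχ]; ring
  have hrhs : ∫ y, FI (fun u => ((Real.exp (-b * ‖u‖ ^ 2) : ℝ) : ℂ)) (v - y) ∂Q =
      (Real.pi / b) ^ ((d : ℝ) / 2) * ∫ y, Real.exp (-‖v - y‖ ^ 2 / (4 * b)) ∂Q := by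
    rw [← integral_const_mul]
    exact integral_congr_ae (ae_of_all _ fun y => FI_gauss bpos (v - y))
  rw [hlhs, hrhs] at hpar
  rw [hpar] at hlow
  have h12 : 1 / 2 ≤ ∫ y, Real.exp (-‖v - y‖ ^ 2 / (4 * b)) ∂Q := by
    rw [mul_comm] at hlow
    exact le_of_mul_le_mul_left hlow hG
  have hQb : 1 / 4 ≤ Q.real (Metric.ball v (ρ / 2)) := by
    have e1 : ∫ y, Real.exp (-‖v - y‖ ^ 2 / (4 * b)) ∂Q ≤
        ∫ y, (indicator (Metric.ball v (ρ / 2)) (fun _ => (1 : ℝ)) y + 1 / 4) ∂Q := by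
      refine integral_mono_of_nonneg (ae_of_all _ fun y => by positivity)
        (((integrable_const (1 : ℝ)).indicator Metric.isOpen_ball.measurableSet).add
          (integrable_const _)) (ae_of_all _ fun y => ?_)
      by_cases hy : y ∈ Metric.ball v (ρ / 2)
      · simp only [indicator_of_mem hy]
        have : Real.exp (-‖v - y‖ ^ 2 / (4 * b)) ≤ 1 := Real.exp_le_one_iff.2 (by
          rw [neg_div]; exact neg_nonpos.2 (by positivity))
        linarith
      · simp only [indicator_of_notMem hy]
        rw [Metric.mem_ball, not_lt, dist_eq_norm, norm_sub_rev] at hy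
        have h2 : -‖v - y‖ ^ 2 / (4 * b) ≤ -2 := by
          rw [div_le_iff₀ (by positivity), hb]
          nlinarith
        have h3 : Real.exp (-2) ≤ 1 / 4 := by
          have h1 : (2 : ℝ) ≤ Real.exp 1 := by
            have := Real.add_one_le_exp (1 : ℝ); linarith
          have : (4 : ℝ) ≤ Real.exp 2 := by
            rw [show (2 : ℝ) = 1 + 1 by norm_num, Real.exp_add]; nlinarith
          rw [Real.exp_neg, one_div]
          gcongr
        have := Real.exp_le_exp.2 h2
        linarith
    rw [integral_add ((integrable_const (1 : ℝ)).indicator Metric.isOpen_ball.measurableSet)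
      (integrable_const _), integral_indicator_const _ Metric.isOpen_ball.measurableSet] at e1
    simp at e1
    linarith
  have ht := cpLaw_tilt σ (fun w => 1 + g w) hg2 (fun w => f0 w) (fun w => f2 w) (-∫ w, w ∂σ)
    (Metric.ball v (ρ / 2)) Metric.isOpen_ball.measurableSet
  have hgi : ∫ w, (1 + g w - 1) ^ 2 ∂σ ≤ M ^ 2 := by
    calc ∫ w, (1 + g w - 1) ^ 2 ∂σ ≤ ∫ w, M ^ 2 * ‖w‖ ^ 2 ∂σ := by
          refine integral_mono_of_nonneg (ae_of_all _ fun w => by positivity)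
            ((trunc_int h.int n).const_mul _) (ae_of_all _ fun w => ?_)
          simp only [add_sub_cancel_left]
          rw [← mul_pow, ← sq_abs]
          gcongr
          exact hgM w
      _ = M ^ 2 * ∫ w, ‖w‖ ^ 2 ∂σ := integral_const_mul _ _
      _ ≤ M ^ 2 * 1 := by gcongr; exact iσ.trans h.le_one
      _ = M ^ 2 := mul_one _
  have hsub : (approxLaw ν n).real (Metric.ball v (ρ / 2)) ≤
      (approxLaw ν n).real (Metric.ball (∫ w, g w • w ∂ν) ρ) := by
    have : Fact (SmallLevy ν) := ⟨h⟩
    refine measureReal_mono (Metric.ball_subset_ball' ?_)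
    have := Metric.mem_ball.1 hn
    linarith
  have h16 : 1 / 16 ≤ Real.exp (M ^ 2) * (approxLaw ν n).real (Metric.ball v (ρ / 2)) := by
    calc (1 : ℝ) / 16 = (1 / 4) ^ 2 := by norm_num
      _ ≤ Q.real (Metric.ball v (ρ / 2)) ^ 2 := by gcongr
      _ ≤ _ := ht
      _ ≤ _ := by
        rw [approxLaw]
        gcongr
  rw [Real.exp_neg, ← div_eq_mul_inv, div_le_iff₀ (Real.exp_pos _)]
  nlinarith [Real.exp_pos (M ^ 2)]

/-! ### Steering by tilting the Lévy measure -/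

lemma dyadic_succ (n : ℕ) (y : ℝ) :
    ∑ k ∈ Finset.range (n + 1), (1 / 2 : ℝ) ^ k * (1 - Real.cos (2 ^ k * y)) =
      (1 - Real.cos y) + 1 / 2 * ∑ k ∈ Finset.range n, (1 / 2 : ℝ) ^ k *
        (1 - Real.cos (2 ^ k * (2 * y))) := by
  rw [Finset.sum_range_succ', Finset.mul_sum, add_comm]
  congr 1
  · simp
  · refine Finset.sum_congr rfl fun k _ => ?_
    rw [pow_succ, pow_succ]
    ring_nf

lemma dyadic_le_four (n : ℕ) : ∀ y : ℝ,
    ∑ k ∈ Finset.range n, (1 / 2 : ℝ) ^ k * (1 - Real.cos (2 ^ k * y)) ≤ 4 := by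
  induction n with
  | zero => intro y; simp
  | succ n ih =>
    intro y
    rw [dyadic_succ]
    linarith [ih (2 * y), Real.neg_one_le_cos y]

/-- The quadratic correction makes the induction close on `[0, 1]`; on `[1, 2]` the bound
`dyadic_le_four` suffices. -/
lemma dyadic_le_aux (n : ℕ) : ∀ y : ℝ, 0 ≤ y → y ≤ 2 →
    ∑ k ∈ Finset.range n, (1 / 2 : ℝ) ^ k * (1 - Real.cos (2 ^ k * y)) ≤ 9 / 2 * y - y ^ 2 / 2 := by
  induction n with
  | zero => intro y h0 h2; simp; nlinarith
  | succ n ih =>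
    intro y h0 h2
    by_cases h1 : y ≤ 1
    · rw [dyadic_succ]
      have := ih (2 * y) (by linarith) (by linarith)
      nlinarith [Real.one_sub_sq_div_two_le_cos (x := y)]
    · push Not at h1
      refine (dyadic_le_four _ y).trans ?_
      nlinarith

lemma dyadic_le_abs (n : ℕ) (y : ℝ) :
    ∑ k ∈ Finset.range n, (1 / 2 : ℝ) ^ k * (1 - Real.cos (2 ^ k * y)) ≤ 5 * |y| := by
  have e : ∑ k ∈ Finset.range n, (1 / 2 : ℝ) ^ k * (1 - Real.cos (2 ^ k * y)) =
      ∑ k ∈ Finset.range n, (1 / 2 : ℝ) ^ k * (1 - Real.cos (2 ^ k * |y|)) := by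
    refine Finset.sum_congr rfl fun k _ => ?_
    rw [← Real.cos_abs (2 ^ k * y), abs_mul, abs_of_nonneg (by positivity : (0 : ℝ) ≤ 2 ^ k)]
  rw [e]
  by_cases h : |y| ≤ 2
  · have := dyadic_le_aux n |y| (abs_nonneg _) h
    nlinarith [abs_nonneg y, sq_nonneg |y|]
  · push Not at h
    have := dyadic_le_four n |y|
    linarith

lemma dyadic_le_sq (n : ℕ) (y : ℝ) :
    ∑ k ∈ Finset.range n, (1 / 2 : ℝ) ^ k * (1 - Real.cos (2 ^ k * y)) ≤ 2 ^ n * y ^ 2 := by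
  have : ∀ n : ℕ, ∑ k ∈ Finset.range n, (1 / 2 : ℝ) ^ k * (1 - Real.cos (2 ^ k * y)) ≤
      (2 ^ n - 1) * y ^ 2 := by
    intro n
    induction n with
    | zero => simp
    | succ n ih =>
      rw [Finset.sum_range_succ]
      have h1 := Real.one_sub_sq_div_two_le_cos (x := 2 ^ n * y)
      have h2 : (1 / 2 : ℝ) ^ n * (1 - Real.cos (2 ^ n * y)) ≤
          (1 / 2 : ℝ) ^ n * ((2 ^ n * y) ^ 2 / 2) := by
        gcongr; linarith
      have h3 : (1 / 2 : ℝ) ^ n * ((2 ^ n * y) ^ 2 / 2) = 2 ^ n * y ^ 2 / 2 := by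
        have : (1 / 2 : ℝ) ^ n * 2 ^ n = 1 := by rw [← mul_pow]; norm_num
        calc _ = ((1 / 2 : ℝ) ^ n * 2 ^ n) * (2 ^ n * y ^ 2 / 2) := by ring
          _ = _ := by rw [this, one_mul]
      have h4 : (0 : ℝ) ≤ 2 ^ n * y ^ 2 := by positivity
      rw [pow_succ]
      linarith
  have h := this n
  nlinarith [sq_nonneg y]

lemma one_sub_cos_int {d : ℕ} {ν : Measure (Ed d)} (h : Integrable (fun w : Ed d => ‖w‖ ^ 2) ν)
    (u : Ed d) : Integrable (fun w : Ed d => 1 - Real.cos ⟪u, w⟫) ν := by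
  refine (h.const_mul (‖u‖ ^ 2)).mono' (Continuous.aestronglyMeasurable (by fun_prop))
    (ae_of_all _ fun w => ?_)
  rw [Real.norm_of_nonneg (by linarith [Real.cos_le_one ⟪u, w⟫])]
  have h1 := Real.one_sub_sq_div_two_le_cos (x := ⟪u, w⟫)
  have h2 : |⟪u, w⟫| ≤ ‖u‖ * ‖w‖ := abs_real_inner_le_norm u w
  have h3 : ⟪u, w⟫ ^ 2 ≤ (‖u‖ * ‖w‖) ^ 2 := by rw [← sq_abs ⟪u, w⟫]; gcongr
  rw [mul_pow] at h3
  nlinarith [sq_nonneg ⟪u, w⟫]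

/-- Summing the lower bound of the exponent over dyadic scales: linear growth of the exponent
makes each scale contribute the same amount, so the total is of order `n`. -/
lemma tilt_mass {d : ℕ} {ν : Measure (Ed d)} (h : Integrable (fun w : Ed d => ‖w‖ ^ 2) ν)
    {c : ℝ} {k0 n : ℕ} (hn : k0 ≤ n)
    (hl : ∀ u, 2 ^ k0 ≤ ‖u‖ → c * ‖u‖ ≤ ∫ w, (1 - Real.cos ⟪u, w⟫) ∂ν) (e : Ed d) (he : ‖e‖ = 1) :
    c * (n - k0) ≤ 5 * ∫ w, |⟪e, w⟫| * min 1 (2 ^ n * ‖w‖) ∂ν := by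
  have hi : ∀ k : ℕ, Integrable (fun w : Ed d => (1 / 2 : ℝ) ^ k *
      (1 - Real.cos (2 ^ k * ⟪e, w⟫))) ν := by
    intro k
    have := one_sub_cos_int h ((2 : ℝ) ^ k • e)
    simp only [real_inner_smul_left] at this
    exact this.const_mul _
  have h1 : c * (n - k0) ≤ ∑ k ∈ Finset.range n,
      ∫ w, (1 / 2 : ℝ) ^ k * (1 - Real.cos (2 ^ k * ⟪e, w⟫)) ∂ν := by
    have hpos : ∀ k : ℕ, 0 ≤ ∫ w, (1 / 2 : ℝ) ^ k * (1 - Real.cos (2 ^ k * ⟪e, w⟫)) ∂ν := fun k =>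
      integral_nonneg fun w => mul_nonneg (by positivity) (by linarith [Real.cos_le_one (2 ^ k * ⟪e, w⟫)])
    calc c * (n - k0) = ∑ k ∈ Finset.Ico k0 n, c := by
          rw [Finset.sum_const, Nat.card_Ico, nsmul_eq_mul, Nat.cast_sub hn]; ring
      _ ≤ ∑ k ∈ Finset.Ico k0 n, ∫ w, (1 / 2 : ℝ) ^ k * (1 - Real.cos (2 ^ k * ⟪e, w⟫)) ∂ν := by
          refine Finset.sum_le_sum fun k hk => ?_
          rw [Finset.mem_Ico] at hk
          have hnorm : ‖(2 : ℝ) ^ k • e‖ = 2 ^ k := by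
            rw [norm_smul, he, mul_one, Real.norm_of_nonneg (by positivity)]
          have := hl ((2 : ℝ) ^ k • e) (by
            rw [hnorm]; exact pow_le_pow_right₀ (by norm_num) hk.1)
          simp only [real_inner_smul_left, hnorm] at this
          rw [integral_const_mul]
          have h3 : (1 / 2 : ℝ) ^ k * 2 ^ k = 1 := by rw [← mul_pow]; norm_num
          calc c = (1 / 2 : ℝ) ^ k * (c * 2 ^ k) := by rw [mul_left_comm, h3, mul_one]
            _ ≤ _ := by gcongr
      _ ≤ _ := Finset.sum_le_sum_of_subset_of_nonneg
          (by intro k; simp) (fun k _ _ => hpos k)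
  refine h1.trans ?_
  rw [← integral_finsetSum _ (fun k _ => hi k), ← integral_const_mul]
  refine integral_mono (integrable_finsetSum _ fun k _ => hi k) ?_ fun w => ?_
  · refine ((h.const_mul (2 ^ n)).mono' (Continuous.aestronglyMeasurable (by fun_prop))
      (ae_of_all _ fun w => ?_)).const_mul _
    have h2 : |⟪e, w⟫| ≤ ‖e‖ * ‖w‖ := abs_real_inner_le_norm e w
    rw [he, one_mul] at h2
    rw [Real.norm_of_nonneg (by positivity)]
    calc _ ≤ ‖w‖ * (2 ^ n * ‖w‖) := by gcongr; exact min_le_right _ _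
      _ = _ := by ring
  · have h2 : |⟪e, w⟫| ≤ ‖e‖ * ‖w‖ := abs_real_inner_le_norm e w
    rw [he, one_mul] at h2
    simp only
    rcases min_cases (1 : ℝ) (2 ^ n * ‖w‖) with hm | hm
    · rw [hm.1, mul_one]; exact dyadic_le_abs n _
    · rw [hm.1]
      refine (dyadic_le_sq n _).trans ?_
      rw [← sq_abs]
      have : 2 ^ n * |⟪e, w⟫| ^ 2 ≤ |⟪e, w⟫| * (2 ^ n * ‖w‖) := by
        rw [sq, mul_left_comm]; gcongr
      have : 0 ≤ |⟪e, w⟫| * (2 ^ n * ‖w‖) := by positivity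
      linarith

/-- Every point of a given ball is, up to closure, of the form `∫ g(w) w ν(dw)` with
`|g(w)| ≤ min (1, M ‖w‖)`, by Hahn-Banach separation and the bound `tilt_mass`. The constant `M`
depends on the exponent only through its lower bound. -/
lemma exists_tilt {c K R : ℝ} (hc : 0 < c) : ∃ M : ℝ, 0 < M ∧
    ∀ (d : ℕ) (ν : Measure (Ed d)), SmallLevy ν →
      (∀ u : Ed d, K ≤ ‖u‖ → c * ‖u‖ ≤ ∫ w, (1 - Real.cos ⟪u, w⟫) ∂ν) →
      ∀ v : Ed d, ‖v‖ ≤ R → ∀ ε > 0, ∃ g : Ed d → ℝ, Measurable g ∧ (∀ w, |g w| ≤ 1) ∧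
        (∀ w, |g w| ≤ M * ‖w‖) ∧ dist v (∫ w, g w • w ∂ν) < ε := by
  obtain ⟨k0, hk0⟩ := pow_unbounded_of_one_lt K (one_lt_two (α := ℝ))
  obtain ⟨m, hm⟩ := exists_nat_gt (5 * R / c)
  refine ⟨2 ^ (k0 + m), by positivity, fun d ν h hl v hv ε hε => ?_⟩
  set M : ℝ := 2 ^ (k0 + m) with hM
  have M0 : 0 < M := by positivity
  set adm : Set (Ed d → ℝ) := {g | Measurable g ∧ (∀ w, |g w| ≤ 1) ∧ ∀ w, |g w| ≤ M * ‖w‖}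
  have hint : ∀ g ∈ adm, Integrable (fun w : Ed d => g w • w) ν := by
    rintro g ⟨hg, -, hgM⟩
    refine (h.int.const_mul M).mono' (hg.smul measurable_id).aestronglyMeasurable
      (ae_of_all _ fun w => ?_)
    rw [norm_smul, Real.norm_eq_abs]
    nlinarith [hgM w, norm_nonneg w]
  set C : Set (Ed d) := (fun g : Ed d → ℝ => ∫ w, g w • w ∂ν) '' adm with hC
  have hconv : Convex ℝ C := by
    rintro _ ⟨g, hg, rfl⟩ _ ⟨g', hg', rfl⟩ a a' ha ha' haa
    have hb : ∀ w (B : ℝ), |g w| ≤ B → |g' w| ≤ B → |a * g w + a' * g' w| ≤ B := by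
      intro w B h1 h2
      calc _ ≤ |a * g w| + |a' * g' w| := abs_add_le _ _
        _ = a * |g w| + a' * |g' w| := by rw [abs_mul, abs_mul, abs_of_nonneg ha, abs_of_nonneg ha']
        _ ≤ a * B + a' * B := by gcongr
        _ = B := by rw [← add_mul, haa, one_mul]
    refine ⟨fun w => a * g w + a' * g' w, ⟨(hg.1.const_mul a).add (hg'.1.const_mul a'),
      fun w => hb w _ (hg.2.1 w) (hg'.2.1 w), fun w => hb w _ (hg.2.2 w) (hg'.2.2 w)⟩, ?_⟩
    have h1 : Integrable (fun w : Ed d => a • g w • w) ν := (hint g hg).smul a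
    have h2 : Integrable (fun w : Ed d => a' • g' w • w) ν := (hint g' hg').smul a'
    simp only [add_smul, mul_smul]
    rw [integral_add h1 h2, integral_smul, integral_smul]
  have hmem : v ∈ closure C := by
    by_contra hnot
    obtain ⟨f, r, hf1, hf2⟩ := geometric_hahn_banach_closed_point hconv.closure isClosed_closure hnot
    set e := (InnerProductSpace.toDual ℝ (Ed d)).symm f with he
    have hfe : ∀ y, f y = ⟪e, y⟫ := fun y => by
      rw [he, InnerProductSpace.toDual_symm_apply]
    have hzero : (0 : Ed d → ℝ) ∈ adm := ⟨measurable_zero, fun w => by simp, fun w => by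
      simp only [Pi.zero_apply, abs_zero]; positivity⟩
    have hr0 : 0 < r := by
      have := hf1 0 (subset_closure ⟨0, hzero, by simp⟩)
      simpa using this
    have he0 : 0 < ‖e‖ := by
      rw [norm_pos_iff]
      rintro h0
      rw [hfe, h0, inner_zero_left] at hf2
      linarith
    have hsm : Measurable (fun w : Ed d => if 0 ≤ ⟪e, w⟫ then (1 : ℝ) else -1) :=
      Measurable.ite (measurableSet_le measurable_const (by fun_prop)) measurable_const
        measurable_const
    have habs : ∀ w : Ed d, |if 0 ≤ ⟪e, w⟫ then (1 : ℝ) else -1| ≤ 1 := by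
      intro w
      split_ifs <;> simp
    set g : Ed d → ℝ := fun w => (if 0 ≤ ⟪e, w⟫ then (1 : ℝ) else -1) * min 1 (M * ‖w‖) with hg
    have hgabs : ∀ w, |g w| ≤ min 1 (M * ‖w‖) := by
      intro w
      rw [hg, abs_mul, abs_of_nonneg (a := min 1 (M * ‖w‖)) (by positivity)]
      exact mul_le_of_le_one_left (by positivity) (habs w)
    have hga : g ∈ adm := by
      refine ⟨?_, fun w => (hgabs w).trans (min_le_left _ _),
        fun w => (hgabs w).trans (min_le_right _ _)⟩
      exact hsm.mul (by fun_prop)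
    -- `g` maximizes the separating functional over `adm`.
    have h3 := hf1 _ (subset_closure ⟨g, hga, rfl⟩)
    have h4 : f (∫ w, g w • w ∂ν) = ∫ w, |⟪e, w⟫| * min 1 (M * ‖w‖) ∂ν := by
      rw [hfe, ← integral_inner (hint g hga)]
      refine integral_congr_ae (ae_of_all _ fun w => ?_)
      simp only [hg, real_inner_smul_right]
      split_ifs with h0
      · rw [abs_of_nonneg h0]; ring
      · rw [abs_of_neg (not_le.1 h0)]; ring
    have h5 := tilt_mass h.int (Nat.le_add_right k0 m)
      (fun u hu => hl u (hk0.le.trans hu)) (‖e‖⁻¹ • e) (by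
        rw [norm_smul, norm_inv, norm_norm, inv_mul_cancel₀ he0.ne'])
    simp only [real_inner_smul_left, abs_mul, abs_inv, abs_norm, mul_assoc] at h5
    rw [integral_const_mul, ← hM] at h5
    have h6 : f v ≤ ‖e‖ * R := by
      rw [hfe]
      exact (real_inner_le_norm e v).trans (by gcongr)
    have h7 : 5 * R ≤ c * m := by
      rw [div_lt_iff₀ hc] at hm; linarith
    have h8 : R * ‖e‖ ≤ ∫ w, |⟪e, w⟫| * min 1 (M * ‖w‖) ∂ν := by
      have : 5 * R ≤ 5 * (‖e‖⁻¹ * ∫ w, |⟪e, w⟫| * min 1 (M * ‖w‖) ∂ν) := by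
        refine h7.trans (le_trans (le_of_eq ?_) h5)
        push_cast; ring
      have h9 : R ≤ ‖e‖⁻¹ * ∫ w, |⟪e, w⟫| * min 1 (M * ‖w‖) ∂ν := by linarith
      rwa [inv_mul_eq_div, le_div_iff₀ he0] at h9
    linarith
  obtain ⟨_, ⟨g, hg, rfl⟩, hd⟩ := Metric.mem_closure_iff.1 hmem ε hε
  exact ⟨g, hg.1, hg.2.1, hg.2.2, hd⟩

/-! ### The lower bound for Lévy measures carried by the unit ball -/

lemma exp_norm_integrable (d : ℕ) {a : ℝ} (ha : 0 < a) (j : ℕ) :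
    Integrable (fun u : Ed d => ‖u‖ ^ j * Real.exp (-a * ‖u‖)) := by
  have h0 : Integrable (fun u : Ed d => (1 + ‖u‖) ^ (-((d : ℝ) + 1))) :=
    integrable_one_add_norm (by simp)
  set N := d + 1 + j
  set C : ℝ := Real.exp a * (N.factorial : ℝ) / a ^ N
  refine (h0.const_mul C).mono' (Continuous.aestronglyMeasurable (by fun_prop))
    (ae_of_all _ fun u => ?_)
  rw [Real.norm_of_nonneg (by positivity)]
  have hp : 0 < 1 + ‖u‖ := by positivity
  have h1 := Real.pow_div_factorial_le_exp (x := a * (1 + ‖u‖)) (by positivity) N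
  have e1 : (1 + ‖u‖) ^ (-((d : ℝ) + 1)) = ((1 + ‖u‖) ^ (d + 1))⁻¹ := by
    rw [Real.rpow_neg hp.le, ← Real.rpow_natCast]; push_cast; rfl
  rw [e1, ← div_eq_mul_inv, le_div_iff₀ (by positivity)]
  have h2 : (1 + ‖u‖) ^ N * a ^ N ≤ Real.exp a * Real.exp (a * ‖u‖) * (N.factorial : ℝ) := by
    rw [div_le_iff₀ (by positivity), mul_pow] at h1
    rw [← Real.exp_add]
    calc _ = a ^ N * (1 + ‖u‖) ^ N := mul_comm _ _
      _ ≤ _ := h1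
      _ = _ := by ring_nf
  have h3 : ‖u‖ ^ j * (1 + ‖u‖) ^ (d + 1) ≤ (1 + ‖u‖) ^ N := by
    rw [show N = j + (d + 1) by omega, pow_add _ j]
    have : ‖u‖ ^ j ≤ (1 + ‖u‖) ^ j := pow_le_pow_left₀ (norm_nonneg _) (by linarith) j
    gcongr
  have h4 : Real.exp (a * ‖u‖) * Real.exp (-a * ‖u‖) = 1 := by rw [← Real.exp_add]; simp
  have h5 : (1 + ‖u‖) ^ N * Real.exp (-a * ‖u‖) ≤ C := by
    rw [le_div_iff₀ (by positivity)]
    calc _ = ((1 + ‖u‖) ^ N * a ^ N) * Real.exp (-a * ‖u‖) := by ring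
      _ ≤ (Real.exp a * Real.exp (a * ‖u‖) * (N.factorial : ℝ)) * Real.exp (-a * ‖u‖) := by gcongr
      _ = Real.exp a * (N.factorial : ℝ) * (Real.exp (a * ‖u‖) * Real.exp (-a * ‖u‖)) := by ring
      _ = _ := by rw [h4, mul_one]
  calc _ = (‖u‖ ^ j * (1 + ‖u‖) ^ (d + 1)) * Real.exp (-a * ‖u‖) := by ring
    _ ≤ (1 + ‖u‖) ^ N * Real.exp (-a * ‖u‖) := by gcongr
    _ ≤ C := h5

lemma eta_smul {d : ℕ} (ν : Measure (Ed d)) {s : ℝ} (hs : 0 ≤ s) (u : Ed d) :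
    eta (ENNReal.ofReal s • ν) u = s * eta ν u := by
  rw [eta, eta, integral_smul_measure, ENNReal.toReal_ofReal hs, Complex.real_smul]

lemma SmallLevy.smul {d : ℕ} {ν : Measure (Ed d)} (h : SmallLevy ν) {s : ℝ} (hs : 0 ≤ s)
    (hs1 : s ≤ 1) : SmallLevy (ENNReal.ofReal s • ν) := by
  refine ⟨Measure.ae_smul_measure h.supp _, h.int.smul_measure ENNReal.ofReal_ne_top, ?_⟩
  rw [integral_smul_measure, ENNReal.toReal_ofReal hs, smul_eq_mul]
  have : 0 ≤ ∫ w, ‖w‖ ^ 2 ∂ν := integral_nonneg fun w => by positivity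
  nlinarith [h.le_one]

/-- The envelope dominating `exp (t * eta ν)` for all `t ∈ [1/2, 1]`. -/
def env (d : ℕ) (c K : ℝ) (u : Ed d) : ℝ := Real.exp (c * K / 2) * Real.exp (-(c / 2) * ‖u‖)

lemma env_int (d : ℕ) {c K : ℝ} (hc : 0 < c) : Integrable (env d c K) := by
  have := (exp_norm_integrable d (half_pos hc) 0).const_mul (Real.exp (c * K / 2))
  simp only [pow_zero, one_mul] at this
  exact this

lemma env_int' (d : ℕ) {c K : ℝ} (hc : 0 < c) : Integrable (fun u => ‖u‖ * env d c K u) := by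
  have := (exp_norm_integrable d (half_pos hc) 1).const_mul (Real.exp (c * K / 2))
  refine this.congr (ae_of_all _ fun u => ?_)
  simp only [env, pow_one]; ring

lemma norm_exp_le_env {d : ℕ} {c K t r : ℝ} (hc : 0 < c) (hK : 0 ≤ K) (ht : 1 / 2 ≤ t)
    (u : Ed d) (hr : r ≤ 0) (hl : K ≤ ‖u‖ → c * ‖u‖ ≤ -r) : Real.exp (t * r) ≤ env d c K u := by
  rw [env, ← Real.exp_add]
  refine Real.exp_le_exp.2 ?_
  by_cases h : K ≤ ‖u‖
  · have := hl h
    have : 0 ≤ c * K := by positivity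
    nlinarith
  · push Not at h
    nlinarith

/-- Uniform lower bound at time one. The exponent is split as `(1 - s) η + s η`. The density of
the first part is bounded below on some ball `B(y₀, 2ρ)`, with `ρ` independent of `s`; the second
part, with `s` small against `ρ²`, is steered to `x - y₀` with error less than `2ρ`. -/
theorem small_low (d : ℕ) {c K θ : ℝ} (hc : 0 < c) (hK : 0 ≤ K) : ∃ ctil : ℝ, 0 < ctil ∧
    ∀ ν : Measure (Ed d), SmallLevy ν →
      (∀ u : Ed d, K ≤ ‖u‖ → c * ‖u‖ ≤ ∫ w, (1 - Real.cos ⟪u, w⟫) ∂ν) →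
      Integrable (fun u => Complex.exp (eta ν u)) ∧
      ∀ x : Ed d, ‖x‖ ≤ θ → ctil ≤ FI (fun u => Complex.exp (eta ν u)) x := by
  set C0 := ∫ u, env d c K u
  set C1 := (∫ u, ‖u‖ * env d c K u) + 1
  have hC1 : 0 < C1 := by
    have : 0 ≤ ∫ u, ‖u‖ * env d c K u := integral_nonneg fun u => by
      unfold env; positivity
    positivity
  set D : ℝ := 2 ^ ((d : ℝ) / 2)
  have hD : 0 < D := by positivity
  set b : ℝ := 8 * D with hb
  have bpos : 0 < b := by positivity
  set κ : ℝ := 1 / (4 * b) with hκ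
  have κpos : 0 < κ := by positivity
  set G : ℝ := (Real.pi / κ) ^ ((d : ℝ) / 2) * (1 / 2 * (Real.pi / b) ^ ((d : ℝ) / 2)) with hG
  set H : ℝ := (Real.pi / (κ / 2)) ^ ((d : ℝ) / 2) with hH
  have Gpos : 0 < G := by positivity
  have Hpos : 0 < H := by positivity
  set a' : ℝ := G / (2 * H) with ha'
  have apos : 0 < a' := by positivity
  set ρ : ℝ := a' / (4 * C1) with hρ
  have ρpos : 0 < ρ := by positivity
  set R0 : ℝ := 2 * C0 / (κ * a') + 1
  set s : ℝ := min (1 / 2) (ρ ^ 2 / (512 * D)) with hs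
  have spos : 0 < s := by positivity
  have s2 : s ≤ 1 / 2 := min_le_left _ _
  obtain ⟨M, -, hM⟩ := exists_tilt (c := s * c) (K := K) (R := θ + R0) (by positivity)
  refine ⟨a' / 2 * (1 / 16 * Real.exp (-M ^ 2)), by positivity, fun ν h hl => ?_⟩
  have hle : ∀ t : ℝ, 1 / 2 ≤ t → ∀ u : Ed d, ‖Complex.exp (t * eta ν u)‖ ≤ env d c K u := by
    intro t ht u
    rw [Complex.norm_exp, Complex.re_ofReal_mul]
    refine norm_exp_le_env hc hK ht u (eta_re_nonpos h.int u) fun hu => ?_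
    rw [eta_re h.int, neg_neg]; exact hl u hu
  have hmeas : ∀ t : ℝ, AEStronglyMeasurable (fun u => Complex.exp (t * eta ν u)) :=
    fun t => (Complex.continuous_exp.comp (continuous_const.mul
      (eta_continuous h.int))).aestronglyMeasurable
  have hint : ∀ t : ℝ, 1 / 2 ≤ t → Integrable (fun u => Complex.exp (t * eta ν u)) := fun t ht =>
    (env_int d hc).mono' (hmeas t) (ae_of_all _ (hle t ht))
  refine ⟨by simpa using hint 1 (by norm_num), fun x hx => ?_⟩
  -- `Φ = exp (eta ν1)` has the Fourier integral bounded below near `y0`; `ν2` is used for steering.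
  set ν1 := ENNReal.ofReal (1 - s) • ν
  set ν2 := ENNReal.ofReal s • ν
  have h1 : SmallLevy ν1 := h.smul (by linarith) (by linarith)
  have h2 : SmallLevy ν2 := h.smul spos.le (by linarith)
  have e1 : ∀ u, eta ν1 u = ((1 - s : ℝ) : ℂ) * eta ν u := fun u => eta_smul ν (by linarith) u
  have e2 : ∀ u, eta ν2 u = (s : ℂ) * eta ν u := fun u => eta_smul ν spos.le u
  set Φ : Ed d → ℂ := fun u => Complex.exp (eta ν1 u) with hΦ
  have hΦle : ∀ u, ‖Φ u‖ ≤ env d c K u := fun u => by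
    simp only [hΦ, e1]; exact hle _ (by linarith) u
  have hΦi : Integrable Φ := by
    simp only [hΦ, e1]; exact hint _ (by linarith)
  have hΦi1 : Integrable (fun u => ‖u‖ * ‖Φ u‖) :=
    (env_int' d hc).mono' (continuous_norm.aestronglyMeasurable.mul hΦi.1.norm)
      (ae_of_all _ fun u => by
        rw [Real.norm_of_nonneg (by positivity)]; gcongr; exact hΦle u)
  have J0 : ∀ y, 0 ≤ FI Φ y := FI_nonneg h1 hΦi
  have JC : ∀ y, FI Φ y ≤ C0 := fun y => (le_abs_self _).trans ((FI_bound y).trans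
    (integral_mono hΦi.norm (env_int d hc) hΦle))
  have JL : ∀ y z, |FI Φ y - FI Φ z| ≤ C1 * ‖y - z‖ := fun y z =>
    (FI_lip hΦi hΦi1 y z).trans (by
      gcongr
      refine (integral_mono hΦi1 (env_int' d (K := K) hc) fun u => ?_).trans (by simp [C1])
      simp only
      gcongr; exact hΦle u)
  -- If `FI Φ` were below `a' * exp (κ / 2 * ‖y‖ ^ 2)` everywhere, its Gaussian average would be
  -- too small. The weight leaves room to confine `y` to a ball of radius `R0` afterwards.
  obtain ⟨y, hy⟩ : ∃ y : Ed d, a' ≤ FI Φ (-y) * Real.exp (-(κ / 2) * ‖y‖ ^ 2) := by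
    by_contra! hcon
    have hpar := FI_gauss_parseval hΦi κpos
    have hκb : 1 / (4 * κ) = b := by rw [hκ]; field_simp
    rw [hκb] at hpar
    have hlow := gauss_low (a := 2) (χ := Φ) bpos (by norm_num)
      (by rw [hb]; apply le_of_eq; change 2 * 2 / (8 * D) * D = 1 / 2; field_simp; norm_num) hΦi.1 (norm_exp_eta h1.int)
      (fun u => (norm_exp_sub_one_le_of_re (eta_re_nonpos h1.int u)).trans
        ((eta_norm h1.int u).trans (by
          have := h1.le_one
          nlinarith [sq_nonneg ‖u‖])))
    have hge : G ≤ ∫ y, Real.exp (-κ * ‖y‖ ^ 2) * FI Φ (-y) := by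
      rw [hpar, hG]; gcongr
    have hup : ∫ y, Real.exp (-κ * ‖y‖ ^ 2) * FI Φ (-y) ≤ a' * H := by
      rw [hH, ← gauss_integral (half_pos κpos), ← integral_const_mul]
      refine integral_mono_of_nonneg (ae_of_all _ fun y => mul_nonneg (Real.exp_pos _).le (J0 _))
        ((gauss_integrable (half_pos κpos)).const_mul _) (ae_of_all _ fun y => ?_)
      have e : Real.exp (-κ * ‖y‖ ^ 2) =
          Real.exp (-(κ / 2) * ‖y‖ ^ 2) * Real.exp (-(κ / 2) * ‖y‖ ^ 2) := by
        rw [← Real.exp_add]; ring_nf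
      simp only
      rw [e, mul_assoc, mul_comm a']
      refine mul_le_mul_of_nonneg_left ?_ (Real.exp_pos _).le
      rw [mul_comm]; exact (hcon y).le
    have : a' * H = G / 2 := by rw [ha']; field_simp
    linarith
  set y0 := -y with hy0
  have hy0n : ‖y0‖ = ‖y‖ := norm_neg y
  have hJ0 : a' ≤ FI Φ y0 := hy.trans (mul_le_of_le_one_right (J0 _) (Real.exp_le_one_iff.2 (by
    have : 0 ≤ κ / 2 * ‖y‖ ^ 2 := by positivity
    linarith)))
  have hR0 : ‖y0‖ ≤ R0 := by
    have g1 : a' * Real.exp (κ / 2 * ‖y‖ ^ 2) ≤ C0 := by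
      refine le_trans ?_ (JC y0)
      calc a' * Real.exp (κ / 2 * ‖y‖ ^ 2) ≤ (FI Φ y0 * Real.exp (-(κ / 2) * ‖y‖ ^ 2)) *
            Real.exp (κ / 2 * ‖y‖ ^ 2) := by gcongr
        _ = FI Φ y0 := by rw [mul_assoc, ← Real.exp_add]; simp
    have g2 : κ / 2 * ‖y‖ ^ 2 ≤ Real.exp (κ / 2 * ‖y‖ ^ 2) := by
      linarith [Real.add_one_le_exp (κ / 2 * ‖y‖ ^ 2)]
    have g3 : ‖y‖ ^ 2 ≤ 2 * C0 / (κ * a') := by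
      rw [le_div_iff₀ (by positivity)]
      nlinarith
    rw [hy0n]
    change ‖y‖ ≤ 2 * C0 / (κ * a') + 1
    nlinarith [sq_nonneg (‖y‖ - 1)]
  obtain ⟨g, hgm, hg1, hgM, hgd⟩ := hM d ν2 h2 (fun u hu => by
    rw [integral_smul_measure, ENNReal.toReal_ofReal spos.le, smul_eq_mul, mul_assoc]
    exact mul_le_mul_of_nonneg_left (hl u hu) spos.le) (x - y0)
    ((norm_sub_le _ _).trans (add_le_add hx hR0)) ρ ρpos
  have hball := approx_ball h2 ρpos (by
    rw [integral_smul_measure, ENNReal.toReal_ofReal spos.le, smul_eq_mul]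
    exact (mul_le_of_le_one_right spos.le h.le_one).trans (min_le_right _ _)) hgm hg1 hgM
  have hlim := FI_approx h2 hΦi x
  have efin : (fun u => Φ u * Complex.exp (eta ν2 u)) = fun u => Complex.exp (eta ν u) := by
    ext u
    simp only [hΦ]
    rw [← Complex.exp_add, e1, e2]; congr 1; push_cast; ring
  rw [efin] at hlim
  refine ge_of_tendsto hlim ?_
  have : Fact (SmallLevy ν2) := ⟨h2⟩
  filter_upwards [hball] with n hn
  set p := ∫ w, g w • w ∂ν2
  have hJcont : Continuous (fun z => FI Φ (x - z)) := by
    have : Continuous (FI Φ) := (LipschitzWith.of_dist_le_mul (K := ⟨C1, hC1.le⟩) fun y z => by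
      rw [Real.dist_eq, dist_eq_norm]; exact JL y z).continuous
    exact this.comp (by fun_prop)
  calc a' / 2 * (1 / 16 * Real.exp (-M ^ 2))
      ≤ a' / 2 * (approxLaw ν2 n).real (Metric.ball p ρ) := by gcongr
    _ = ∫ z, indicator (Metric.ball p ρ) (fun _ => a' / 2) z ∂(approxLaw ν2 n) := by
        rw [integral_indicator_const _ Metric.isOpen_ball.measurableSet, smul_eq_mul, mul_comm]
    _ ≤ ∫ z, FI Φ (x - z) ∂(approxLaw ν2 n) := by
        refine integral_mono ((integrable_const _).indicator Metric.isOpen_ball.measurableSet)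
          (Integrable.of_bound (C := C0) hJcont.aestronglyMeasurable (ae_of_all _ fun z => by
            rw [Real.norm_of_nonneg (J0 _)]; exact JC _)) fun z => ?_
        -- on this ball `x - z` is within `2 * ρ` of `y0`
        by_cases hz : z ∈ Metric.ball p ρ
        · simp only [indicator_of_mem hz]
          have d1 : ‖(x - z) - y0‖ < 2 * ρ := by
            have h3 : (x - z) - y0 = ((x - y0) - p) - (z - p) := by abel
            rw [h3]
            rw [Metric.mem_ball, dist_eq_norm] at hz
            rw [dist_eq_norm] at hgd
            exact (norm_sub_le _ _).trans_lt (by linarith)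
          have d2 := (abs_le.1 (JL (x - z) y0)).1
          have d3 : C1 * (2 * ρ) = a' / 2 := by rw [hρ]; field_simp; norm_num
          nlinarith
        · simp only [indicator_of_notMem hz]; exact J0 _

/-! ### Adding the large jumps -/

lemma cpLaw_zero_ge {d : ℕ} (μ : Measure (Ed d)) [IsFiniteMeasure μ] :
    Real.exp (-μ.real univ) ≤ (cpLaw μ 0).real {0} := by
  have h1 : 1 ≤ expM μ {0} := by
    have := dirac_le_expM μ {0}
    simpa using this
  have h2 : (fun x : Ed d => x + 0) = id := by ext1 x; simp
  have h3 : ENNReal.ofReal (Real.exp (-μ.real univ)) ≤ cpLaw μ 0 {0} := by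
    rw [cpLaw, h2, Measure.map_id, Measure.smul_apply, smul_eq_mul]
    exact le_mul_of_one_le_right' h1
  have := cpLaw_prob μ 0
  exact (ENNReal.ofReal_le_iff_le_toReal (measure_ne_top _ _)).1 h3

/-- The lower bound for a Lévy measure with `∫ min 1 ‖w‖² ≤ 1`. Its jumps outside the unit ball form
an independent compound Poisson variable of intensity at most one, which vanishes with probability
at least `exp (-1)`. -/
theorem norm_low (d : ℕ) {c K θ : ℝ} (hc : 0 < c) : ∃ ctil : ℝ, 0 < ctil ∧
    ∀ ν : Measure (Ed d), Integrable (fun w : Ed d => min 1 (‖w‖ ^ 2)) ν →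
      ∫ w, min 1 (‖w‖ ^ 2) ∂ν ≤ 1 →
      (∀ u : Ed d, K ≤ ‖u‖ → c * ‖u‖ ≤ ∫ w, (1 - Real.cos ⟪u, w⟫) ∂ν) →
      ∀ x : Ed d, ‖x‖ ≤ θ → ctil ≤ FI (fun u => Complex.exp (∫ w,
        (Complex.exp (Complex.I * ((⟪u, w⟫ : ℝ) : ℂ)) - 1 - Complex.I * ((⟪u, w⟫ : ℝ) : ℂ)
        * Set.indicator {w : Ed d | ‖w‖ < 1} (fun _ => (1 : ℂ)) w) ∂ν)) x := by
  obtain ⟨c1, hc1, hlow⟩ := small_low d (c := c / 2) (K := max K (4 / c)) (θ := θ) (by positivity)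
    (by positivity)
  refine ⟨c1 * Real.exp (-1), by positivity, fun ν hi h1 hl x hx => ?_⟩
  set B : Set (Ed d) := {w | ‖w‖ < 1} with hB
  have hBm : MeasurableSet B := measurableSet_lt measurable_norm measurable_const
  -- `νS` carries the small jumps and `νL` the large ones.
  set νS := ν.restrict B with hνS
  set νL := ν.restrict Bᶜ with hνL
  have hBc : ∀ w ∈ Bᶜ, 1 ≤ ‖w‖ := fun w hw => by simpa [hB] using hw
  have m0 : ∀ w : Ed d, 0 ≤ min 1 (‖w‖ ^ 2) := fun w => by positivity
  have hfinL : νL univ ≤ 1 := by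
    have e : νL univ = ∫⁻ w in Bᶜ, 1 ∂ν := by simp [hνL]
    rw [e]
    calc ∫⁻ w in Bᶜ, 1 ∂ν ≤ ∫⁻ w in Bᶜ, ENNReal.ofReal (min 1 (‖w‖ ^ 2)) ∂ν := by
          refine setLIntegral_mono (by fun_prop) fun w hw => ?_
          rw [min_eq_left (by nlinarith [hBc w hw]), ENNReal.ofReal_one]
      _ ≤ ∫⁻ w, ENNReal.ofReal (min 1 (‖w‖ ^ 2)) ∂ν := setLIntegral_le_lintegral _ _
      _ = ENNReal.ofReal (∫ w, min 1 (‖w‖ ^ 2) ∂ν) :=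
          (ofReal_integral_eq_lintegral_ofReal hi (ae_of_all _ m0)).symm
      _ ≤ 1 := by rw [← ENNReal.ofReal_one]; exact ENNReal.ofReal_le_ofReal h1
  have : IsFiniteMeasure νL := ⟨hfinL.trans_lt ENNReal.one_lt_top⟩
  have hrL : νL.real univ ≤ 1 := by
    rw [Measure.real]
    exact ENNReal.toReal_le_of_le_ofReal zero_le_one (by rwa [ENNReal.ofReal_one])
  have hsupp : ∀ᵐ w ∂νS, ‖w‖ < 1 := (ae_restrict_mem hBm).mono fun w hw => hw
  have hmin : ∀ᵐ w ∂νS, min 1 (‖w‖ ^ 2) = ‖w‖ ^ 2 := hsupp.mono fun w hw =>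
    min_eq_right (by nlinarith [norm_nonneg w])
  have hS : SmallLevy νS := by
    refine ⟨hsupp, hi.restrict.congr hmin, ?_⟩
    rw [← integral_congr_ae hmin]
    exact (setIntegral_le_integral hi (ae_of_all _ m0)).trans h1
  have icosL : ∀ u : Ed d, Integrable (fun w : Ed d => 1 - Real.cos ⟪u, w⟫) νL := fun u =>
    Integrable.of_bound (C := 2) (Continuous.aestronglyMeasurable (by fun_prop))
      (ae_of_all _ fun w => by
        rw [Real.norm_of_nonneg (by linarith [Real.cos_le_one ⟪u, w⟫])]
        linarith [Real.neg_one_le_cos ⟪u, w⟫])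
  have hadd : νS + νL = ν := Measure.restrict_add_restrict_compl hBm
  have hlS : ∀ u : Ed d, max K (4 / c) ≤ ‖u‖ →
      c / 2 * ‖u‖ ≤ ∫ w, (1 - Real.cos ⟪u, w⟫) ∂νS := by
    intro u hu
    have h3 := hl u ((le_max_left _ _).trans hu)
    rw [← hadd, integral_add_measure (one_sub_cos_int hS.int u) (icosL u)] at h3
    have h4 : ∫ w, (1 - Real.cos ⟪u, w⟫) ∂νL ≤ 2 := by
      calc _ ≤ ∫ w, (2 : ℝ) ∂νL := integral_mono (icosL u) (integrable_const _)
            fun w => by simp only; linarith [Real.neg_one_le_cos ⟪u, w⟫]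
        _ ≤ 2 := by rw [integral_const, smul_eq_mul]; linarith
    have h5 := (le_max_right K (4 / c)).trans hu
    rw [div_le_iff₀ hc] at h5
    linarith
  obtain ⟨hΦi, hΦ⟩ := hlow νS hS hlS
  set Φ : Ed d → ℂ := fun u => Complex.exp (eta νS u) with hΦd
  have iexpL : ∀ u : Ed d, Integrable
      (fun w : Ed d => Complex.exp (Complex.I * ((⟪u, w⟫ : ℝ) : ℂ)) - 1) νL := fun u =>
    Integrable.of_bound (C := 2) (Continuous.aestronglyMeasurable (by fun_prop))
      (ae_of_all _ fun w => (norm_sub_le _ _).trans (by rw [norm_exp_I]; norm_num))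
  have hexp : ∀ u : Ed d, Complex.exp (∫ w,
        (Complex.exp (Complex.I * ((⟪u, w⟫ : ℝ) : ℂ)) - 1 - Complex.I * ((⟪u, w⟫ : ℝ) : ℂ)
        * Set.indicator B (fun _ => (1 : ℂ)) w) ∂ν) = Φ u * charFun (cpLaw νL 0) u := by
    intro u
    have eS : (fun w : Ed d => Complex.exp (Complex.I * ((⟪u, w⟫ : ℝ) : ℂ)) - 1
        - Complex.I * ((⟪u, w⟫ : ℝ) : ℂ)) =ᵐ[νS] (fun w => 
        Complex.exp (Complex.I * ((⟪u, w⟫ : ℝ) : ℂ)) - 1 - Complex.I * ((⟪u, w⟫ : ℝ) : ℂ)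
        * Set.indicator B (fun _ => (1 : ℂ)) w) := by
      filter_upwards [hsupp] with w hw
      rw [indicator_of_mem (show w ∈ B from hw), mul_one]
    have eL : (fun w : Ed d => Complex.exp (Complex.I * ((⟪u, w⟫ : ℝ) : ℂ)) - 1) =ᵐ[νL] (fun w => 
        Complex.exp (Complex.I * ((⟪u, w⟫ : ℝ) : ℂ)) - 1 - Complex.I * ((⟪u, w⟫ : ℝ) : ℂ)
        * Set.indicator B (fun _ => (1 : ℂ)) w) := by
      filter_upwards [ae_restrict_mem hBm.compl] with w hw
      rw [indicator_of_notMem hw, mul_zero, sub_zero]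
    rw [hΦd, charFun_cpLaw, ← Complex.exp_add]
    congr 1
    conv_lhs => rw [← hadd]
    rw [integral_add_measure ((eta_int hS.int u).congr eS) ((iexpL u).congr eL),
      ← integral_congr_ae eS, ← integral_congr_ae eL, inner_zero_right]
    simp [eta]
  rw [FI_congr hexp, FI_charFun hΦi]
  have J0 : ∀ y, 0 ≤ FI Φ y := FI_nonneg hS hΦi
  have := cpLaw_prob νL 0
  have hm : Measurable (fun y => FI Φ (x - y)) := by
    have : Continuous (FI Φ) := by
      unfold FI
      refine Complex.continuous_re.comp (continuous_of_dominated (bound := fun u => ‖Φ u‖)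
        (fun z => (integrable_exp_mul hΦi z).1) (fun z => ae_of_all _ fun u => ?_) hΦi.norm
        (ae_of_all _ fun u => by fun_prop))
      rw [norm_mul, norm_exp_neg_I, one_mul]
    exact (this.comp (by fun_prop : Continuous fun y => x - y)).measurable
  calc c1 * Real.exp (-1) ≤ FI Φ x * (cpLaw νL 0).real {0} := by
        refine mul_le_mul (hΦ x hx) (le_trans ?_ (cpLaw_zero_ge νL)) (Real.exp_pos _).le (J0 x)
        exact Real.exp_le_exp.2 (by linarith)
    _ = ∫ y, indicator {0} (fun _ => FI Φ x) y ∂(cpLaw νL 0) := by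
        rw [integral_indicator_const _ (measurableSet_singleton _), smul_eq_mul, mul_comm]
    _ ≤ ∫ y, FI Φ (x - y) ∂(cpLaw νL 0) := by
        refine integral_mono ((integrable_const _).indicator (measurableSet_singleton _))
          (Integrable.of_bound (C := ∫ u, ‖Φ u‖) hm.aestronglyMeasurable
            (ae_of_all _ fun y => FI_bound _)) fun y => ?_
        by_cases hy : y = 0
        · simp [hy]
        · simp only [indicator_of_notMem (show y ∉ ({0} : Set (Ed d)) from hy)]; exact J0 _

/-! ### The concentration function and the exponent -/

lemma min_sq_le_integral (a : ℝ) :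
    min 1 (a ^ 2) / 10 ≤ ∫ τ in (0 : ℝ)..1, (1 - Real.cos (τ * a)) := by
  by_cases ha : a = 0
  · simp [ha]
  have e : ∫ τ in (0 : ℝ)..1, (1 - Real.cos (τ * a)) = 1 - Real.sin a / a := by
    rw [intervalIntegral.integral_sub (by simp)
      (Continuous.intervalIntegrable (by fun_prop) _ _),
      intervalIntegral.integral_comp_mul_right (fun x => Real.cos x) ha]
    simp; field_simp
  have e2 : Real.sin a / a = Real.sin |a| / |a| := by
    rcases abs_cases a with h | h
    · rw [h.1]
    · rw [h.1, Real.sin_neg, neg_div_neg_eq]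
  rw [e, e2, ← sq_abs]
  have hx : 0 < |a| := abs_pos.2 ha
  set x := |a|
  by_cases h2 : x ≤ 2
  · -- `sin x = 2 sin (x / 2) cos (x / 2) ≤ x cos (x / 2)`
    have h3 := Real.cos_bound (x := x / 2) (by rw [abs_of_pos (by positivity)]; linarith)
    have h3' := (abs_le.1 h3).2
    rw [abs_of_pos (by positivity)] at h3'
    have hc0 : 0 ≤ Real.cos (x / 2) := Real.cos_nonneg_of_mem_Icc
      ⟨by linarith [Real.pi_gt_three], by linarith [Real.pi_gt_three]⟩
    have h4 : Real.sin x ≤ x * Real.cos (x / 2) := by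
      have h5 : Real.sin x = 2 * Real.sin (x / 2) * Real.cos (x / 2) := by
        rw [← Real.sin_two_mul]; congr 1; ring
      rw [h5]
      have := Real.sin_le (x := x / 2) (by positivity)
      nlinarith
    have h6 : Real.sin x / x ≤ Real.cos (x / 2) := by rw [div_le_iff₀ hx]; linarith
    have h7 : (x / 2) ^ 4 ≤ (x / 2) ^ 2 := by
      have : (x / 2) ^ 2 ≤ 1 := by nlinarith
      nlinarith [sq_nonneg (x / 2)]
    have := min_le_right 1 (x ^ 2)
    nlinarith
  · push Not at h2
    have h6 : Real.sin x / x ≤ 1 / 2 := by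
      rw [div_le_iff₀ hx]; linarith [Real.sin_le_one x]
    have := min_le_left 1 (x ^ 2)
    linarith

lemma min_norm_sq_le {d : ℕ} (w : Ed d) : min 1 (‖w‖ ^ 2) ≤ ∑ i, min 1 (w i ^ 2) := by
  by_cases h : ∃ i, 1 ≤ w i ^ 2
  · obtain ⟨i, hi⟩ := h
    calc min 1 (‖w‖ ^ 2) ≤ 1 := min_le_left _ _
      _ = min 1 (w i ^ 2) := (min_eq_left hi).symm
      _ ≤ _ := Finset.single_le_sum (f := fun i => min 1 (w i ^ 2)) (fun j _ => by positivity)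
          (Finset.mem_univ i)
  · push Not at h
    refine (min_le_right _ _).trans (le_of_eq ?_)
    rw [EuclideanSpace.real_norm_sq_eq]
    exact Finset.sum_congr rfl fun i _ => (min_eq_right (h i).le).symm

lemma cos_le_min {d : ℕ} (u w : Ed d) :
    1 - Real.cos ⟪u, w⟫ ≤ (2 + ‖u‖ ^ 2) * min 1 (‖w‖ ^ 2) := by
  have h1 := Real.one_sub_sq_div_two_le_cos (x := ⟪u, w⟫)
  have h2 : |⟪u, w⟫| ≤ ‖u‖ * ‖w‖ := abs_real_inner_le_norm u w
  have h3 : ⟪u, w⟫ ^ 2 ≤ (‖u‖ * ‖w‖) ^ 2 := by rw [← sq_abs ⟪u, w⟫]; gcongr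
  rw [mul_pow] at h3
  have h4 := Real.neg_one_le_cos ⟪u, w⟫
  have h5 : 0 ≤ ‖u‖ ^ 2 * ‖w‖ ^ 2 := by positivity
  rcases min_cases 1 (‖w‖ ^ 2) with h | h <;> rw [h.1] <;> nlinarith [sq_nonneg ‖u‖, sq_nonneg ‖w‖]

lemma cos_int {d : ℕ} {ν : Measure (Ed d)} (h : Integrable (fun w : Ed d => min 1 (‖w‖ ^ 2)) ν)
    (u : Ed d) : Integrable (fun w : Ed d => 1 - Real.cos ⟪u, w⟫) ν := by
  refine (h.const_mul (2 + ‖u‖ ^ 2)).mono' (Continuous.aestronglyMeasurable (by fun_prop))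
    (ae_of_all _ fun w => ?_)
  rw [Real.norm_of_nonneg (by linarith [Real.cos_le_one ⟪u, w⟫])]
  exact cos_le_min u w

/-- The exponent controls the concentration function, by averaging over segments in the coordinate
directions. Fubini's theorem is applied to the finite measures `trunc ν n`. -/
lemma conc_le {d : ℕ} {ν : Measure (Ed d)} (h : Integrable (fun w : Ed d => min 1 (‖w‖ ^ 2)) ν)
    {S : ℝ} (hS : ∀ u : Ed d, ‖u‖ ≤ 1 → ∫ w, (1 - Real.cos ⟪u, w⟫) ∂ν ≤ S) :
    ∫ w, min 1 (‖w‖ ^ 2) ∂ν ≤ 10 * d * S := by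
  refine le_of_tendsto (trunc_tendsto h (by simp)) (Eventually.of_forall fun n => ?_)
  have hfin : IsFiniteMeasure (trunc ν n) := by
    constructor
    rw [trunc, Measure.restrict_apply_univ]
    have hp : (0 : ℝ) < min 1 ((1 / ((n : ℝ) + 1)) ^ 2) := by positivity
    refine lt_of_le_of_lt (measure_mono ?_) (h.measure_ge_lt_top hp)
    intro w hw
    simp only [mem_ofPred_eq] at hw ⊢
    gcongr
  set μ := trunc ν n with hμ
  have hi : ∀ i : Fin d, ∫ w, min 1 (w i ^ 2) ∂μ ≤ 10 * S := by
    intro i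
    set e : Ed d := EuclideanSpace.single i 1 with he
    have hin : ∀ (τ : ℝ) (w : Ed d), ⟪τ • e, w⟫ = τ * w i := by
      intro τ w
      rw [real_inner_smul_left, he, EuclideanSpace.inner_single_left]; simp
    have hb : ∀ p : Ed d × ℝ, ‖1 - Real.cos (p.2 * p.1 i)‖ ≤ 2 := by
      intro p
      rw [Real.norm_of_nonneg (by linarith [Real.cos_le_one (p.2 * p.1 i)])]
      linarith [Real.neg_one_le_cos (p.2 * p.1 i)]
    have hI : Integrable (fun p : Ed d × ℝ => 1 - Real.cos (p.2 * p.1 i))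
        (μ.prod (volume.restrict (Ioc (0 : ℝ) 1))) :=
      Integrable.of_bound (C := 2) (Continuous.aestronglyMeasurable (by fun_prop)) (ae_of_all _ hb)
    have hle : ∫ w, min 1 (w i ^ 2) / 10 ∂μ ≤ S := by
      calc ∫ w, min 1 (w i ^ 2) / 10 ∂μ
          ≤ ∫ w, (∫ τ in Ioc (0 : ℝ) 1, (1 - Real.cos (τ * w i))) ∂μ := by
            refine integral_mono_of_nonneg (ae_of_all _ fun w => by
              simp only [Pi.zero_apply]; positivity) hI.integral_prod_left
              (ae_of_all _ fun w => ?_)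
            have := min_sq_le_integral (w i)
            rwa [intervalIntegral.integral_of_le zero_le_one] at this
        _ = ∫ τ in Ioc (0 : ℝ) 1, (∫ w, (1 - Real.cos (τ * w i)) ∂μ) :=
            integral_integral_swap (f := fun (w : Ed d) (τ : ℝ) => 1 - Real.cos (τ * w i)) hI
        _ ≤ ∫ τ in Ioc (0 : ℝ) 1, S := by
            refine setIntegral_mono_on hI.integral_prod_right (integrable_const _)
              measurableSet_Ioc fun τ hτ => ?_
            have h1 := hS (τ • e) (by
              rw [norm_smul, he, PiLp.norm_single, Real.norm_of_nonneg hτ.1.le]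
              simpa using hτ.2)
            refine le_trans ?_ h1
            simp only [← hin]
            exact setIntegral_le_integral (cos_int h (τ • e)) (ae_of_all _ fun w => by
              simp only [Pi.zero_apply]; linarith [Real.cos_le_one ⟪τ • e, w⟫])
        _ = S := by simp
    rw [integral_div] at hle
    linarith
  have hii : ∀ i : Fin d, Integrable (fun w : Ed d => min 1 (w i ^ 2)) μ := fun i =>
    Integrable.of_bound (C := 1) (Continuous.aestronglyMeasurable (by fun_prop))
      (ae_of_all _ fun w => by
        rw [Real.norm_of_nonneg (by positivity)]; exact min_le_left _ _)
  calc ∫ w, min 1 (‖w‖ ^ 2) ∂μ ≤ ∫ w, ∑ i, min 1 (w i ^ 2) ∂μ :=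
        integral_mono (trunc_int h n) (integrable_finsetSum _ fun i _ => hii i)
          fun w => min_norm_sq_le w
    _ = ∑ i, ∫ w, min 1 (w i ^ 2) ∂μ := integral_finsetSum _ fun i _ => hii i
    _ ≤ ∑ _i : Fin d, 10 * S := Finset.sum_le_sum fun i _ => hi i
    _ = 10 * d * S := by simp; ring

/-! ### The scaled Lévy measure -/

/-- The Lévy measure at time `t` in space units `r`: the image of `t • ν` under `w ↦ w / r`. -/
def scaled {d : ℕ} (ν : Measure (Ed d)) (t r : ℝ) : Measure (Ed d) :=
  ENNReal.ofReal t • ν.map (fun w => r⁻¹ • w)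

lemma integral_scaled {d : ℕ} {E : Type*} [NormedAddCommGroup E] [NormedSpace ℝ E]
    (ν : Measure (Ed d)) {t : ℝ} (ht : 0 ≤ t) {r : ℝ} (hr : r ≠ 0) (f : Ed d → E) :
    ∫ w, f w ∂(scaled ν t r) = t • ∫ w, f (r⁻¹ • w) ∂ν := by
  rw [scaled, integral_smul_measure, ENNReal.toReal_ofReal ht]
  congr 1
  exact (Homeomorph.smulOfNeZero r⁻¹ (inv_ne_zero hr)).measurableEmbedding.integral_map f

lemma min_scaled_le {d : ℕ} {r : ℝ} (hr : 0 < r) (w : Ed d) :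
    min 1 (‖w‖ ^ 2 / r ^ 2) ≤ (1 + 1 / r ^ 2) * min 1 (‖w‖ ^ 2) := by
  have h1 : 0 < 1 / r ^ 2 := by positivity
  have h2 : ‖w‖ ^ 2 / r ^ 2 = 1 / r ^ 2 * ‖w‖ ^ 2 := by ring
  have h3 := min_le_left 1 (‖w‖ ^ 2 / r ^ 2)
  have h4 := min_le_right 1 (‖w‖ ^ 2 / r ^ 2)
  rcases min_cases 1 (‖w‖ ^ 2) with h | h <;> rw [h.1] <;> nlinarith [sq_nonneg ‖w‖]

lemma min_div_int {d : ℕ} {ν : Measure (Ed d)}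
    (h : Integrable (fun w : Ed d => min 1 (‖w‖ ^ 2)) ν) {r : ℝ} (hr : 0 < r) :
    Integrable (fun w : Ed d => min 1 (‖w‖ ^ 2 / r ^ 2)) ν := by
  refine (h.const_mul (1 + 1 / r ^ 2)).mono' (Continuous.aestronglyMeasurable (by fun_prop))
    (ae_of_all _ fun w => ?_)
  rw [Real.norm_of_nonneg (by positivity)]
  exact min_scaled_le hr w

lemma norm_inv_smul_sq {d : ℕ} (r : ℝ) (w : Ed d) : ‖r⁻¹ • w‖ ^ 2 = ‖w‖ ^ 2 / r ^ 2 := by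
  rw [norm_smul, mul_pow, norm_inv, Real.norm_eq_abs, inv_pow, sq_abs]; ring

lemma scaled_int {d : ℕ} {ν : Measure (Ed d)}
    (h : Integrable (fun w : Ed d => min 1 (‖w‖ ^ 2)) ν) (t : ℝ) {r : ℝ} (hr : 0 < r) :
    Integrable (fun w : Ed d => min 1 (‖w‖ ^ 2)) (scaled ν t r) := by
  refine Integrable.smul_measure ?_ ENNReal.ofReal_ne_top
  rw [(Homeomorph.smulOfNeZero r⁻¹ (inv_ne_zero hr.ne')).measurableEmbedding.integrable_map_iff
    (f := fun w : Ed d => r⁻¹ • w)]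
  refine (min_div_int h hr).congr (ae_of_all _ fun w => ?_)
  simp only [Function.comp, norm_inv_smul_sq]

lemma scaled_mass {d : ℕ} (ν : Measure (Ed d)) {t : ℝ} (ht : 0 ≤ t) {r : ℝ} (hr : 0 < r) :
    ∫ w, min 1 (‖w‖ ^ 2) ∂(scaled ν t r) = t * concFn d 0 ν r := by
  rw [integral_scaled ν ht hr.ne', concFn]
  simp only [norm_inv_smul_sq, norm_zero, zero_div, zero_add, smul_eq_mul]

lemma scaled_cos {d : ℕ} (ν : Measure (Ed d)) {t : ℝ} (ht : 0 ≤ t) {r : ℝ} (hr : 0 < r) (u : Ed d) :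
    ∫ w, (1 - Real.cos ⟪u, w⟫) ∂(scaled ν t r) = t * rePsi d 0 ν (r⁻¹ • u) := by
  rw [integral_scaled ν ht hr.ne', rePsi]
  simp [real_inner_smul_left, real_inner_smul_right]

lemma psiStar_bdd {d : ℕ} {ν : Measure (Ed d)}
    (h : Integrable (fun w : Ed d => min 1 (‖w‖ ^ 2)) ν) (r : ℝ) :
    BddAbove (rePsi d 0 ν '' Metric.closedBall 0 r) := by
  refine ⟨(2 + r ^ 2) * ∫ w, min 1 (‖w‖ ^ 2) ∂ν, ?_⟩
  rintro _ ⟨x, hx, rfl⟩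
  rw [mem_closedBall_zero_iff] at hx
  have : rePsi d 0 ν x = ∫ w, (1 - Real.cos ⟪x, w⟫) ∂ν := by simp [rePsi]
  rw [this, ← integral_const_mul]
  refine integral_mono (cos_int h x) (h.const_mul _) fun w => (cos_le_min x w).trans ?_
  gcongr

lemma rePsi_le_psiStar {d : ℕ} {ν : Measure (Ed d)}
    (h : Integrable (fun w : Ed d => min 1 (‖w‖ ^ 2)) ν) {r : ℝ} {x : Ed d} (hx : ‖x‖ ≤ r) :
    rePsi d 0 ν x ≤ psiStar d 0 ν r :=
  le_csSup (psiStar_bdd h r) ⟨x, by simpa using hx, rfl⟩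

lemma psiStar_mono {d : ℕ} {ν : Measure (Ed d)}
    (h : Integrable (fun w : Ed d => min 1 (‖w‖ ^ 2)) ν) {r r' : ℝ} (hr : 0 ≤ r) (hrr : r ≤ r') :
    psiStar d 0 ν r ≤ psiStar d 0 ν r' :=
  csSup_le_csSup (psiStar_bdd h r') ⟨_, 0, by simpa using hr, rfl⟩
    (image_mono (Metric.closedBall_subset_closedBall hrr))

/-- Condition (C3) with exponent at least one makes the scaled exponent grow linearly, uniformly
in `t`. -/
lemma scaled_growth {d : ℕ} (hd : 1 ≤ d) {ν : Measure (Ed d)}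
    (h : Integrable (fun w : Ed d => min 1 (‖w‖ ^ 2)) ν) {T3 : ℝ≥0∞} {c3 α3 : ℝ} (hc3 : 0 < c3)
    (hα : 1 ≤ α3) (hC3 : CondC3 d 0 ν T3 c3 α3) {t r K : ℝ} (ht : 0 < t) (hr : 0 < r) (hK : 1 ≤ K)
    (hconc : t * concFn d 0 ν r = 1) (hT : 1 / T3 < ENNReal.ofReal (K / r)) (u : Ed d)
    (hu : K ≤ ‖u‖) :
    c3 ^ 2 / (10 * d * K) * ‖u‖ ≤ ∫ w, (1 - Real.cos ⟪u, w⟫) ∂(scaled ν t r) := by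
  have hd0 : (0 : ℝ) < d := by exact_mod_cast hd
  have K0 : 0 < K := by linarith
  rw [scaled_cos ν ht.le hr]
  have h1 : 1 ≤ 10 * d * (t * psiStar d 0 ν (1 / r)) := by
    refine (((scaled_mass ν ht.le hr).trans hconc).symm.le).trans
      (conc_le (scaled_int h t hr) fun u hu => ?_)
    rw [scaled_cos ν ht.le hr]
    refine mul_le_mul_of_nonneg_left (rePsi_le_psiStar h ?_) ht.le
    rw [norm_smul, norm_inv, Real.norm_of_nonneg hr.le, one_div]
    exact mul_le_of_le_one_right (by positivity) hu
  -- (C3) is applied from `K / r`, which lies in its range, to `‖u‖ / r`.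
  have hnorm : ‖r⁻¹ • u‖ = ‖u‖ / r := by
    rw [norm_smul, norm_inv, Real.norm_of_nonneg hr.le]; ring
  have h2 := hC3.1 (r⁻¹ • u) (hT.trans_le (ENNReal.ofReal_le_ofReal (by rw [hnorm]; gcongr)))
  have hlam : 1 ≤ ‖u‖ / K := by rwa [le_div_iff₀ K0, one_mul]
  have h3 := hC3.2 (‖u‖ / K) (K / r) hlam (by positivity) hT
  have e : ‖u‖ / K * (K / r) = ‖u‖ / r := by field_simp
  rw [e] at h3
  rw [hnorm] at h2
  have h4 : psiStar d 0 ν (1 / r) ≤ psiStar d 0 ν (K / r) :=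
    psiStar_mono h (by positivity) (by gcongr)
  have h5 : ‖u‖ / K ≤ (‖u‖ / K) ^ α3 := by
    conv_lhs => rw [← Real.rpow_one (‖u‖ / K)]
    exact Real.rpow_le_rpow_of_exponent_le hlam hα
  have hp : 0 ≤ psiStar d 0 ν (1 / r) := by
    by_contra hneg
    push Not at hneg
    have : t * psiStar d 0 ν (1 / r) < 0 := mul_neg_of_pos_of_neg ht hneg
    nlinarith
  calc c3 ^ 2 / (10 * d * K) * ‖u‖ = c3 ^ 2 / (10 * d * K) * ‖u‖ * 1 := (mul_one _).symm
    _ ≤ c3 ^ 2 / (10 * d * K) * ‖u‖ * (10 * d * (t * psiStar d 0 ν (1 / r))) := by gcongr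
    _ = t * (c3 * (c3 * (‖u‖ / K) * psiStar d 0 ν (1 / r))) := by field_simp
    _ ≤ t * (c3 * (c3 * (‖u‖ / K) ^ α3 * psiStar d 0 ν (K / r))) := by gcongr
    _ ≤ t * (c3 * psiStar d 0 ν (‖u‖ / r)) := by gcongr
    _ ≤ t * rePsi d 0 ν (r⁻¹ • u) := by gcongr

/-! ### The density in scaled variables and the choice of constants -/

lemma indicator_sub_int {d : ℕ} {ν : Measure (Ed d)}
    (h : Integrable (fun w : Ed d => min 1 (‖w‖ ^ 2)) ν) {r : ℝ} (hr : 0 < r) :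
    Integrable (fun z : Ed d => Set.indicator {w : Ed d | ‖w‖ < r} (fun w => w) z
      - Set.indicator {w : Ed d | ‖w‖ < 1} (fun w => w) z) ν := by
  have hm : 0 < min r 1 := lt_min hr one_pos
  have hm1 : min r 1 ≤ 1 := min_le_right _ _
  have hmeas : ∀ s : ℝ, MeasurableSet {w : Ed d | ‖w‖ < s} := fun s =>
    measurableSet_lt measurable_norm measurable_const
  refine (h.const_mul (max r 1 / (min r 1) ^ 2)).mono'
    ((measurable_id.indicator (hmeas r)).sub
      (measurable_id.indicator (hmeas 1))).aestronglyMeasurable (ae_of_all _ fun w => ?_)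
  have hR : 0 < max r 1 := lt_max_of_lt_left hr
  have hnn : 0 ≤ max r 1 / (min r 1) ^ 2 * min 1 (‖w‖ ^ 2) := by positivity
  have key : min r 1 ≤ ‖w‖ → ‖w‖ ≤ max r 1 →
      ‖w‖ ≤ max r 1 / (min r 1) ^ 2 * min 1 (‖w‖ ^ 2) := by
    intro h1 h2
    have h3 : (min r 1) ^ 2 ≤ min 1 (‖w‖ ^ 2) :=
      le_min (pow_le_one₀ hm.le hm1) (by gcongr)
    calc ‖w‖ ≤ max r 1 := h2
      _ = max r 1 / (min r 1) ^ 2 * (min r 1) ^ 2 := by field_simp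
      _ ≤ _ := by gcongr
  by_cases h1 : ‖w‖ < r <;> by_cases h2 : ‖w‖ < 1
  · simpa [indicator, h1, h2] using hnn
  · simpa [indicator, h1, h2] using key ((min_le_right _ _).trans (not_lt.1 h2))
      (h1.le.trans (le_max_left _ _))
  · simpa [indicator, h1, h2] using key ((min_le_left _ _).trans (not_lt.1 h1))
      (h2.le.trans (le_max_right _ _))
  · simpa [indicator, h1, h2] using hnn

lemma exponent_int {d : ℕ} {ν : Measure (Ed d)}
    (h : Integrable (fun w : Ed d => min 1 (‖w‖ ^ 2)) ν) (u : Ed d) :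
    Integrable (fun w : Ed d => Complex.exp (Complex.I * ((⟪u, w⟫ : ℝ) : ℂ)) - 1 -
      Complex.I * ((⟪u, w⟫ : ℝ) : ℂ)
        * Set.indicator {w : Ed d | ‖w‖ < 1} (fun _ => (1 : ℂ)) w) ν := by
  have hmeas : MeasurableSet {w : Ed d | ‖w‖ < 1} :=
    measurableSet_lt measurable_norm measurable_const
  have hmi : Measurable (Set.indicator {w : Ed d | ‖w‖ < 1} (fun _ => (1 : ℂ))) :=
    measurable_const.indicator hmeas
  refine (h.const_mul (2 + 2 * ‖u‖ ^ 2)).mono' (Measurable.aestronglyMeasurable (by fun_prop))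
    (ae_of_all _ fun w => ?_)
  by_cases hw : ‖w‖ < 1
  · have e : min 1 (‖w‖ ^ 2) = ‖w‖ ^ 2 :=
      min_eq_right (pow_le_one₀ (norm_nonneg w) hw.le)
    have := norm_exp_inner_sub u w
    rw [e]
    simp only [indicator, mem_ofPred_eq, hw, if_true, mul_one]
    nlinarith [sq_nonneg ‖w‖]
  · have e : min 1 (‖w‖ ^ 2) = 1 := min_eq_left (one_le_pow₀ (not_lt.1 hw))
    rw [e]
    simp only [indicator, mem_ofPred_eq, hw, if_false, mul_zero, sub_zero]
    have : ‖Complex.exp (Complex.I * ((⟪u, w⟫ : ℝ) : ℂ)) - 1‖ ≤ 1 + 1 := by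
      refine (norm_sub_le _ _).trans ?_
      rw [mul_comm, Complex.norm_exp_ofReal_mul_I]; simp
    nlinarith [sq_nonneg ‖u‖]

/-- The exponent of the rescaled jump measure absorbs the change of compensator from `‖w‖ < 1` to
`‖w‖ < r`, which is exactly the shift from `b` to `bshift d ν b r`. -/
lemma exponent_scaled {d : ℕ} {ν : Measure (Ed d)}
    (h : Integrable (fun w : Ed d => min 1 (‖w‖ ^ 2)) ν) (b x z : Ed d) {t r : ℝ} (ht : 0 ≤ t)
    (hr : 0 < r) :
    -(Complex.I * ((⟪x + t • bshift d ν b r, z⟫ : ℝ) : ℂ)) - (t : ℂ) * psiFn d 0 ν b z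
      = -(Complex.I * ((⟪x, z⟫ : ℝ) : ℂ)) +
        ∫ w, (Complex.exp (Complex.I * ((⟪r • z, w⟫ : ℝ) : ℂ)) - 1 -
          Complex.I * ((⟪r • z, w⟫ : ℝ) : ℂ)
          * Set.indicator {w : Ed d | ‖w‖ < 1} (fun _ => (1 : ℂ)) w) ∂(scaled ν t r) := by
  have hi := indicator_sub_int h hr
  have hii : Integrable (fun w : Ed d => Complex.I *
      ((⟪z, Set.indicator {w : Ed d | ‖w‖ < r} (fun w => w) w
      - Set.indicator {w : Ed d | ‖w‖ < 1} (fun w => w) w⟫ : ℝ) : ℂ)) ν :=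
    ((hi.const_inner z).ofReal (𝕜 := ℂ)).const_mul _
  have hw : ∀ w : Ed d, ‖r⁻¹ • w‖ < 1 ↔ ‖w‖ < r := by
    intro w
    rw [norm_smul, norm_inv, Real.norm_of_nonneg hr.le, inv_mul_lt_iff₀ hr, mul_one]
  have hin : ∀ w : Ed d, ⟪r • z, r⁻¹ • w⟫ = ⟪z, w⟫ := by
    intro w
    rw [real_inner_smul_left, real_inner_smul_right, ← mul_assoc, mul_inv_cancel₀ hr.ne', one_mul]
  have e1 : ∀ w : Ed d, Complex.exp (Complex.I * ((⟪r • z, r⁻¹ • w⟫ : ℝ) : ℂ)) - 1 -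
          Complex.I * ((⟪r • z, r⁻¹ • w⟫ : ℝ) : ℂ)
          * Set.indicator {w : Ed d | ‖w‖ < 1} (fun _ => (1 : ℂ)) (r⁻¹ • w)
      = (Complex.exp (Complex.I * ((⟪z, w⟫ : ℝ) : ℂ)) - 1 - Complex.I * ((⟪z, w⟫ : ℝ) : ℂ)
        * Set.indicator {w : Ed d | ‖w‖ < 1} (fun _ => (1 : ℂ)) w) - Complex.I *
      ((⟪z, Set.indicator {w : Ed d | ‖w‖ < r} (fun w => w) w
      - Set.indicator {w : Ed d | ‖w‖ < 1} (fun w => w) w⟫ : ℝ) : ℂ) := by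
    intro w
    rw [hin]
    by_cases h1 : ‖w‖ < r <;> by_cases h2 : ‖w‖ < 1 <;>
      simp [indicator, hw, h1, h2]
  rw [integral_scaled ν ht hr.ne']
  simp only [e1]
  rw [integral_sub (exponent_int h z) hii, integral_I_inner hi, psiFn, bshift]
  simp only [zero_apply, inner_zero_right, inner_add_left,
    real_inner_smul_left, Complex.real_smul]
  rw [real_inner_comm z b, real_inner_comm z (∫ w, _ ∂ν)]
  push_cast
  ring

/-- The density at the shifted point, in scaled variables. -/
lemma pdens_scaled {d : ℕ} {ν : Measure (Ed d)}
    (h : Integrable (fun w : Ed d => min 1 (‖w‖ ^ 2)) ν) (b x : Ed d) {t r : ℝ} (ht : 0 ≤ t)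
    (hr : 0 < r) :
    pdens d 0 ν b t (x + t • bshift d ν b r) = ((2 * Real.pi) ^ d)⁻¹ * (r ^ (-(d : ℤ)) *
      FI (fun u => Complex.exp (∫ w, (Complex.exp (Complex.I * ((⟪u, w⟫ : ℝ) : ℂ)) - 1 -
          Complex.I * ((⟪u, w⟫ : ℝ) : ℂ)
          * Set.indicator {w : Ed d | ‖w‖ < 1} (fun _ => (1 : ℂ)) w) ∂(scaled ν t r)))
        (r⁻¹ • x)) := by
  rw [pdens, FI]
  congr 1
  simp only [exponent_scaled h b x _ ht hr]
  set Φ : Ed d → ℂ := fun u => ∫ w, (Complex.exp (Complex.I * ((⟪u, w⟫ : ℝ) : ℂ)) - 1 -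
          Complex.I * ((⟪u, w⟫ : ℝ) : ℂ)
          * Set.indicator {w : Ed d | ‖w‖ < 1} (fun _ => (1 : ℂ)) w) ∂(scaled ν t r) with hΦ
  have e := Measure.integral_comp_smul (volume : Measure (Ed d)) (fun u : Ed d =>
    Complex.exp (-(Complex.I * ((⟪r⁻¹ • x, u⟫ : ℝ) : ℂ))) * Complex.exp (Φ u)) r
  have hin : ∀ u : Ed d, ⟪r⁻¹ • x, r • u⟫ = ⟪x, u⟫ := by
    intro w
    rw [real_inner_smul_left, real_inner_smul_right, ← mul_assoc, inv_mul_cancel₀ hr.ne', one_mul]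
  simp only [hin, ← Complex.exp_add, finrank_euclideanSpace, Fintype.card_fin] at e
  simp only [← Complex.exp_add]
  rw [show (∫ z, Complex.exp (-(Complex.I * ((⟪x, z⟫ : ℝ) : ℂ)) + Φ (r • z))) = _ from e,
    Complex.smul_re, smul_eq_mul, abs_of_nonneg (by positivity), zpow_neg, zpow_natCast]

/-- The lower bound at a fixed time, uniform over all times for which the scale `K / r` lies in the
range where (C3) applies. -/
lemma pdens_low {d : ℕ} (hd : 1 ≤ d) {ν : Measure (Ed d)}
    (h : Integrable (fun w : Ed d => min 1 (‖w‖ ^ 2)) ν) (b : Ed d) {T3 : ℝ≥0∞} {c3 α3 : ℝ}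
    (hc3 : 0 < c3) (hα : 1 ≤ α3) (hC3 : CondC3 d 0 ν T3 c3 α3) {K : ℝ} (hK : 1 ≤ K) (θ : ℝ) :
    ∃ ctil : ℝ, 0 < ctil ∧ ∀ t r : ℝ, 0 < t → 0 < r → concFn d 0 ν r = 1 / t →
      1 / T3 < ENNReal.ofReal (K / r) → ∀ x : Ed d, ‖x‖ ≤ θ * r →
        ctil * r ^ (-(d : ℤ)) ≤ pdens d 0 ν b t (x + t • bshift d ν b r) := by
  have hd0 : (0 : ℝ) < d := by exact_mod_cast hd
  have K0 : 0 < K := by linarith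
  obtain ⟨c, hc, H⟩ := norm_low d (c := c3 ^ 2 / (10 * d * K)) (K := K) (θ := θ) (by positivity)
  refine ⟨((2 * Real.pi) ^ d)⁻¹ * c, by positivity, fun t r ht hr hconc hT x hx => ?_⟩
  have hconc' : t * concFn d 0 ν r = 1 := by rw [hconc]; field_simp
  rw [pdens_scaled h b x ht.le hr]
  have := H (scaled ν t r) (scaled_int h t hr) (by rw [scaled_mass ν ht.le hr, hconc'])
    (scaled_growth hd h hc3 hα hC3 ht hr hK hconc' hT) (r⁻¹ • x) (by
      rw [norm_smul, norm_inv, Real.norm_of_nonneg hr.le, inv_mul_le_iff₀ hr, mul_comm]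
      exact hx)
  rw [mul_assoc, mul_comm c]
  gcongr

lemma concFn_anti {d : ℕ} {ν : Measure (Ed d)}
    (h : Integrable (fun w : Ed d => min 1 (‖w‖ ^ 2)) ν) {r R : ℝ} (hr : 0 < r) (hR : r ≤ R) :
    concFn d 0 ν R ≤ concFn d 0 ν r := by
  simp only [concFn, norm_zero, zero_div, zero_add]
  refine integral_mono (min_div_int h (hr.trans_le hR)) (min_div_int h hr) fun w => ?_
  dsimp only
  gcongr

theorem stmt_18 (d : ℕ) (hd : 1 ≤ d) (A : Ed d →L[ℝ] Ed d) (ν : Measure (Ed d))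
    (b : Ed d) (hpair : IsLevyPair d A ν)
    (hinv : ℝ → ℝ) (hinv_spec : IsInvOn (concFn d A ν) hinv)
    (T3 : ℝ≥0∞) (c3 α3 : ℝ) (hT3 : 0 < T3) (hc3 : 0 < c3 ∧ c3 ≤ 1)
    (hα3 : 1 ≤ α3 ∧ α3 ≤ 2) (hC3 : CondC3 d A ν T3 c3 α3) (hA : A = 0) :
    (∀ T θ : ℝ, 0 < T → 0 < θ → ∃ ctil : ℝ, 0 < ctil ∧
      ∀ t : ℝ, 0 < t → t < T → ∀ x : Ed d, ‖x‖ ≤ θ * hinv (1 / t) →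
        ctil * hinv (1 / t) ^ (-(d : ℤ)) ≤
          pdens d A ν b t (x + t • bshift d ν b (hinv (1 / t)))) ∧
    (T3 = ⊤ → ∀ θ : ℝ, 0 < θ → ∃ ctil : ℝ, 0 < ctil ∧
      ∀ t : ℝ, 0 < t → ∀ x : Ed d, ‖x‖ ≤ θ * hinv (1 / t) →
        ctil * hinv (1 / t) ^ (-(d : ℤ)) ≤
          pdens d A ν b t (x + t • bshift d ν b (hinv (1 / t)))) := by
  subst hA
  have h := hpair.nu_int
  constructor
  · intro T θ hT _
    -- `K / r` exceeds `1 / T3` for every `r ≤ hinv (1 / T)`.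
    have hR := hinv_spec.pos (1 / T) (by positivity)
    have hτ : ENNReal.ofReal (1 / T3).toReal = 1 / T3 :=
      ENNReal.ofReal_toReal (by simp [hT3.ne'])
    have hτ0 : 0 ≤ (1 / T3).toReal := ENNReal.toReal_nonneg
    set τ := (1 / T3).toReal
    set R := hinv (1 / T)
    obtain ⟨c, hc, H⟩ := pdens_low hd h b hc3.1 hα3.1 hC3 (K := 1 + R * τ)
      (le_add_of_nonneg_right (by positivity)) θ
    refine ⟨c, hc, fun t ht htT x hx => ?_⟩
    have hr := hinv_spec.pos (1 / t) (by positivity)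
    have hrc := hinv_spec.right_inv (1 / t) (by positivity)
    refine H t _ ht hr hrc ?_ x hx
    have hle : hinv (1 / t) ≤ R := by
      by_contra hlt
      push Not at hlt
      have := concFn_anti h hR hlt.le
      rw [hrc, hinv_spec.right_inv (1 / T) (by positivity)] at this
      exact absurd this (not_le.2 (one_div_lt_one_div_of_lt ht htT))
    rw [← hτ, ENNReal.ofReal_lt_ofReal_iff (by positivity), lt_div_iff₀ hr]
    nlinarith
  · rintro rfl θ _
    obtain ⟨c, hc, H⟩ := pdens_low hd h b hc3.1 hα3.1 hC3 (K := 1) le_rfl θ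
    refine ⟨c, hc, fun t ht x hx => ?_⟩
    have hr := hinv_spec.pos (1 / t) (by positivity)
    refine H t _ ht hr (hinv_spec.right_inv (1 / t) (by positivity)) ?_ x hx
    simpa using hr

end
end
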